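/- Let ψ be the (σ,λ)-GFF on V_N with Gibbs measure 𝒢_{β,N}. For every β > 0 and ρ ∈ (0,λ_1), the Gibbs mass of the boundary region vanishes: 𝒢_{β,N}(A_{N,ρ}^c) → 0 as N → ∞, where the limit holds in probability and in L^p for every 1 ≤ p < ∞, and A_{N,ρ}^c = V_N ∖ A_{N,ρ}. -/

import Mathlib

open Filter
open scoped Classical

noncomputable section GFFCommon

/-- Vertices of `ℤ²`. -/
abbrev Vtx : Type := ℤ × ℤ

/-- Sample space: a real-valued field indexed by the vertices of `ℤ²`. -/
abbrev FieldSp : Type := Vtx → ℝ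

/-- The box `V_N = {0,1,…,N}²`. -/
def VN (N : ℕ) : Finset Vtx := Finset.Icc (0, 0) ((N : ℤ), (N : ℤ))

/-- The boundary `∂B` of a finite box `B ⊆ ℤ²`:
vertices of `B` having a (Euclidean distance 1) neighbour outside `B`. -/
def bdry (B : Finset Vtx) : Finset Vtx :=
  B.filter fun v =>
    ¬((v.1 + 1, v.2) ∈ B ∧ (v.1 - 1, v.2) ∈ B ∧ (v.1, v.2 + 1) ∈ B ∧ (v.1, v.2 - 1) ∈ B)

/-- The interior `B° = B ∖ ∂B`. -/
def intr (B : Finset Vtx) : Finset Vtx := B \ bdry B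

/-- The neighbourhood `[v]_λ` of `v` in `V_N`. -/
def nbhd (N : ℕ) (lam : ℝ) (v : Vtx) : Finset Vtx :=
  if lam = 0 then VN N
  else if lam = 1 then {v}
  else (VN N).filter fun w =>
    |(w.1 : ℝ) - (v.1 : ℝ)| ≤ (N : ℝ) ^ ((1 : ℝ) - lam) / 2 ∧
    |(w.2 : ℝ) - (v.2 : ℝ)| ≤ (N : ℝ) ^ ((1 : ℝ) - lam) / 2

/-- The σ-algebra `F_{∂[v]_λ ∪ [v]_λ^c}`, generated by the field variables on the
boundary of `[v]_λ` and those outside of it. -/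
def scaleAlg (N : ℕ) (lam : ℝ) (v : Vtx) : MeasurableSpace FieldSp :=
  ⨆ w ∈ {w : Vtx | w ∈ VN N ∧ w ∉ intr (nbhd N lam v)},
    MeasurableSpace.comap (fun ω : FieldSp => ω w) inferInstance

/-- `G` is the Green function of simple random walk killed on `∂B`, normalized by `π/2`:
it vanishes unless both arguments are in `B°`, and in `B°` it satisfies the
first-step (discrete Poisson equation) characterization
`G(x,y) = (1/4)·Σ_{x'∼x} G(x',y) + (π/2)·1_{x=y}`. -/
def IsGreenFn (B : Finset Vtx) (G : Vtx → Vtx → ℝ) : Prop :=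
  (∀ x y : Vtx, x ∉ intr B ∨ y ∉ intr B → G x y = 0) ∧
  ∀ y ∈ intr B, ∀ x ∈ intr B,
    G x y = (G (x.1 + 1, x.2) y + G (x.1 - 1, x.2) y
        + G (x.1, x.2 + 1) y + G (x.1, x.2 - 1) y) / 4
      + (Real.pi / 2) * (if x = y then 1 else 0)

/-- `P` is the law (on the canonical space `FieldSp`) of the Gaussian free field on `V_N`:
a centered Gaussian field with covariance the Green function `G_{V_N}`. -/
def IsGFF (N : ℕ) (P : MeasureTheory.Measure FieldSp) : Prop :=
  MeasureTheory.IsProbabilityMeasure P ∧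
  ∃ G : Vtx → Vtx → ℝ, IsGreenFn (VN N) G ∧
    ∀ c : Vtx → ℝ,
      P.map (fun ω => ∑ v ∈ VN N, c v * ω v) =
        ProbabilityTheory.gaussianReal 0 (Real.toNNReal (∑ v ∈ VN N, ∑ w ∈ VN N, c v * c w * G v w))

open MeasureTheory in
/-- `φ_v(λ) = E[φ_v | F_{∂[v]_λ ∪ [v]_λ^c}]`. -/
def phiScale (N : ℕ) (P : MeasureTheory.Measure FieldSp) (v : Vtx) (lam : ℝ) : FieldSp → ℝ :=
  P[fun ω : FieldSp => ω v | scaleAlg N lam v]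

/-- Admissible parameters `(σ,λ)`: `σ_1,…,σ_M > 0` and `0 = λ_0 < λ_1 < … < λ_M = 1`. -/
def ScaleParams (M : ℕ) (sigv lamv : ℕ → ℝ) : Prop :=
  1 ≤ M ∧ (∀ i ∈ Finset.Icc 1 M, 0 < sigv i) ∧
  lamv 0 = 0 ∧ lamv M = 1 ∧ ∀ i, i < M → lamv i < lamv (i + 1)

/-- The `(σ,λ)`-GFF: `ψ_v = Σ_{i=1}^M σ_i (φ_v(λ_i) − φ_v(λ_{i−1}))`. -/
def psiFld (N M : ℕ) (sigv lamv : ℕ → ℝ) (P : MeasureTheory.Measure FieldSp) (v : Vtx) : FieldSp → ℝ :=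
  fun ω => ∑ i ∈ Finset.Icc 1 M, sigv i * (phiScale N P v (lamv i) ω - phiScale N P v (lamv (i - 1)) ω)

open MeasureTheory in
/-- `ψ_v(λ) = E[ψ_v | F_{∂[v]_λ ∪ [v]_λ^c}]`. -/
def psiScale (N M : ℕ) (sigv lamv : ℕ → ℝ) (P : MeasureTheory.Measure FieldSp) (v : Vtx) (lam : ℝ) :
    FieldSp → ℝ :=
  P[psiFld N M sigv lamv P v | scaleAlg N lam v]

/-- The increment `ψ_v(λ,λ') = ψ_v(λ') − ψ_v(λ)`. -/
def psiInc (N M : ℕ) (sigv lamv : ℕ → ℝ) (P : MeasureTheory.Measure FieldSp) (v : Vtx) (lam lam' : ℝ) :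
    FieldSp → ℝ :=
  fun ω => psiScale N M sigv lamv P v lam' ω - psiScale N M sigv lamv P v lam ω

/-- The step function `σ(s) = σ_1 1_{{0}}(s) + Σ_{i=1}^M σ_i 1_{(λ_{i−1},λ_i]}(s)`. -/
def stepFn (M : ℕ) (sigv lamv : ℕ → ℝ) (s : ℝ) : ℝ :=
  (if s = 0 then sigv 1 else 0) +
  ∑ i ∈ Finset.Icc 1 M, if lamv (i - 1) < s ∧ s ≤ lamv i then sigv i else 0

/-- `𝒥_f(s) = ∫_0^s f(r) dr`. -/
def Jint (f : ℝ → ℝ) (s : ℝ) : ℝ := ∫ r in (0:ℝ)..s, f r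

/-- `𝒥_f(s₁,s₂) = ∫_{s₁}^{s₂} f(r) dr`. -/
def Jint2 (f : ℝ → ℝ) (s₁ s₂ : ℝ) : ℝ := ∫ r in s₁..s₂, f r

/-- The speed function `𝒥_{σ²}`. -/
def Jsig2 (M : ℕ) (sigv lamv : ℕ → ℝ) (s : ℝ) : ℝ := Jint (fun r => (stepFn M sigv lamv r) ^ 2) s

/-- The normalized speed function `𝒥̄_{σ²} = 𝒥_{σ²}/𝒥_{σ²}(1)`. -/
def JsigBar (M : ℕ) (sigv lamv : ℕ → ℝ) (s : ℝ) : ℝ := Jsig2 M sigv lamv s / Jsig2 M sigv lamv 1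

/-- The concave hull on `[0,1]` of a function `f`, i.e. the pointwise infimum over all
concave functions dominating `f` on `[0,1]`. -/
def concaveHull (f : ℝ → ℝ) (s : ℝ) : ℝ :=
  sInf {y | ∃ g : ℝ → ℝ, ConcaveOn ℝ (Set.Icc (0:ℝ) 1) g ∧
    (∀ t ∈ Set.Icc (0:ℝ) 1, f t ≤ g t) ∧ y = g s}

/-- The effective parameters: jump scales `0 = λ⁰ < … < λ^m = 1`, values
`σ̄_1 > … > σ̄_m > 0`, and the left-continuous non-increasing step function `σ̄`
such that `∫_0^s σ̄²` is the concavification of `𝒥_{σ²}`. -/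
def EffParams (M : ℕ) (sigv lamv : ℕ → ℝ) (m : ℕ) (sigb lamb : ℕ → ℝ) (sigbar : ℝ → ℝ) : Prop :=
  1 ≤ m ∧ m ≤ M ∧ lamb 0 = 0 ∧ lamb m = 1 ∧ (∀ j, j < m → lamb j < lamb (j + 1)) ∧
  (∀ l, 1 ≤ l → l < m → sigb (l + 1) < sigb l) ∧ (∀ l ∈ Finset.Icc 1 m, 0 < sigb l) ∧
  sigbar 0 = sigb 1 ∧
  (∀ l ∈ Finset.Icc 1 m, ∀ s : ℝ, lamb (l - 1) < s → s ≤ lamb l → sigbar s = sigb l) ∧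
  (∀ s : ℝ, 0 < s → s ≤ 1 →
    concaveHull (Jsig2 M sigv lamv) s = ∫ r in (0:ℝ)..s, (sigbar r) ^ 2)

/-- `γ* = 𝒥_{σ²/σ̄}(1)`. -/
def gammaStar (M : ℕ) (sigv lamv : ℕ → ℝ) (sigbar : ℝ → ℝ) : ℝ :=
  ∫ s in (0:ℝ)..1, (stepFn M sigv lamv s) ^ 2 / sigbar s

/-- The critical levels `γ^l = ∫_0^1 σ²(s)/σ̄(s ∧ λ^l) ds`, `γ⁰ = 0`. -/
def gammaL (M : ℕ) (sigv lamv : ℕ → ℝ) (lamb : ℕ → ℝ) (sigbar : ℝ → ℝ) (l : ℕ) : ℝ :=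
  if l = 0 then 0 else ∫ s in (0:ℝ)..1, (stepFn M sigv lamv s) ^ 2 / sigbar (min s (lamb l))

/-- `EntE` is the entropy function `𝓔` of the model. -/
def IsEntropy (M : ℕ) (sigv lamv : ℕ → ℝ) (m : ℕ) (lamb : ℕ → ℝ) (sigbar : ℝ → ℝ)
    (EntE : ℝ → ℝ) : Prop :=
  EntE 0 = 1 ∧
  ∀ l ∈ Finset.Icc 1 m, ∀ γ : ℝ,
    gammaL M sigv lamv lamb sigbar (l - 1) < γ → γ ≤ gammaL M sigv lamv lamb sigbar l →
      EntE γ = (1 - lamb (l - 1)) -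
        (γ - ∫ s in (0:ℝ)..(lamb (l - 1)), (stepFn M sigv lamv s) ^ 2 / sigbar s) ^ 2 /
          Jint2 (fun r => (stepFn M sigv lamv r) ^ 2) (lamb (l - 1)) 1

/-- The limiting free energy of the `REM(σ)` model. -/
def fREM (σ β : ℝ) : ℝ :=
  if (2 / σ) < β then 2 * (β / (2 / σ)) else 1 + (β / (2 / σ)) ^ 2

/-- The index `l_β`. -/
def lbeta (m : ℕ) (sigb : ℕ → ℝ) (β : ℝ) : ℕ :=
  if β ≤ 2 / sigb m then sInf {l : ℕ | 1 ≤ l ∧ β ≤ 2 / sigb l} else m + 1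

/-- The limiting free energy `f^ψ(β)`, written with the `l_β` split. -/
def fpsiLim (m : ℕ) (sigb lamb : ℕ → ℝ) (β : ℝ) : ℝ :=
  (∑ j ∈ Finset.Icc 1 (lbeta m sigb β - 1), (2 * β / (2 / sigb j)) * (lamb j - lamb (j - 1))) +
  ∑ j ∈ Finset.Icc (lbeta m sigb β) m, (1 + β ^ 2 / (2 / sigb j) ^ 2) * (lamb j - lamb (j - 1))

/-- The set `ℬ` of non-critical inverse temperatures. -/
def critSet (m : ℕ) (sigb : ℕ → ℝ) : Set ℝ :=
  {β | 0 < β ∧ ∀ j ∈ Finset.Icc 1 m, β ≠ 2 / sigb j}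

/-- The partition function `Z_N^ψ(β)`. -/
def ZN (N M : ℕ) (sigv lamv : ℕ → ℝ) (P : MeasureTheory.Measure FieldSp) (β : ℝ) (ω : FieldSp) : ℝ :=
  ∑ v ∈ VN N, Real.exp (β * psiFld N M sigv lamv P v ω)

/-- The free energy `f_N^ψ(β)` on `V_N`. -/
def freeEnergy (N M : ℕ) (sigv lamv : ℕ → ℝ) (P : MeasureTheory.Measure FieldSp) (β : ℝ) (ω : FieldSp) : ℝ :=
  (Real.log ((N : ℝ) ^ 2))⁻¹ * Real.log (ZN N M sigv lamv P β ω)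

/-- The set `A_{N,ρ}` of points at distance at least `N^{1−ρ}` from `ℤ² ∖ V_N`. -/
def AN (N : ℕ) (ρ : ℝ) : Finset Vtx :=
  (VN N).filter fun v => ∀ z : Vtx, z ∉ VN N →
    (N : ℝ) ^ ((1 : ℝ) - ρ) ≤ Real.sqrt (((v.1 : ℝ) - (z.1 : ℝ)) ^ 2 + ((v.2 : ℝ) - (z.2 : ℝ)) ^ 2)

/-- The restricted partition function `Z_{N,ρ}^ψ(β)`. -/
def ZNres (N M : ℕ) (sigv lamv : ℕ → ℝ) (P : MeasureTheory.Measure FieldSp) (β ρ : ℝ) (ω : FieldSp) : ℝ :=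
  ∑ v ∈ AN N ρ, Real.exp (β * psiFld N M sigv lamv P v ω)

/-- The free energy `f_{N,ρ}^ψ(β)` on `A_{N,ρ}`. -/
def freeEnergyRes (N M : ℕ) (sigv lamv : ℕ → ℝ) (P : MeasureTheory.Measure FieldSp) (β ρ : ℝ)
    (ω : FieldSp) : ℝ :=
  (Real.log ((N : ℝ) ^ 2))⁻¹ * Real.log (ZNres N M sigv lamv P β ρ ω)

/-- The Gibbs weight `𝒢_{β,N}({v})`. -/
def gibbsW (N M : ℕ) (sigv lamv : ℕ → ℝ) (P : MeasureTheory.Measure FieldSp) (β : ℝ) (v : Vtx)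
    (ω : FieldSp) : ℝ :=
  Real.exp (β * psiFld N M sigv lamv P v ω) / ZN N M sigv lamv P β ω

/-- The restricted Gibbs weight `𝒢_{β,N,ρ}({v})`. -/
def gibbsWres (N M : ℕ) (sigv lamv : ℕ → ℝ) (P : MeasureTheory.Measure FieldSp) (β ρ : ℝ) (v : Vtx)
    (ω : FieldSp) : ℝ :=
  Real.exp (β * psiFld N M sigv lamv P v ω) / ZNres N M sigv lamv P β ρ ω

/-- `E𝒢_{β,N}^{×s}[F]`: the mean over the disorder of the `s`-fold Gibbs average of `F`. -/
def gibbsExp (N M : ℕ) (sigv lamv : ℕ → ℝ) (P : MeasureTheory.Measure FieldSp) (β : ℝ) (s : ℕ)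
    (F : (Fin s → Vtx) → ℝ) : ℝ :=
  ∫ ω, (∑ vv ∈ Fintype.piFinset (fun _ : Fin s => VN N),
    (∏ i, gibbsW N M sigv lamv P β (vv i) ω) * F vv) ∂P

/-- `E𝒢_{β,N,ρ}^{×s}[F]`, with an `ω`-dependent integrand allowed. -/
def gibbsExpRes (N M : ℕ) (sigv lamv : ℕ → ℝ) (P : MeasureTheory.Measure FieldSp) (β ρ : ℝ) (s : ℕ)
    (F : (Fin s → Vtx) → FieldSp → ℝ) : ℝ :=
  ∫ ω, (∑ vv ∈ Fintype.piFinset (fun _ : Fin s => AN N ρ),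
    (∏ i, gibbsWres N M sigv lamv P β ρ (vv i) ω) * F vv ω) ∂P

/-- `E𝒢_{β,N}^{×s}[F]`, with an `ω`-dependent integrand allowed. -/
def gibbsExpW (N M : ℕ) (sigv lamv : ℕ → ℝ) (P : MeasureTheory.Measure FieldSp) (β : ℝ) (s : ℕ)
    (F : (Fin s → Vtx) → FieldSp → ℝ) : ℝ :=
  ∫ ω, (∑ vv ∈ Fintype.piFinset (fun _ : Fin s => VN N),
    (∏ i, gibbsW N M sigv lamv P β (vv i) ω) * F vv ω) ∂P

/-- The covariance `E[ψ_v ψ_{v'}]`. -/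
def psiCov (N M : ℕ) (sigv lamv : ℕ → ℝ) (P : MeasureTheory.Measure FieldSp) (v v' : Vtx) : ℝ :=
  ∫ ω, psiFld N M sigv lamv P v ω * psiFld N M sigv lamv P v' ω ∂P

/-- `C₀` is a constant witnessing the uniform variance upper bound
`max_{v∈V_N} E[ψ_v²] ≤ 𝒥_{σ²}(1) log N + C₀` for `N` large. -/
def IsVarBound (M : ℕ) (sigv lamv : ℕ → ℝ) (P : ℕ → MeasureTheory.Measure FieldSp) (C₀ : ℝ) : Prop :=
  0 < C₀ ∧ ∃ N₀ : ℕ, ∀ N ≥ N₀, ∀ v ∈ VN N,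
    psiCov N M sigv lamv (P N) v v ≤ Jsig2 M sigv lamv 1 * Real.log N + C₀

/-- The overlap `q^N(v,v')`. -/
def overlapQ (N M : ℕ) (sigv lamv : ℕ → ℝ) (P : MeasureTheory.Measure FieldSp) (C₀ : ℝ) (v v' : Vtx) : ℝ :=
  psiCov N M sigv lamv P v v' / (Jsig2 M sigv lamv 1 * Real.log N + C₀)

/-- Convergence in probability to a constant, for a sequence of random variables on a
sequence of probability spaces. -/
def TendstoInProb (P : ℕ → MeasureTheory.Measure FieldSp) (X : ℕ → FieldSp → ℝ) (c : ℝ) : Prop :=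
  ∀ ε : ℝ, 0 < ε → Tendsto (fun N => P N {ω | ε < |X N ω - c|}) atTop (nhds 0)

/-- Convergence in `L^p` to a constant. -/
def TendstoLp (P : ℕ → MeasureTheory.Measure FieldSp) (X : ℕ → FieldSp → ℝ) (p c : ℝ) : Prop :=
  Tendsto (fun N => ∫ ω, |X N ω - c| ^ p ∂(P N)) atTop (nhds 0)

/-- The branching scale `b_N(v,v')`. -/
def bScale (N : ℕ) (v v' : Vtx) : ℝ :=
  sSup {lam : ℝ | lam ∈ Set.Icc (0:ℝ) 1 ∧ ((nbhd N lam v) ∩ (nbhd N lam v')).Nonempty}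

end GFFCommon


noncomputable section Pot

def avg (f : Vtx → ℝ) (x : Vtx) : ℝ :=
  (f (x.1 + 1, x.2) + f (x.1 - 1, x.2) + f (x.1, x.2 + 1) + f (x.1, x.2 - 1)) / 4

def Nbr (x y : Vtx) : Prop :=
  y = (x.1 + 1, x.2) ∨ y = (x.1 - 1, x.2) ∨ y = (x.1, x.2 + 1) ∨ y = (x.1, x.2 - 1)

lemma avg_le_of {f g : Vtx → ℝ} {x : Vtx} (h : ∀ y, Nbr x y → f y ≤ g y) : avg f x ≤ avg g x := by
  have h1 := h _ (Or.inl rfl)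
  have h2 := h _ (Or.inr (Or.inl rfl))
  have h3 := h _ (Or.inr (Or.inr (Or.inl rfl)))
  have h4 := h _ (Or.inr (Or.inr (Or.inr rfl)))
  unfold avg
  linarith

lemma avg_congr {f g : Vtx → ℝ} {x : Vtx} (h : ∀ y, Nbr x y → f y = g y) : avg f x = avg g x :=
  le_antisymm (avg_le_of fun y hy => (h y hy).le) (avg_le_of fun y hy => (h y hy).ge)

lemma avg_add (f g : Vtx → ℝ) (x : Vtx) : avg (fun y => f y + g y) x = avg f x + avg g x := by
  unfold avg; ring

lemma avg_sub (f g : Vtx → ℝ) (x : Vtx) : avg (fun y => f y - g y) x = avg f x - avg g x := by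
  unfold avg; ring

lemma avg_mul (c : ℝ) (f : Vtx → ℝ) (x : Vtx) : avg (fun y => c * f y) x = c * avg f x := by
  unfold avg; ring

lemma avg_const (c : ℝ) (x : Vtx) : avg (fun _ => c) x = c := by
  unfold avg; ring

lemma max_principle (B : Finset Vtx) (u : Vtx → ℝ) (h1 : ∀ x ∈ B, u x ≤ avg u x)
    (h2 : ∀ x ∈ B, ∀ y, y ∉ B → Nbr x y → u y ≤ 0) : ∀ x ∈ B, u x ≤ 0 := by
  by_contra! hcon
  obtain ⟨x0, hx0, hpos⟩ := hcon
  obtain ⟨xm, hxm, hmax⟩ := B.exists_max_image u ⟨x0, hx0⟩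
  have hposm : 0 < u xm := lt_of_lt_of_le hpos (hmax _ hx0)
  obtain ⟨z, hz, hzmax⟩ := (B.filter fun x => u x = u xm).exists_max_image (fun x => x.1)
    ⟨xm, by simp [hxm]⟩
  simp only [Finset.mem_filter] at hz hzmax
  have hle : ∀ y, Nbr z y → u y ≤ u xm := by
    intro y hy
    by_cases hyB : y ∈ B
    · exact hmax _ hyB
    · exact (h2 z hz.1 y hyB hy).trans hposm.le
  have a1 := hle _ (Or.inl rfl)
  have a2 := hle _ (Or.inr (Or.inl rfl))
  have a3 := hle _ (Or.inr (Or.inr (Or.inl rfl)))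
  have a4 := hle _ (Or.inr (Or.inr (Or.inr rfl)))
  have a5 := h1 z hz.1
  unfold avg at a5
  have a6 : u (z.1 + 1, z.2) = u xm := by linarith [hz.2]
  by_cases hB : (z.1 + 1, z.2) ∈ B
  · have := hzmax _ ⟨hB, a6⟩
    simp at this
  · have := h2 z hz.1 _ hB (Or.inl rfl)
    linarith

lemma exists_ext (B : Finset Vtx) (f : Vtx → ℝ) :
    ∃ u : Vtx → ℝ, (∀ x, x ∉ B → u x = f x) ∧ ∀ x ∈ B, u x = avg u x := by
  let E : ({x // x ∈ B} → ℝ) →ₗ[ℝ] (Vtx → ℝ) :=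
    { toFun := fun u x => if h : x ∈ B then u ⟨x, h⟩ else 0
      map_add' := by intro u v; ext x; by_cases h : x ∈ B <;> simp [h]
      map_smul' := by intro u v; ext x; by_cases h : x ∈ B <;> simp [h] }
  have Eon : ∀ u (x : {x // x ∈ B}), E u x.1 = u x := by intro u x; simp [E]
  have Eoff : ∀ u x, x ∉ B → E u x = 0 := by intro u x hx; simp [E, hx]
  let T : ({x // x ∈ B} → ℝ) →ₗ[ℝ] ({x // x ∈ B} → ℝ) :=
    { toFun := fun u x => E u x.1 - avg (E u) x.1
      map_add' := by
        intro u v; ext x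
        simp only [map_add, Pi.add_apply]; unfold avg; simp only [Pi.add_apply]; ring
      map_smul' := by
        intro c v; ext x
        simp only [map_smul, Pi.smul_apply, smul_eq_mul, RingHom.id_apply]; unfold avg
        simp only [Pi.smul_apply, smul_eq_mul]; ring }
  have hinj : Function.Injective T := by
    rw [← LinearMap.ker_eq_bot, LinearMap.ker_eq_bot']
    intro u hu
    have hh : ∀ x ∈ B, E u x = avg (E u) x := by
      intro x hx
      have := congrFun hu ⟨x, hx⟩
      simp only [T, LinearMap.coe_mk, AddHom.coe_mk, Pi.zero_apply] at this
      linarith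
    have hp := max_principle B (E u) (fun x hx => (hh x hx).le) (fun x _ y hy _ => (Eoff u y hy).le)
    have hn := max_principle B (fun x => - E u x)
      (fun x hx => by
        have := hh x hx
        have h2 : avg (fun x => - E u x) x = - avg (E u) x := by unfold avg; ring
        rw [h2]; linarith)
      (fun x _ y hy _ => by simp [Eoff u y hy])
    ext x
    have e1 := hp x.1 x.2
    have e2 := hn x.1 x.2
    rw [Eon] at e1
    simp only [Eon] at e2
    simp only [Pi.zero_apply]
    linarith
  have hsurj := LinearMap.injective_iff_surjective.1 hinj
  obtain ⟨u, hu⟩ := hsurj (fun x => avg (fun y => if y ∈ B then 0 else f y) x.1)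
  refine ⟨fun x => E u x + if x ∈ B then 0 else f x, ?_, ?_⟩
  · intro x hx; simp [Eoff u x hx, hx]
  · intro x hx
    have := congrFun hu ⟨x, hx⟩
    simp only [T, LinearMap.coe_mk, AddHom.coe_mk] at this
    rw [avg_add]
    simp only [hx, if_true]
    linarith

lemma harm_unique (B : Finset Vtx) (u w : Vtx → ℝ) (hu : ∀ x ∈ B, u x = avg u x)
    (hw : ∀ x ∈ B, w x = avg w x) (h : ∀ x ∈ B, ∀ y, y ∉ B → Nbr x y → u y = w y) :
    ∀ x ∈ B, u x = w x := by
  intro x hx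
  have h1 := max_principle B (fun x => u x - w x)
    (fun x hx => by rw [avg_sub]; linarith [hu x hx, hw x hx])
    (fun x hx y hy hn => by simp [h x hx y hy hn]) x hx
  have h2 := max_principle B (fun x => w x - u x)
    (fun x hx => by rw [avg_sub]; linarith [hu x hx, hw x hx])
    (fun x hx y hy hn => by simp [h x hx y hy hn]) x hx
  linarith

/-- harmonic extension into `B` of the values off `B` -/
def ext (B : Finset Vtx) : FieldSp →ₗ[ℝ] FieldSp where
  toFun f := (exists_ext B f).choose
  map_add' f g := by
    obtain ⟨a1, a2⟩ := (exists_ext B (f + g)).choose_spec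
    obtain ⟨b1, b2⟩ := (exists_ext B f).choose_spec
    obtain ⟨c1, c2⟩ := (exists_ext B g).choose_spec
    funext x
    by_cases hx : x ∈ B
    · refine harm_unique B _ _ a2 ?_ ?_ x hx
      · intro x hx
        have : avg ((exists_ext B f).choose + (exists_ext B g).choose) x = _ := avg_add _ _ x
        rw [this, Pi.add_apply, ← b2 x hx, ← c2 x hx]
      · intro x hx y hy _
        rw [a1 y hy, Pi.add_apply, Pi.add_apply, b1 y hy, c1 y hy]
    · rw [a1 x hx, Pi.add_apply, Pi.add_apply, b1 x hx, c1 x hx]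
  map_smul' c f := by
    obtain ⟨a1, a2⟩ := (exists_ext B (c • f)).choose_spec
    obtain ⟨b1, b2⟩ := (exists_ext B f).choose_spec
    funext x
    simp only [RingHom.id_apply]
    by_cases hx : x ∈ B
    · refine harm_unique B _ _ a2 ?_ ?_ x hx
      · intro x hx
        have : avg (c • (exists_ext B f).choose) x = _ := avg_mul c _ x
        rw [this, Pi.smul_apply, ← b2 x hx, smul_eq_mul]
      · intro x hx y hy _
        rw [a1 y hy, Pi.smul_apply, Pi.smul_apply, b1 y hy]
    · rw [a1 x hx, Pi.smul_apply, Pi.smul_apply, b1 x hx]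

lemma ext_off {B : Finset Vtx} (f : FieldSp) {x : Vtx} (hx : x ∉ B) : ext B f x = f x :=
  (exists_ext B f).choose_spec.1 x hx

lemma ext_harm {B : Finset Vtx} (f : FieldSp) {x : Vtx} (hx : x ∈ B) :
    ext B f x = avg (ext B f) x :=
  (exists_ext B f).choose_spec.2 x hx

lemma ext_le {B : Finset Vtx} {f u : FieldSp} (hu : ∀ x ∈ B, avg u x ≤ u x)
    (h : ∀ x ∈ B, ∀ y, y ∉ B → Nbr x y → f y ≤ u y) {x : Vtx} (hx : x ∈ B) : ext B f x ≤ u x := by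
  have := max_principle B (fun x => ext B f x - u x)
    (fun x hx => by rw [avg_sub]; linarith [hu x hx, ext_harm f hx])
    (fun x hx y hy hn => by
      have := h x hx y hy hn
      simp only [ext_off f hy]; linarith) x hx
  linarith

lemma ext_eq {B : Finset Vtx} {f u : FieldSp} (hu : ∀ x ∈ B, u x = avg u x)
    (h : ∀ x ∈ B, ∀ y, y ∉ B → Nbr x y → f y = u y) {x : Vtx} (hx : x ∈ B) : ext B f x = u x :=
  harm_unique B _ _ (fun _ hx => ext_harm f hx) hu
    (fun x hx y hy hn => by rw [ext_off f hy, h x hx y hy hn]) x hx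

lemma ext_le_all {B : Finset Vtx} {f u : FieldSp} (hu : ∀ x ∈ B, avg u x ≤ u x)
    (h : ∀ y, y ∉ B → f y ≤ u y) (x : Vtx) : ext B f x ≤ u x := by
  by_cases hx : x ∈ B
  · exact ext_le hu (fun _ _ y hy _ => h y hy) hx
  · rw [ext_off f hx]; exact h x hx

lemma ext_eq_all {B : Finset Vtx} {f u : FieldSp} (hu : ∀ x ∈ B, u x = avg u x)
    (h : ∀ y, y ∉ B → f y = u y) : ext B f = u := by
  funext x
  by_cases hx : x ∈ B
  · exact ext_eq hu (fun _ _ y hy _ => h y hy) hx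
  · rw [ext_off f hx]; exact h x hx

lemma ext_of_harm {B : Finset Vtx} {u : FieldSp} (hu : ∀ x ∈ B, u x = avg u x) : ext B u = u :=
  ext_eq_all hu fun _ _ => rfl

lemma ext_const (B : Finset Vtx) (c : ℝ) : ext B (fun _ => c) = fun _ => c :=
  ext_of_harm fun x _ => (avg_const c x).symm

lemma ext_mono {B : Finset Vtx} {f g : FieldSp} (h : ∀ y, f y ≤ g y) (x : Vtx) :
    ext B f x ≤ ext B g x := by
  refine ext_le_all (fun x hx => (ext_harm g hx).ge) (fun y hy => ?_) x
  rw [ext_off g hy]; exact h y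

lemma ext_zero_of {B : Finset Vtx} {f : FieldSp} (h : ∀ y, y ∉ B → f y = 0) : ext B f = 0 :=
  ext_eq_all (u := 0) (fun x _ => by simp [avg]) (fun y hy => by simp [h y hy])

lemma ext_le_const {B : Finset Vtx} {f : FieldSp} {c : ℝ} (h : ∀ y, f y ≤ c) (x : Vtx) :
    ext B f x ≤ c := by
  have := ext_mono (B := B) (g := fun _ => c) h x
  rwa [ext_const] at this

lemma ext_nonneg {B : Finset Vtx} {f : FieldSp} (h : ∀ y, 0 ≤ f y) (x : Vtx) :
    0 ≤ ext B f x := by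
  have := ext_mono (B := B) (f := fun _ => 0) h x
  rwa [ext_const] at this

lemma ext_ext {B U : Finset Vtx} (hBU : B ⊆ U) (f : FieldSp) : ext B (ext U f) = ext U f :=
  ext_of_harm fun _ hx => ext_harm f (hBU hx)

/-- interior of `V_N` -/
lemma mem_VN {N : ℕ} {x : Vtx} : x ∈ VN N ↔ 0 ≤ x.1 ∧ x.1 ≤ N ∧ 0 ≤ x.2 ∧ x.2 ≤ N := by
  simp only [VN, Finset.mem_Icc, Prod.le_def]
  tauto

lemma mem_intr_iff {B : Finset Vtx} {x : Vtx} : x ∈ intr B ↔ x ∈ B ∧ ∀ y, Nbr x y → y ∈ B := by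
  simp only [intr, bdry, Finset.mem_sdiff, Finset.mem_filter, Nbr]
  constructor
  · rintro ⟨h1, h2⟩
    refine ⟨h1, ?_⟩
    have : _ := not_not.1 (fun h => h2 ⟨h1, h⟩)
    obtain ⟨a, b, c, d⟩ := this
    rintro y (rfl | rfl | rfl | rfl) <;> assumption
  · rintro ⟨h1, h2⟩
    refine ⟨h1, fun h => h.2 ⟨h2 _ (by simp), h2 _ (by simp), h2 _ (by simp), h2 _ (by simp)⟩⟩

lemma mem_intr_VN {N : ℕ} {x : Vtx} :
    x ∈ intr (VN N) ↔ 1 ≤ x.1 ∧ x.1 + 1 ≤ N ∧ 1 ≤ x.2 ∧ x.2 + 1 ≤ N := by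
  rw [mem_intr_iff]
  simp only [mem_VN]
  constructor
  · rintro ⟨h, h2⟩
    have a := h2 _ (Or.inl rfl)
    have b := h2 _ (Or.inr (Or.inl rfl))
    have c := h2 _ (Or.inr (Or.inr (Or.inl rfl)))
    have d := h2 _ (Or.inr (Or.inr (Or.inr rfl)))
    simp only at a b c d
    omega
  · intro h
    refine ⟨by omega, ?_⟩
    rintro y (rfl | rfl | rfl | rfl) <;> simp only <;> omega

lemma nbr_symm {x y : Vtx} (h : Nbr x y) : Nbr y x := by
  rcases h with rfl | rfl | rfl | rfl <;> simp [Nbr]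

lemma intr_sub {B : Finset Vtx} : intr B ⊆ B := Finset.sdiff_subset

lemma ext_local {N : ℕ} {B : Finset Vtx} (hB : B ⊆ intr (VN N)) {f g : FieldSp}
    (h : ∀ w ∈ VN N, f w = g w) : ∀ w ∈ VN N, ext B f w = ext B g w := by
  intro w hw
  by_cases hwB : w ∈ B
  · refine ext_eq (fun x hx => ext_harm g hx) (fun x hx y hy hn => ?_) hwB
    rw [ext_off g hy]
    exact h y ((mem_intr_iff.1 (hB hx)).2 y hn)
  · rw [ext_off _ hwB, ext_off _ hwB, h w hw]

/-- Green functions killed off `U` -/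
structure IsGr (U : Finset Vtx) (G : Vtx → Vtx → ℝ) : Prop where
  zero : ∀ x y, x ∉ U ∨ y ∉ U → G x y = 0
  eq : ∀ x ∈ U, ∀ y, G x y = avg (fun z => G z y) x + if x = y then Real.pi / 2 else 0

lemma sum_avg_symm (U : Finset Vtx) (a b : Vtx → ℝ) (ha : ∀ x, x ∉ U → a x = 0)
    (hb : ∀ x, x ∉ U → b x = 0) : ∑ z ∈ U, a z * avg b z = ∑ z ∈ U, b z * avg a z := by
  have key : ∀ (b : Vtx → ℝ), (∀ x, x ∉ U → b x = 0) → ∀ z, avg b z = ∑ w ∈ U, b w *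
      (((if w = (z.1 + 1, z.2) then 1 else 0) + (if w = (z.1 - 1, z.2) then 1 else 0)
      + (if w = (z.1, z.2 + 1) then 1 else 0) + (if w = (z.1, z.2 - 1) then 1 else 0)) / 4) := by
    intro b hb z
    have h1 : ∀ t, b t = ∑ w ∈ U, b w * (if w = t then 1 else 0) := by
      intro t
      simp only [mul_ite, mul_one, mul_zero, Finset.sum_ite_eq']
      split_ifs with h
      · rfl
      · exact hb t h
    unfold avg
    rw [h1 (z.1 + 1, z.2), h1 (z.1 - 1, z.2), h1 (z.1, z.2 + 1), h1 (z.1, z.2 - 1)]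
    rw [← Finset.sum_add_distrib, ← Finset.sum_add_distrib, ← Finset.sum_add_distrib,
      Finset.sum_div]
    refine Finset.sum_congr rfl fun w _ => by ring
  simp only [key b hb, key a ha, Finset.mul_sum]
  rw [Finset.sum_comm]
  refine Finset.sum_congr rfl fun z _ => Finset.sum_congr rfl fun w _ => ?_
  have e1 : (z = (w.1 + 1, w.2)) ↔ (w = (z.1 - 1, z.2)) := by
    simp only [Prod.ext_iff]; constructor <;> intro h <;> omega
  have e2 : (z = (w.1 - 1, w.2)) ↔ (w = (z.1 + 1, z.2)) := by
    simp only [Prod.ext_iff]; constructor <;> intro h <;> omega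
  have e3 : (z = (w.1, w.2 + 1)) ↔ (w = (z.1, z.2 - 1)) := by
    simp only [Prod.ext_iff]; constructor <;> intro h <;> omega
  have e4 : (z = (w.1, w.2 - 1)) ↔ (w = (z.1, z.2 + 1)) := by
    simp only [Prod.ext_iff]; constructor <;> intro h <;> omega
  simp only [e1, e2, e3, e4]
  ring

lemma IsGr.symm {U : Finset Vtx} {G : Vtx → Vtx → ℝ} (h : IsGr U G) (x y : Vtx) :
    G x y = G y x := by
  by_cases hx : x ∈ U
  swap
  · rw [h.zero _ _ (Or.inl hx), h.zero _ _ (Or.inr hx)]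
  by_cases hy : y ∈ U
  swap
  · rw [h.zero _ _ (Or.inr hy), h.zero _ _ (Or.inl hy)]
  have h1 := sum_avg_symm U (fun z => G z x) (fun z => G z y)
    (fun z hz => h.zero _ _ (Or.inl hz)) (fun z hz => h.zero _ _ (Or.inl hz))
  have e : ∀ t, ∀ z ∈ U, avg (fun z => G z t) z = G z t - if z = t then Real.pi / 2 else 0 := by
    intro t z hz; linarith [h.eq z hz t]
  have hA : ∑ z ∈ U, G z x * avg (fun z => G z y) z
      = ∑ z ∈ U, G z x * (G z y - if z = y then Real.pi / 2 else 0) :=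
    Finset.sum_congr rfl (fun z hz => by rw [e y z hz])
  have hB : ∑ z ∈ U, G z y * avg (fun z => G z x) z
      = ∑ z ∈ U, G z y * (G z x - if z = x then Real.pi / 2 else 0) :=
    Finset.sum_congr rfl (fun z hz => by rw [e x z hz])
  rw [hA, hB] at h1
  simp only [mul_sub, Finset.sum_sub_distrib, mul_ite, mul_zero, Finset.sum_ite_eq', hx, hy,
    if_true] at h1
  have h2 : ∑ z ∈ U, G z x * G z y = ∑ z ∈ U, G z y * G z x :=
    Finset.sum_congr rfl fun z _ => by ring
  have := Real.pi_pos
  have h3 : Real.pi / 2 * (G x y - G y x) = 0 := by linarith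
  rcases mul_eq_zero.1 h3 with h | h <;> linarith

lemma isGr_of_green {N : ℕ} {G : Vtx → Vtx → ℝ} (h : IsGreenFn (VN N) G) :
    IsGr (intr (VN N)) G := by
  refine ⟨h.1, fun x hx y => ?_⟩
  by_cases hy : y ∈ intr (VN N)
  · rw [h.2 y hy x hx]; unfold avg; split_ifs <;> ring
  · have hne : x ≠ y := fun e => hy (e ▸ hx)
    simp [avg, h.1 _ _ (Or.inr hy), hne]

lemma IsGr.le {U : Finset Vtx} {G : Vtx → Vtx → ℝ} (h : IsGr U G) (y : Vtx) (F : Vtx → ℝ)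
    (h1 : ∀ x ∈ U, avg F x + (if x = y then Real.pi / 2 else 0) ≤ F x)
    (h2 : ∀ x ∈ U, ∀ z, z ∉ U → Nbr x z → 0 ≤ F z) : ∀ x ∈ U, G x y ≤ F x := by
  intro x hx
  have := max_principle U (fun x => G x y - F x)
    (fun x hx => by rw [avg_sub]; linarith [h1 x hx, h.eq x hx y])
    (fun x hx z hz hn => by
      have := h2 x hx z hz hn
      simp only [h.zero z y (Or.inl hz)]; linarith) x hx
  linarith

lemma IsGr.nonneg {U : Finset Vtx} {G : Vtx → Vtx → ℝ} (h : IsGr U G) (x y : Vtx) :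
    0 ≤ G x y := by
  by_cases hx : x ∈ U
  · have := max_principle U (fun x => - G x y)
      (fun x hx => by
        have h2 : avg (fun x => - G x y) x = - avg (fun x => G x y) x := by unfold avg; ring
        have h3 := h.eq x hx y
        have h4 : (0:ℝ) ≤ if x = y then Real.pi / 2 else 0 := by
          split_ifs
          · positivity
          · exact le_rfl
        rw [h2]; linarith)
      (fun x hx z hz hn => by simp [h.zero z y (Or.inl hz)]) x hx
    linarith
  · rw [h.zero _ _ (Or.inl hx)]

lemma IsGr.unique {U : Finset Vtx} {G : Vtx → Vtx → ℝ} (h : IsGr U G) (y : Vtx) (u : Vtx → ℝ)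
    (h1 : ∀ x ∈ U, u x = avg u x + (if x = y then Real.pi / 2 else 0))
    (h2 : ∀ x ∈ U, ∀ z, z ∉ U → Nbr x z → u z = 0) : ∀ x ∈ U, G x y = u x := by
  intro x hx
  have := harm_unique U (fun x => G x y - u x) (fun _ => 0)
    (fun x hx => by rw [avg_sub]; linarith [h1 x hx, h.eq x hx y])
    (fun x _ => (avg_const 0 x).symm)
    (fun x hx z hz hn => by simp [h2 x hx z hz hn, h.zero z y (Or.inl hz)]) x hx
  linarith

/-- Green function of the subdomain. -/
def GrU (U : Finset Vtx) (G : Vtx → Vtx → ℝ) (x y : Vtx) : ℝ := G x y - ext U (G x) y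

lemma ext_single {U : Finset Vtx} {x : Vtx} (hx : x ∈ U) (c : ℝ) :
    ext U (fun y => if x = y then c else 0) = 0 :=
  ext_zero_of fun y hy => if_neg fun (e : x = y) => hy (e ▸ hx)

lemma lin_avg (L : FieldSp →ₗ[ℝ] ℝ) (K : Vtx → Vtx → ℝ) (x : Vtx) :
    avg (fun z => L (K z)) x = L (fun y => avg (fun z => K z y) x) := by
  have : (fun y => avg (fun z => K z y) x) = (4:ℝ)⁻¹ • (K (x.1 + 1, x.2) + K (x.1 - 1, x.2)
      + K (x.1, x.2 + 1) + K (x.1, x.2 - 1)) := by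
    funext y; simp [avg]; ring
  rw [this]
  simp [avg]; ring

/-- evaluation composed with a linear map -/
def evL (A : FieldSp →ₗ[ℝ] FieldSp) (v : Vtx) : FieldSp →ₗ[ℝ] ℝ := (LinearMap.proj v).comp A

@[simp] lemma evL_apply (A : FieldSp →ₗ[ℝ] FieldSp) (v : Vtx) (f : FieldSp) :
    evL A v f = A f v := rfl

/-- for any functional `L`, `x ↦ L (ext U (G x))` is harmonic on `U` -/
lemma harm_of_ext {V U : Finset Vtx} {G : Vtx → Vtx → ℝ} (h : IsGr V G) (hU : U ⊆ V)
    (L : FieldSp →ₗ[ℝ] ℝ) : ∀ x ∈ U, L (ext U (G x)) = avg (fun x => L (ext U (G x))) x := by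
  intro x hx
  have h1 := lin_avg (L.comp (ext U)) G x
  simp only [LinearMap.comp_apply] at h1
  rw [h1]
  have h2 : (fun y => avg (fun z => G z y) x) = G x - fun y => if x = y then Real.pi / 2 else 0 := by
    funext y
    rw [Pi.sub_apply, h.eq x (hU hx) y]; ring
  rw [h2, map_sub, ext_single hx]; simp

lemma isGr_GrU {V U : Finset Vtx} {G : Vtx → Vtx → ℝ} (h : IsGr V G) (hU : U ⊆ V) :
    IsGr U (GrU U G) := by
  refine ⟨?_, ?_⟩
  · intro x y hxy
    by_cases hy : y ∈ U
    · have hx : x ∉ U := by tauto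
      have : ext U (G x) = G x := by
        apply ext_of_harm
        intro z hz
        have h1 := h.eq z (hU hz) x
        rw [h.symm x z, h1, if_neg (fun (e : z = x) => hx (e ▸ hz)), add_zero]
        exact avg_congr fun t _ => (h.symm _ _)
      simp [GrU, this]
    · simp [GrU, ext_off _ hy]
  · intro x hx y
    have h1 := harm_of_ext h hU (evL LinearMap.id y) x hx
    simp only [evL_apply, LinearMap.id_apply] at h1
    unfold GrU
    rw [avg_sub, ← h1, h.eq x (hU hx) y]; ring

end Pot


noncomputable section Gau
open MeasureTheory ProbabilityTheory

def Loc (N : ℕ) (L : FieldSp →ₗ[ℝ] ℝ) : Prop := ∀ f g : FieldSp, (∀ w ∈ VN N, f w = g w) → L f = L g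

lemma Loc.sum_eq {N : ℕ} {L : FieldSp →ₗ[ℝ] ℝ} (h : Loc N L) (f : FieldSp) :
    L f = ∑ w ∈ VN N, L (Pi.single w 1) * f w := by
  have h1 : L f = L (∑ w ∈ VN N, f w • (Pi.single w 1 : FieldSp)) := by
    apply h
    intro w hw
    simp only [Finset.sum_apply, Pi.smul_apply, smul_eq_mul, Pi.single_apply, mul_ite, mul_one,
      mul_zero]
    rw [Finset.sum_ite_eq]; simp [hw]
  rw [h1, map_sum]
  refine Finset.sum_congr rfl fun w _ => ?_
  rw [map_smul, smul_eq_mul, mul_comm]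

lemma Loc.measurable {N : ℕ} {L : FieldSp →ₗ[ℝ] ℝ} (h : Loc N L) : Measurable (fun f => L f) := by
  have : (fun f => L f) = fun f : FieldSp => ∑ w ∈ VN N, L (Pi.single w 1) * f w := by
    funext f; exact h.sum_eq f
  rw [this]
  exact Finset.measurable_sum _ fun w _ => (measurable_pi_apply w).const_mul _

lemma Loc.add {N : ℕ} {L L' : FieldSp →ₗ[ℝ] ℝ} (h : Loc N L) (h' : Loc N L') : Loc N (L + L') := by
  intro f g hfg
  simp [h f g hfg, h' f g hfg]

lemma loc_ext {N : ℕ} {B : Finset Vtx} (hB : B ⊆ intr (VN N)) {L : FieldSp →ₗ[ℝ] ℝ} (h : Loc N L) :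
    Loc N (L.comp (ext B)) := fun _ _ hfg => h _ _ (ext_local hB hfg)

/-- projection onto the zero boundary part -/
def prj (U : Finset Vtx) : FieldSp →ₗ[ℝ] FieldSp := LinearMap.id - ext U

lemma prj_apply (U : Finset Vtx) (f : FieldSp) (x : Vtx) : prj U f x = f x - ext U f x := rfl

lemma loc_prj {N : ℕ} {B : Finset Vtx} (hB : B ⊆ intr (VN N)) {L : FieldSp →ₗ[ℝ] ℝ} (h : Loc N L) :
    Loc N (L.comp (prj B)) := fun f g hfg => h _ _ (fun w hw => by
      rw [prj_apply, prj_apply, hfg w hw, ext_local hB hfg w hw])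

lemma loc_ev {N : ℕ} {v : Vtx} (hv : v ∈ VN N) : Loc N (evL LinearMap.id v) := fun f g hfg => by
  simp [hfg v hv]

lemma loc_evext {N : ℕ} {B : Finset Vtx} (hB : B ⊆ intr (VN N)) {v : Vtx} (hv : v ∈ VN N) :
    Loc N (evL (ext B) v) := fun f g hfg => by simpa using ext_local hB hfg v hv

def Cv (G : Vtx → Vtx → ℝ) (L L' : FieldSp →ₗ[ℝ] ℝ) : ℝ := L (fun x => L' (G x))

lemma Cv_sum {N : ℕ} {L L' : FieldSp →ₗ[ℝ] ℝ} (h : Loc N L) (h' : Loc N L') (G : Vtx → Vtx → ℝ) :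
    Cv G L L' = ∑ v ∈ VN N, ∑ w ∈ VN N, L (Pi.single v 1) * L' (Pi.single w 1) * G v w := by
  unfold Cv
  rw [h.sum_eq]
  refine Finset.sum_congr rfl fun v _ => ?_
  rw [h'.sum_eq, Finset.mul_sum]
  refine Finset.sum_congr rfl fun w _ => by ring

lemma Cv_comm {N : ℕ} {L L' : FieldSp →ₗ[ℝ] ℝ} (h : Loc N L) (h' : Loc N L') {U : Finset Vtx}
    {G : Vtx → Vtx → ℝ} (hG : IsGr U G) : Cv G L L' = Cv G L' L := by
  rw [Cv_sum h h', Cv_sum h' h, Finset.sum_comm]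
  refine Finset.sum_congr rfl fun v _ => Finset.sum_congr rfl fun w _ => ?_
  rw [hG.symm w v]; ring

lemma Cv_add_self {N : ℕ} {L L' : FieldSp →ₗ[ℝ] ℝ} (h : Loc N L) (h' : Loc N L') {U : Finset Vtx}
    {G : Vtx → Vtx → ℝ} (hG : IsGr U G) (h0 : Cv G L L' = 0) :
    Cv G (L + L') (L + L') = Cv G L L + Cv G L' L' := by
  have h1 : Cv G L' L = 0 := by rw [Cv_comm h' h hG, h0]
  have h2 : Cv G (L + L') (L + L') = Cv G L L + Cv G L L' + (Cv G L' L + Cv G L' L') := by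
    unfold Cv
    simp only [LinearMap.add_apply]
    have : (fun x => L (G x) + L' (G x)) = (fun x => L (G x)) + (fun x => L' (G x)) := rfl
    rw [this, map_add, map_add]
  rw [h2, h0, h1]; ring

lemma energy_nonneg (U : Finset Vtx) (f : Vtx → ℝ) (hf : ∀ x, x ∉ U → f x = 0) :
    0 ≤ ∑ z ∈ U, f z * (f z - avg f z) := by
  have h1 := sum_avg_symm U (fun z => if z ∈ U then 1 else 0) (fun z => f z ^ 2)
    (fun x hx => by simp [hx]) (fun x hx => by simp [hf x hx])
  have h2 : ∑ z ∈ U, (if z ∈ U then (1:ℝ) else 0) * avg (fun z => f z ^ 2) z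
      = ∑ z ∈ U, avg (fun z => f z ^ 2) z :=
    Finset.sum_congr rfl fun z hz => by simp [hz]
  rw [h2] at h1
  have h3 : ∑ z ∈ U, avg (fun z => f z ^ 2) z ≤ ∑ z ∈ U, f z ^ 2 := by
    rw [h1]
    refine Finset.sum_le_sum fun z _ => ?_
    have : avg (fun z => if z ∈ U then (1:ℝ) else 0) z ≤ 1 := by
      refine (avg_le_of (g := fun _ => 1) fun y _ => ?_).trans_eq (avg_const 1 z)
      split_ifs <;> norm_num
    nlinarith [sq_nonneg (f z)]
  have h4 : ∀ z ∈ U, (f z ^ 2 - avg (fun z => f z ^ 2) z) / 2 ≤ f z * (f z - avg f z) := by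
    intro z _
    unfold avg
    nlinarith [sq_nonneg (f z - f (z.1 + 1, z.2)), sq_nonneg (f z - f (z.1 - 1, z.2)),
      sq_nonneg (f z - f (z.1, z.2 + 1)), sq_nonneg (f z - f (z.1, z.2 - 1))]
  refine le_trans ?_ (Finset.sum_le_sum h4)
  rw [← Finset.sum_div, Finset.sum_sub_distrib]
  linarith

lemma Cv_nonneg {N : ℕ} {L : FieldSp →ₗ[ℝ] ℝ} (h : Loc N L) {U : Finset Vtx} (hU : U ⊆ VN N)
    {G : Vtx → Vtx → ℝ} (hG : IsGr U G) : 0 ≤ Cv G L L := by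
  set f : Vtx → ℝ := fun x => L (G x) with hf
  set c : Vtx → ℝ := fun x => L (Pi.single x 1) with hc
  have f0 : ∀ x, x ∉ U → f x = 0 := by
    intro x hx
    have : G x = 0 := by funext y; exact hG.zero x y (Or.inl hx)
    simp [hf, this]
  have fe : ∀ x ∈ U, f x = avg f x + Real.pi / 2 * c x := by
    intro x hx
    have h1 := lin_avg L G x
    have h2 : (fun y => avg (fun z => G z y) x) = G x - (Real.pi / 2) • (Pi.single x 1 : FieldSp) := by
      funext y
      rw [Pi.sub_apply, hG.eq x hx y]
      simp only [Pi.smul_apply, Pi.single_apply, smul_eq_mul, mul_ite, mul_one, mul_zero, eq_comm]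
      ring
    rw [h2, map_sub, map_smul, smul_eq_mul] at h1
    simp only [hf, hc]; linarith
  have e1 : Cv G L L = ∑ v ∈ U, c v * f v := by
    have : Cv G L L = L f := rfl
    rw [this, h.sum_eq]
    symm
    apply Finset.sum_subset hU
    intro x _ hx
    rw [f0 x hx, mul_zero]
  have e2 := energy_nonneg U f f0
  have e3 : ∑ z ∈ U, f z * (f z - avg f z) = Real.pi / 2 * ∑ v ∈ U, c v * f v := by
    rw [Finset.mul_sum]
    refine Finset.sum_congr rfl fun z hz => ?_
    have := fe z hz
    have : f z - avg f z = Real.pi / 2 * c z := by linarith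
    rw [this]; ring
  rw [e3] at e2
  rw [e1]
  exact nonneg_of_mul_nonneg_right e2 (by positivity)

lemma Cv_prj {U V : Finset Vtx} {G : Vtx → Vtx → ℝ} (hG : IsGr V G) (hU : U ⊆ V)
    (L L' : FieldSp →ₗ[ℝ] ℝ) :
    Cv G (L.comp (prj U)) (L'.comp (prj U)) = Cv (GrU U G) L L' := by
  have h1 : ∀ x, prj U (G x) = GrU U G x := fun x => rfl
  unfold Cv
  simp only [LinearMap.comp_apply, h1]
  congr 1
  funext y
  rw [prj_apply, ext_zero_of]
  · simp
  · intro x hx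
    have : GrU U G x = 0 := by funext z; exact (isGr_GrU hG hU).zero x z (Or.inl hx)
    simp [this]

lemma Cv_cross {U V : Finset Vtx} {G : Vtx → Vtx → ℝ} (hG : IsGr V G) (hU : U ⊆ V)
    (L L' : FieldSp →ₗ[ℝ] ℝ) : Cv G (L.comp (prj U)) (L'.comp (ext U)) = 0 := by
  have h1 := ext_of_harm (B := U) (u := fun x => L' (ext U (G x))) (harm_of_ext hG hU L')
  have h2 : prj U (fun x => L' (ext U (G x))) = 0 := by
    funext y; rw [prj_apply, h1]; simp
  unfold Cv
  simp only [LinearMap.comp_apply, h2, map_zero]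

lemma Cv_ext {U V : Finset Vtx} {G : Vtx → Vtx → ℝ} (hG : IsGr V G) (hU : U ⊆ V) (v : Vtx) :
    Cv G (evL (ext U) v) (evL (ext U) v) = ext U (G v) v := by
  have h1 := ext_of_harm (B := U) (u := fun x => ext U (G x) v)
    (harm_of_ext hG hU (evL LinearMap.id v))
  unfold Cv
  simp only [evL_apply, h1]

/-- Gaussian free field data -/
structure GF (N : ℕ) (G : Vtx → Vtx → ℝ) (P : Measure FieldSp) : Prop where
  prob : IsProbabilityMeasure P
  gr : IsGr (intr (VN N)) G
  law : ∀ L : FieldSp →ₗ[ℝ] ℝ, Loc N L → P.map (fun f => L f) = gaussianReal 0 (Cv G L L).toNNReal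

lemma gf_of {N : ℕ} {P : Measure FieldSp} (h : IsGFF N P) : ∃ G, GF N G P := by
  obtain ⟨h1, G, h2, h3⟩ := h
  refine ⟨G, h1, isGr_of_green h2, fun L hL => ?_⟩
  have := h3 (fun v => L (Pi.single v 1))
  rw [Cv_sum hL hL, ← this]
  congr 1
  funext f; exact hL.sum_eq f

variable {N : ℕ} {G : Vtx → Vtx → ℝ} {P : Measure FieldSp}

lemma GF.int_sq (h : GF N G P) {L : FieldSp →ₗ[ℝ] ℝ} (hL : Loc N L) :
    Integrable (fun f => L f ^ 2) P ∧ ∫ f, L f ^ 2 ∂P = Cv G L L := by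
  have hm := hL.measurable
  have h1 : MemLp (id : ℝ → ℝ) 2 (gaussianReal 0 (Cv G L L).toNNReal) := memLp_id_gaussianReal 2
  have h2 : Integrable (fun x : ℝ => x ^ 2) (gaussianReal 0 (Cv G L L).toNNReal) := h1.integrable_sq
  have h3 : ∫ x, x ^ 2 ∂(gaussianReal 0 (Cv G L L).toNNReal) = Cv G L L := by
    have := variance_of_integral_eq_zero (X := (id : ℝ → ℝ))
      (μ := gaussianReal 0 (Cv G L L).toNNReal) aemeasurable_id (by simp [integral_id_gaussianReal])
    rw [variance_id_gaussianReal] at this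
    simp only [id] at this
    rw [← this, Real.coe_toNNReal _ (Cv_nonneg hL intr_sub h.gr)]
  rw [← h.law L hL] at h2 h3
  rw [integral_map hm.aemeasurable (by fun_prop)] at h3
  rw [integrable_map_measure (by fun_prop) hm.aemeasurable] at h2
  exact ⟨h2, h3⟩

lemma GF.int (h : GF N G P) {L : FieldSp →ₗ[ℝ] ℝ} (hL : Loc N L) :
    Integrable (fun f => L f) P ∧ ∫ f, L f ∂P = 0 := by
  have hm := hL.measurable
  have h1 : MemLp (id : ℝ → ℝ) 1 (gaussianReal 0 (Cv G L L).toNNReal) := memLp_id_gaussianReal 1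
  have h2 := h1.integrable (by simp)
  have h3 : ∫ x, id x ∂(gaussianReal 0 (Cv G L L).toNNReal) = 0 := integral_id_gaussianReal
  rw [← h.law L hL] at h2 h3
  rw [integral_map hm.aemeasurable (by fun_prop)] at h3
  rw [integrable_map_measure (by fun_prop) hm.aemeasurable] at h2
  exact ⟨h2, h3⟩

lemma GF.tail (h : GF N G P) {L : FieldSp →ₗ[ℝ] ℝ} (hL : Loc N L) {s a : ℝ} (hs : 0 < s)
    (ha : 0 ≤ a) (hv : Cv G L L ≤ s) :
    P.real {f | a < |L f|} ≤ 2 * Real.exp (- a ^ 2 / (2 * s)) := by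
  have := h.prob
  have key : ∀ L : FieldSp →ₗ[ℝ] ℝ, Loc N L → Cv G L L ≤ s →
      P.real {f | a ≤ L f} ≤ Real.exp (- a ^ 2 / (2 * s)) := by
    intro L hL hv
    have hsub : HasSubgaussianMGF (fun f => L f) s.toNNReal P := by
      constructor
      · intro t
        have h1 := integrable_exp_mul_gaussianReal (μ := 0) (v := (Cv G L L).toNNReal) t
        rw [← h.law L hL, integrable_map_measure (by fun_prop) hL.measurable.aemeasurable] at h1
        exact h1
      · intro t
        rw [mgf_gaussianReal (h.law L hL)]
        simp only [zero_mul, zero_add]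
        rw [Real.coe_toNNReal _ hs.le, Real.coe_toNNReal _ (Cv_nonneg hL intr_sub h.gr)]
        gcongr
    have := hsub.measure_ge_le ha
    rwa [Real.coe_toNNReal _ hs.le] at this
  have hneg : Loc N (-L) := fun f g hfg => by simp [hL f g hfg]
  have k1 := key L hL hv
  have k2 := key (-L) hneg (by
    have : Cv G (-L) (-L) = Cv G L L := by
      unfold Cv
      have : (fun x => (-L) (G x)) = - fun x => L (G x) := by funext x; simp
      rw [this]; simp
    rw [this]; exact hv)
  have hsub : {f | a < |L f|} ⊆ {f | a ≤ L f} ∪ {f | a ≤ (-L) f} := by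
    intro f hf
    simp only [Set.mem_ofPred_eq, Set.mem_union, LinearMap.neg_apply] at hf ⊢
    rcases lt_abs.1 hf with h | h
    · exact Or.inl h.le
    · exact Or.inr h.le
  calc P.real {f | a < |L f|} ≤ P.real ({f | a ≤ L f} ∪ {f | a ≤ (-L) f}) := measureReal_mono hsub
    _ ≤ _ := measureReal_union_le _ _
    _ ≤ _ := by linarith

/-- restriction to the box -/
def rs (N : ℕ) (f : FieldSp) : {u // u ∈ VN N} → ℝ := fun u => f u.1

/-- extension by zero -/
def rsInv (N : ℕ) (g : {u // u ∈ VN N} → ℝ) : FieldSp := fun x => if h : x ∈ VN N then g ⟨x, h⟩ else 0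

lemma rsInv_rs (f : FieldSp) : ∀ w ∈ VN N, rsInv N (rs N f) w = f w := by
  intro w hw; simp [rsInv, rs, hw]

def rsL (N : ℕ) (l : ({u // u ∈ VN N} → ℝ) →ₗ[ℝ] ℝ) : FieldSp →ₗ[ℝ] ℝ :=
  l.comp (LinearMap.funLeft ℝ ℝ (fun u : {u // u ∈ VN N} => u.1))

lemma rsL_apply (l : ({u // u ∈ VN N} → ℝ) →ₗ[ℝ] ℝ) (f : FieldSp) : rsL N l f = l (rs N f) := rfl

lemma loc_rsL (l : ({u // u ∈ VN N} → ℝ) →ₗ[ℝ] ℝ) : Loc N (rsL N l) := by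
  intro f g hfg
  rw [rsL_apply, rsL_apply]
  congr 1
  funext u; exact hfg _ u.2

/-- a linear map acting locally on the box -/
def LocM (N : ℕ) (A : FieldSp →ₗ[ℝ] FieldSp) : Prop :=
  ∀ f g : FieldSp, (∀ w ∈ VN N, f w = g w) → ∀ w ∈ VN N, A f w = A g w

lemma LocM.comp {A : FieldSp →ₗ[ℝ] FieldSp} (hA : LocM N A) {L : FieldSp →ₗ[ℝ] ℝ} (hL : Loc N L) :
    Loc N (L.comp A) := fun f g hfg => hL _ _ (hA f g hfg)

lemma locM_ext {B : Finset Vtx} (hB : B ⊆ intr (VN N)) : LocM N (ext B) :=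
  fun _ _ hfg => ext_local hB hfg

lemma locM_prj {B : Finset Vtx} (hB : B ⊆ intr (VN N)) : LocM N (prj B) := fun f g hfg w hw => by
  rw [prj_apply, prj_apply, hfg w hw, ext_local hB hfg w hw]

lemma LocM.meas {A : FieldSp →ₗ[ℝ] FieldSp} (hA : LocM N A) : Measurable (fun f => rs N (A f)) := by
  rw [measurable_pi_iff]
  intro u
  exact (hA.comp (loc_ev u.2)).measurable

lemma GF.charFun (h : GF N G P) {A : FieldSp →ₗ[ℝ] FieldSp} (hA : LocM N A)
    (l : StrongDual ℝ ({u // u ∈ VN N} → ℝ)) :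
    charFunDual (P.map (fun f => rs N (A f))) l =
      Complex.exp (-(Cv G ((rsL N l.toLinearMap).comp A) ((rsL N l.toLinearMap).comp A) : ℂ) / 2) := by
  have hL := hA.comp (loc_rsL l.toLinearMap)
  rw [charFunDual_eq_charFun_map_one, Measure.map_map (by fun_prop) hA.meas]
  have : (l ∘ fun f => rs N (A f)) = fun f => ((rsL N l.toLinearMap).comp A) f := rfl
  rw [this, h.law _ hL, charFun_gaussianReal]
  rw [Real.coe_toNNReal _ (Cv_nonneg hL intr_sub h.gr)]
  congr 1
  push_cast
  ring

lemma GF.indep (h : GF N G P) {U : Finset Vtx} (hU : U ⊆ intr (VN N)) :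
    IndepFun (fun f => rs N (prj U f)) (fun f => rs N (ext U f)) P := by
  have := h.prob
  have m1 := (locM_prj hU).meas
  have m2 := (locM_ext hU).meas
  rw [indepFun_iff_charFunDual_prod m1.aemeasurable m2.aemeasurable]
  intro l
  rw [h.charFun (locM_prj hU), h.charFun (locM_ext hU)]
  set L1 := (rsL N (l.comp (.inl ℝ _ _)).toLinearMap).comp (prj U) with hL1
  set L2 := (rsL N (l.comp (.inr ℝ _ _)).toLinearMap).comp (ext U) with hL2
  have l1 : Loc N L1 := (locM_prj hU).comp (loc_rsL _)
  have l2 : Loc N L2 := (locM_ext hU).comp (loc_rsL _)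
  have h0 : Cv G L1 L2 = 0 := Cv_cross h.gr hU _ _
  rw [charFunDual_eq_charFun_map_one, Measure.map_map (by fun_prop) (m1.prodMk m2)]
  have : (l ∘ fun f => (rs N (prj U f), rs N (ext U f))) = fun f => (L1 + L2) f := by
    funext f
    have : (rs N (prj U f), rs N (ext U f)) = (rs N (prj U f), 0) + (0, rs N (ext U f)) := by simp
    simp only [Function.comp_apply]
    rw [this, map_add]
    rfl
  rw [this, h.law _ (l1.add l2), charFun_gaussianReal,
    Real.coe_toNNReal _ (Cv_nonneg (l1.add l2) intr_sub h.gr), Cv_add_self l1 l2 h.gr h0,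
    ← Complex.exp_add]
  congr 1
  push_cast
  ring

lemma GF.law_eq {P' : Measure FieldSp} {G' : Vtx → Vtx → ℝ} (h : GF N G P) (h' : GF N G' P')
    {A A' : FieldSp →ₗ[ℝ] FieldSp}
    (hA : LocM N A) (hA' : LocM N A')
    (hc : ∀ L : FieldSp →ₗ[ℝ] ℝ, Loc N L → Cv G (L.comp A) (L.comp A) = Cv G' (L.comp A') (L.comp A')) :
    P.map (fun f => rs N (A f)) = P'.map (fun f => rs N (A' f)) := by
  have := h.prob
  have := h'.prob
  apply Measure.ext_of_charFunDual
  funext l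
  rw [h.charFun hA, h'.charFun hA', hc _ (loc_rsL _)]

lemma GF.condExp (h : GF N G P) {B : Finset Vtx} (hB : B ⊆ intr (VN N)) {v : Vtx} (hv : v ∈ VN N) :
    P[fun ω : FieldSp => ω v | ⨆ w ∈ {w : Vtx | w ∈ VN N ∧ w ∉ B},
      MeasurableSpace.comap (fun ω : FieldSp => ω w) inferInstance] =ᵐ[P] fun ω => ext B ω v := by
  have := h.prob
  set m : MeasurableSpace FieldSp := ⨆ w ∈ {w : Vtx | w ∈ VN N ∧ w ∉ B},
      MeasurableSpace.comap (fun ω : FieldSp => ω w) inferInstance with hm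
  have hle : m ≤ MeasurableSpace.pi := by
    refine iSup₂_le fun w _ => ?_
    exact (measurable_pi_apply w).comap_le
  have hcoord : ∀ w, w ∈ VN N → w ∉ B → Measurable[m] (fun ω : FieldSp => ω w) := by
    intro w h1 h2
    apply Measurable.of_comap_le
    exact le_iSup₂_of_le w ⟨h1, h2⟩ le_rfl
  have hext : Measurable[m] (fun ω : FieldSp => ext B ω v) := by
    have e : (fun ω : FieldSp => ext B ω v) = fun ω => ∑ w ∈ VN N, evL (ext B) v (Pi.single w 1) *
        (if w ∈ B then 0 else ω w) := by
      funext ω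
      have e1 : ext B ω v = evL (ext B) v (fun w => if w ∈ B then 0 else ω w) := by
        rw [evL_apply]
        refine congrFun (ext_eq_all (u := ext B (fun w => if w ∈ B then 0 else ω w))
          (fun x hx => ext_harm _ hx) fun y hy => ?_) v
        rw [ext_off _ hy]; simp [hy]
      rw [e1, (loc_evext hB hv).sum_eq]
    rw [e]
    refine Finset.measurable_sum _ fun w hw => ?_
    by_cases hwB : w ∈ B
    · simp only [hwB, if_true, mul_zero]; exact measurable_const
    · simp only [hwB, if_false]
      exact (hcoord w hw hwB).const_mul _
  have hle2 : m ≤ MeasurableSpace.comap (fun f => rs N (ext B f)) inferInstance := by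
    refine iSup₂_le fun w hw => ?_
    have hw' : w ∈ VN N ∧ w ∉ B := hw
    have e : (fun ω : FieldSp => ω w) = (fun g : {u // u ∈ VN N} → ℝ => g ⟨w, hw'.1⟩) ∘
        (fun f => rs N (ext B f)) := by
      funext f; simp [rs, ext_off _ hw'.2]
    rw [e, ← MeasurableSpace.comap_comp]
    exact MeasurableSpace.comap_mono (measurable_pi_apply _).comap_le
  have hind : Indep (MeasurableSpace.comap (fun f => rs N (prj B f)) inferInstance) m P :=
    indep_of_indep_of_le_right (h.indep hB) hle2
  have hpm : Loc N (evL (prj B) v) := (locM_prj hB).comp (loc_ev hv)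
  have hX : P[fun ω => prj B ω v | m] =ᵐ[P] fun _ => 0 := by
    have h1 := condExp_indep_eq (μ := P) (f := fun ω => prj B ω v)
      ((locM_prj hB).meas.comap_le) hle (by
        apply Measurable.stronglyMeasurable
        have e : (fun ω => prj B ω v) = (fun g : {u // u ∈ VN N} → ℝ => g ⟨v, hv⟩) ∘
          (fun f => rs N (prj B f)) := rfl
        rw [e]
        exact (measurable_pi_apply _).comp (comap_measurable _)) hind
    have h2 := (h.int hpm).2
    simp only [evL_apply] at h2
    rw [h2] at h1
    exact h1
  have i1 := (h.int hpm).1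
  have i2 := (h.int (loc_evext hB hv)).1
  simp only [evL_apply] at i1 i2
  have e : (fun ω : FieldSp => ω v) = (fun ω => prj B ω v) + (fun ω => ext B ω v) := by
    funext ω; simp [prj_apply]
  rw [e]
  refine (condExp_add i1 i2 m).trans ?_
  rw [condExp_of_stronglyMeasurable hle hext.stronglyMeasurable i2]
  filter_upwards [hX] with ω hω
  simp [hω]

end Gau


noncomputable section Grn

def lg (z : Vtx) : ℝ := Real.log ((z.1 : ℝ) ^ 2 + (z.2 : ℝ) ^ 2 + 1)

def C0 : ℝ := (Real.pi / 2) / Real.log 2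

lemma C0_pos : 0 < C0 := by
  have := Real.pi_pos
  have := Real.log_pos (by norm_num : (1:ℝ) < 2)
  unfold C0; positivity

lemma lg_sub (x y : Vtx) : lg (x - y) = Real.log (((x.1 : ℝ) - y.1) ^ 2 + ((x.2 : ℝ) - y.2) ^ 2 + 1) := by
  unfold lg; push_cast [Prod.fst_sub, Prod.snd_sub]; rfl

lemma log_aux (a b : ℝ) : 4 * Real.log (a ^ 2 + b ^ 2 + 1) ≤
    Real.log ((a + 1) ^ 2 + b ^ 2 + 1) + Real.log ((a - 1) ^ 2 + b ^ 2 + 1)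
    + Real.log (a ^ 2 + (b + 1) ^ 2 + 1) + Real.log (a ^ 2 + (b - 1) ^ 2 + 1) := by
  have p1 : 0 < (a + 1) ^ 2 + b ^ 2 + 1 := by positivity
  have p2 : 0 < (a - 1) ^ 2 + b ^ 2 + 1 := by positivity
  have p3 : 0 < a ^ 2 + (b + 1) ^ 2 + 1 := by positivity
  have p4 : 0 < a ^ 2 + (b - 1) ^ 2 + 1 := by positivity
  rw [← Real.log_mul p1.ne' p2.ne', ← Real.log_mul (by positivity) p3.ne',
    ← Real.log_mul (by positivity) p4.ne']
  have : (4:ℝ) * Real.log (a ^ 2 + b ^ 2 + 1) = Real.log ((a ^ 2 + b ^ 2 + 1) ^ 4) := by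
    rw [Real.log_pow]; norm_num
  rw [this]
  apply Real.log_le_log (by positivity)
  have : ((a + 1) ^ 2 + b ^ 2 + 1) * ((a - 1) ^ 2 + b ^ 2 + 1) * (a ^ 2 + (b + 1) ^ 2 + 1)
      * (a ^ 2 + (b - 1) ^ 2 + 1) - (a ^ 2 + b ^ 2 + 1) ^ 4
      = 2 * (a ^ 2 + b ^ 2 + 2) ^ 2 + 4 * (a ^ 2 + b ^ 2 + 2) - 1 + 16 * a ^ 2 * b ^ 2 := by ring
  have : 0 ≤ 2 * (a ^ 2 + b ^ 2 + 2) ^ 2 + 4 * (a ^ 2 + b ^ 2 + 2) - 1 + 16 * a ^ 2 * b ^ 2 := by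
    have : 0 ≤ a ^ 2 * b ^ 2 := by positivity
    nlinarith [sq_nonneg a, sq_nonneg b]
  linarith

/-- the superharmonic majorant -/
def fR (A : ℝ) (x y : Vtx) : ℝ := C0 * (Real.log A - lg (x - y))

lemma fR_super (A : ℝ) (x y : Vtx) :
    avg (fun x => fR A x y) x + (if x = y then Real.pi / 2 else 0) ≤ fR A x y := by
  have hC := C0_pos
  by_cases h : x = y
  · subst h
    have l2 := Real.log_pos (by norm_num : (1:ℝ) < 2)
    have e : C0 * Real.log 2 = Real.pi / 2 := by unfold C0; field_simp
    simp only [avg, fR, lg_sub, if_true]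
    push_cast
    norm_num [add_sub_cancel_left]
    nlinarith
  · simp only [h, if_false, add_zero, avg, fR, lg_sub]
    push_cast
    have := log_aux (x.1 - y.1) (x.2 - y.2)
    have e1 : ((x.1:ℝ) + 1 - y.1) = x.1 - y.1 + 1 := by ring
    have e2 : ((x.1:ℝ) - 1 - y.1) = x.1 - y.1 - 1 := by ring
    have e3 : ((x.2:ℝ) + 1 - y.2) = x.2 - y.2 + 1 := by ring
    have e4 : ((x.2:ℝ) - 1 - y.2) = x.2 - y.2 - 1 := by ring
    rw [e1, e2, e3, e4]
    nlinarith

lemma fR_symm (A : ℝ) (x y : Vtx) : fR A x y = fR A y x := by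
  simp only [fR, lg_sub]
  congr 3; ring

lemma fR_super' (A : ℝ) (x y : Vtx) : avg (fR A x) y ≤ fR A x y := by
  have h := fR_super A y x
  have h2 : avg (fR A x) y = avg (fun z => fR A z x) y := avg_congr fun z _ => fR_symm A x z
  have h4 : (0:ℝ) ≤ if y = x then Real.pi / 2 else 0 := by
    split_ifs
    · positivity
    · exact le_rfl
  rw [h2, fR_symm A x y]; linarith

lemma fR_nonneg {A : ℝ} {x y : Vtx} (h : ((x.1 : ℝ) - y.1) ^ 2 + ((x.2 : ℝ) - y.2) ^ 2 + 1 ≤ A) :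
    0 ≤ fR A x y := by
  rw [fR, lg_sub]
  have := Real.log_le_log (by positivity) h
  have := C0_pos
  apply mul_nonneg this.le; linarith

lemma sq_le_of_abs {a b : ℝ} (h : |a| ≤ b) : a ^ 2 ≤ b ^ 2 := by
  rw [← sq_abs]; exact pow_le_pow_left₀ (abs_nonneg _) h 2

def Cmax (N : ℕ) : ℝ := C0 * Real.log (2 * (N:ℝ) ^ 2 + 1)

lemma Cmax_nonneg (N : ℕ) : 0 ≤ Cmax N := by
  apply mul_nonneg C0_pos.le
  apply Real.log_nonneg
  nlinarith [sq_nonneg (N:ℝ)]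

lemma mem_VN_real {N : ℕ} {x : Vtx} (h : x ∈ VN N) :
    (0:ℝ) ≤ x.1 ∧ (x.1:ℝ) ≤ N ∧ (0:ℝ) ≤ x.2 ∧ (x.2:ℝ) ≤ N := by
  have := mem_VN.1 h
  refine ⟨?_, ?_, ?_, ?_⟩ <;> (try exact_mod_cast this.1) <;> (try exact_mod_cast this.2.1) <;>
    (try exact_mod_cast this.2.2.1) <;> exact_mod_cast this.2.2.2

lemma IsGr.le_Cmax {N : ℕ} {U : Finset Vtx} (hU : U ⊆ intr (VN N)) {G : Vtx → Vtx → ℝ}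
    (h : IsGr U G) (x y : Vtx) : G x y ≤ Cmax N := by
  by_cases hx : x ∈ U
  swap
  · rw [h.zero _ _ (Or.inl hx)]; exact Cmax_nonneg N
  by_cases hy : y ∈ U
  swap
  · rw [h.zero _ _ (Or.inr hy)]; exact Cmax_nonneg N
  have h1 := h.le y (fun x => fR (2 * (N:ℝ) ^ 2 + 1) x y) (fun x _ => fR_super _ x y)
    (fun z hz w _ hn => by
      apply fR_nonneg
      have a := mem_VN_real (intr_sub (hU hy))
      have b := mem_VN_real ((mem_intr_iff.1 (hU hz)).2 w hn)
      have c1 : |(w.1:ℝ) - y.1| ≤ N := by rw [abs_le]; constructor <;> linarith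
      have c2 : |(w.2:ℝ) - y.2| ≤ N := by rw [abs_le]; constructor <;> linarith
      linarith [sq_le_of_abs c1, sq_le_of_abs c2]) x hx
  refine h1.trans ?_
  unfold fR Cmax
  apply mul_le_mul_of_nonneg_left _ C0_pos.le
  have : 0 ≤ lg (x - y) := by
    rw [lg_sub]; apply Real.log_nonneg
    nlinarith [sq_nonneg ((x.1:ℝ) - y.1), sq_nonneg ((x.2:ℝ) - y.2)]
  linarith

/-- interior of the box of half side `r` around `v` -/
def Bx (N : ℕ) (r : ℝ) (v : Vtx) : Finset Vtx :=
  (intr (VN N)).filter fun w => |(w.1:ℝ) - v.1| + 1 ≤ r ∧ |(w.2:ℝ) - v.2| + 1 ≤ r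

lemma Bx_sub {N : ℕ} {r : ℝ} {v : Vtx} : Bx N r v ⊆ intr (VN N) := Finset.filter_subset _ _

lemma mem_Bx {N : ℕ} {r : ℝ} {v w : Vtx} : w ∈ Bx N r v ↔ w ∈ intr (VN N) ∧
    |(w.1:ℝ) - v.1| + 1 ≤ r ∧ |(w.2:ℝ) - v.2| + 1 ≤ r := by simp [Bx]

lemma nbr_abs {x y : Vtx} (h : Nbr x y) (v : Vtx) :
    |(y.1:ℝ) - v.1| ≤ |(x.1:ℝ) - v.1| + 1 ∧ |(y.2:ℝ) - v.2| ≤ |(x.2:ℝ) - v.2| + 1 := by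
  have key : ∀ a b : ℝ, |a + 1 - b| ≤ |a - b| + 1 ∧ |a - 1 - b| ≤ |a - b| + 1 ∧ |a - b| ≤ |a - b| + 1 := by
    intro a b
    refine ⟨?_, ?_, by linarith⟩
    · have := abs_add_le (a - b) 1
      rw [abs_one] at this
      calc |a + 1 - b| = |a - b + 1| := by ring_nf
        _ ≤ _ := this
    · have := abs_sub (a - b) 1
      rw [abs_one] at this
      calc |a - 1 - b| = |a - b - 1| := by ring_nf
        _ ≤ _ := this
  rcases h with rfl | rfl | rfl | rfl <;> push_cast
  · exact ⟨(key _ _).1, (key _ _).2.2⟩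
  · exact ⟨(key _ _).2.1, (key _ _).2.2⟩
  · exact ⟨(key _ _).2.2, (key _ _).1⟩
  · exact ⟨(key _ _).2.2, (key _ _).2.1⟩

set_option maxHeartbeats 1600000 in
lemma small_var {N : ℕ} {U : Finset Vtx} (hU : U ⊆ intr (VN N)) {G : Vtx → Vtx → ℝ} (h : IsGr U G)
    {v : Vtx} {r : ℝ} {a : ℤ} (ha : ∀ x ∈ U, x.1 ≠ a) (hr : |(v.1:ℝ) - a| + 1 ≤ r) {t : ℝ}
    (ht : 3 ≤ t) :
    Cv G (evL (ext (Bx N r v)) v) (evL (ext (Bx N r v)) v) ≤ C0 * Real.log (72 * t ^ 2) + 5 * Cmax N / t := by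
  have hr1 : 1 ≤ r := by linarith [abs_nonneg ((v.1:ℝ) - a)]
  have hC := C0_pos
  have hM := Cmax_nonneg N
  have hlog : 0 ≤ Real.log (72 * t ^ 2) := Real.log_nonneg (by nlinarith)
  have hb0 : 0 ≤ C0 * Real.log (72 * t ^ 2) + 5 * Cmax N / t := by positivity
  set B := Bx N r v with hB
  have hBV : B ⊆ intr (VN N) := Bx_sub
  have Gz : ∀ x, x ∉ U → G x = 0 := fun x hx => by funext y; exact h.zero x y (Or.inl hx)
  unfold Cv
  simp only [evL_apply]
  by_cases hv : v ∈ B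
  swap
  · have hvU : v ∉ U := by
      intro hvU
      apply hv
      rw [hB, mem_Bx]
      exact ⟨hU hvU, by simpa using hr1, by simpa using hr1⟩
    rw [ext_off _ hv, Gz v hvU]
    simpa using hb0
  set u : Vtx → ℝ := fun x => ext B (G x) v with hu
  set R : ℕ := ⌈r * t⌉₊ with hR
  have hR1 : r * t ≤ R := Nat.le_ceil _
  have hR2 : (R:ℝ) ≤ 2 * (r * t) := by
    have := Nat.ceil_lt_add_one (a := r * t) (by positivity)
    nlinarith
  have hR3 : 3 * r ≤ R := by nlinarith
  have hRpos : (0:ℝ) < R := by linarith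
  set A : ℝ := 8 * (R:ℝ) ^ 2 + 1 with hA
  set F1 : Vtx → ℝ := fun x => ext B (fR A x) v with hF1
  set q : Vtx → ℝ := fun x => (((x.2:ℝ) - v.2) ^ 2 - ((x.1:ℝ) - a) ^ 2 + 2 * R * |(x.1:ℝ) - a|) / R ^ 2 with hq
  set UR := U.filter (fun x => |(x.1:ℝ) - a| < R ∧ |(x.2:ℝ) - v.2| < R) with hUR
  have f1pos : ∀ y : Vtx, |(y.1:ℝ) - a| ≤ R → |(y.2:ℝ) - v.2| ≤ R → 0 ≤ F1 y := by
    intro y h1 h2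
    have := ext_le (B := B) (f := fun w => - fR A y w) (u := fun _ => 0) (fun x _ => (avg_const 0 x).le)
      (fun x hx w hw hn => by
        have hx' := (mem_Bx.1 hx).2
        have hn' := nbr_abs hn v
        have c1 : |(y.1:ℝ) - w.1| ≤ 2 * R := by
          have e : (y.1:ℝ) - w.1 = (y.1 - a) - (v.1 - a) - (w.1 - v.1) := by ring
          rw [e]
          refine (abs_sub _ _).trans ?_
          have := abs_sub ((y.1:ℝ) - a) (v.1 - a)
          linarith
        have c2 : |(y.2:ℝ) - w.2| ≤ 2 * R := by
          have e : (y.2:ℝ) - w.2 = (y.2 - v.2) - (w.2 - v.2) := by ring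
          rw [e]
          refine (abs_sub _ _).trans ?_
          linarith
        have : 0 ≤ fR A y w := fR_nonneg (by linarith [sq_le_of_abs c1, sq_le_of_abs c2])
        linarith) hv
    have e : (fun w => - fR A y w) = - fR A y := rfl
    rw [e, map_neg, Pi.neg_apply] at this
    simp only [hF1]; linarith
  have qpos : ∀ y : Vtx, |(y.1:ℝ) - a| ≤ R → 0 ≤ q y := by
    intro y h1
    apply div_nonneg _ (by positivity)
    have := abs_nonneg ((y.1:ℝ) - a)
    have e := sq_abs ((y.1:ℝ) - a)
    nlinarith [sq_nonneg ((y.2:ℝ) - v.2)]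
  -- main comparison
  have hmain : ∀ x ∈ UR, u x - F1 x - Cmax N * q x ≤ 0 := by
    apply max_principle UR (fun x => u x - F1 x - Cmax N * q x)
    · intro x hx
      have hxU : x ∈ U := (Finset.mem_filter.1 hx).1
      rw [avg_sub (fun x => u x - F1 x) (fun x => Cmax N * q x), avg_sub, avg_mul]
      have hu1 : u x = avg u x + ext B (fun y => if x = y then Real.pi / 2 else 0) v := by
        have h1 := lin_avg (evL (ext B) v) G x
        have h2 : (fun y => avg (fun z => G z y) x)
            = G x - fun y => if x = y then Real.pi / 2 else 0 := by
          funext y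
          rw [Pi.sub_apply, h.eq x hxU y]; ring
        rw [h2, map_sub] at h1
        simp only [evL_apply] at h1
        simp only [hu]; linarith
      have hf1 : avg F1 x + ext B (fun y => if x = y then Real.pi / 2 else 0) v ≤ F1 x := by
        have h1 := lin_avg (evL (ext B) v) (fR A) x
        simp only [evL_apply] at h1
        simp only [hF1]
        rw [h1, ← Pi.add_apply (ext B _) (ext B _), ← map_add]
        apply ext_mono
        intro y
        exact fR_super A x y
      have hq1 : avg q x = q x := by
        have hne : (x.1:ℝ) - a ≠ 0 := by
          have := ha x hxU
          intro h0
          apply this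
          have : (x.1:ℝ) = a := by linarith
          exact_mod_cast this
        simp only [avg, hq]
        push_cast
        rcases lt_or_gt_of_ne (ha x hxU) with hlt | hgt
        · have k : (x.1:ℝ) + 1 ≤ a := by exact_mod_cast hlt
          rw [abs_of_nonpos (by linarith : (x.1:ℝ) + 1 - a ≤ 0),
            abs_of_nonpos (by linarith : (x.1:ℝ) - 1 - a ≤ 0),
            abs_of_nonpos (by linarith : (x.1:ℝ) - a ≤ 0)]
          field_simp; ring
        · have k : (a:ℝ) + 1 ≤ x.1 := by exact_mod_cast hgt
          rw [abs_of_nonneg (by linarith : 0 ≤ (x.1:ℝ) + 1 - a),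
            abs_of_nonneg (by linarith : 0 ≤ (x.1:ℝ) - 1 - a),
            abs_of_nonneg (by linarith : 0 ≤ (x.1:ℝ) - a)]
          field_simp; ring
      rw [hq1]; linarith
    · intro x hx y hy hn
      have hx' := (Finset.mem_filter.1 hx).2
      have toint : ∀ (p c : ℤ), |(p:ℝ) - c| < R ↔ |p - c| < (R:ℤ) := by
        intro p c
        rw [← @Int.cast_lt ℝ]; push_cast; rfl
      have toint' : ∀ (p c : ℤ), |(p:ℝ) - c| ≤ R ↔ |p - c| ≤ (R:ℤ) := by
        intro p c
        rw [← @Int.cast_le ℝ]; push_cast; rfl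
      have b1 : |(y.1:ℝ) - a| ≤ R := by
        have := hx'.1
        rw [toint] at this; rw [toint']
        rw [abs_lt] at this; rw [abs_le]
        rcases hn with rfl | rfl | rfl | rfl <;> constructor <;> dsimp only <;> omega
      have b2 : |(y.2:ℝ) - v.2| ≤ R := by
        have := hx'.2
        rw [toint] at this; rw [toint']
        rw [abs_lt] at this; rw [abs_le]
        rcases hn with rfl | rfl | rfl | rfl <;> constructor <;> dsimp only <;> omega
      have p1 := f1pos y b1 b2
      have p2 := qpos y b1
      by_cases hyU : y ∈ U
      · have hu2 : u y ≤ Cmax N := ext_le_const (fun z => h.le_Cmax hU y z) v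
        have q1 : 1 ≤ q y := by
          have hnot : ¬ (|(y.1:ℝ) - a| < R ∧ |(y.2:ℝ) - v.2| < R) := fun hh =>
            hy (Finset.mem_filter.2 ⟨hyU, hh⟩)
          simp only [hq]
          rw [le_div_iff₀ (by positivity), one_mul]
          have e := sq_abs ((y.1:ℝ) - a)
          have e' := sq_abs ((y.2:ℝ) - v.2)
          by_cases hh : |(y.1:ℝ) - a| < R
          · have : |(y.2:ℝ) - v.2| = R := le_antisymm b2 (not_lt.1 fun h2 => hnot ⟨hh, h2⟩)
            rw [this] at e'
            nlinarith [abs_nonneg ((y.1:ℝ) - a)]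
          · have : |(y.1:ℝ) - a| = R := le_antisymm b1 (not_lt.1 hh)
            rw [this] at e ⊢
            nlinarith [sq_nonneg ((y.2:ℝ) - v.2)]
        nlinarith
      · have : u y = 0 := by simp [hu, Gz y hyU]
        nlinarith
  -- conclusion
  have := ext_le (B := B) (f := u) (u := fun _ => C0 * Real.log (72 * t ^ 2) + 5 * Cmax N / t)
    (fun x _ => (avg_const _ x).le) (fun z hz x hx hn => by
      by_cases hxU : x ∈ U
      swap
      · have : u x = 0 := by simp [hu, Gz x hxU]
        rw [this]; exact hb0
      have hz' := (mem_Bx.1 hz).2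
      have hn' := nbr_abs hn v
      have b1 : |(x.1:ℝ) - v.1| ≤ r := by linarith
      have b2 : |(x.2:ℝ) - v.2| ≤ r := by linarith
      have b3 : |(x.1:ℝ) - a| ≤ 2 * r := by
        have e : (x.1:ℝ) - a = (x.1 - v.1) + (v.1 - a) := by ring
        rw [e]
        refine (abs_add_le _ _).trans ?_
        linarith
      have hxUR : x ∈ UR := Finset.mem_filter.2 ⟨hxU, by linarith, by linarith⟩
      have hm := hmain x hxUR
      have hfar : r ^ 2 / 2 ≤ ((x.1:ℝ) - v.1) ^ 2 + ((x.2:ℝ) - v.2) ^ 2 + 1 := by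
        have e := sq_abs ((x.1:ℝ) - v.1)
        have e' := sq_abs ((x.2:ℝ) - v.2)
        have hnot : ¬ (|(x.1:ℝ) - v.1| + 1 ≤ r ∧ |(x.2:ℝ) - v.2| + 1 ≤ r) := fun hh =>
          hx (mem_Bx.2 ⟨hU hxU, hh⟩)
        by_cases hh : |(x.1:ℝ) - v.1| + 1 ≤ r
        · have : r < |(x.2:ℝ) - v.2| + 1 := not_le.1 fun h2 => hnot ⟨hh, h2⟩
          nlinarith [sq_nonneg (r - 2), sq_nonneg ((x.1:ℝ) - v.1)]
        · have : r < |(x.1:ℝ) - v.1| + 1 := not_le.1 hh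
          nlinarith [sq_nonneg (r - 2), sq_nonneg ((x.2:ℝ) - v.2)]
      have hF : F1 x ≤ C0 * Real.log (72 * t ^ 2) := by
        have h1 : F1 x ≤ fR A x v :=
          ext_le (u := fR A x) (fun y _ => fR_super' A x y) (fun _ _ _ _ _ => le_rfl) hv
        refine h1.trans ?_
        rw [fR, lg_sub]
        apply mul_le_mul_of_nonneg_left _ hC.le
        rw [← Real.log_div (by positivity) (by positivity)]
        apply Real.log_le_log (by positivity)
        rw [div_le_iff₀ (by positivity)]
        have : A ≤ 9 * (R:ℝ) ^ 2 := by rw [hA]; nlinarith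
        have : (R:ℝ) ^ 2 ≤ 4 * (r * t) ^ 2 := by
          have := pow_le_pow_left₀ hRpos.le hR2 2
          linarith [this, (by ring : (2 * (r * t)) ^ 2 = 4 * (r * t) ^ 2)]
        calc A ≤ 72 * t ^ 2 * (r ^ 2 / 2) := by nlinarith
          _ ≤ _ := by gcongr
      have hQ : q x ≤ 5 / t := by
        have e' := sq_abs ((x.2:ℝ) - v.2)
        have s2 := sq_le_of_abs b2
        have : q x ≤ (r ^ 2 + 2 * R * (2 * r)) / R ^ 2 := by
          simp only [hq]
          gcongr
          nlinarith [sq_nonneg ((x.1:ℝ) - a)]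
        refine this.trans ?_
        rw [div_le_div_iff₀ (by positivity) (by positivity)]
        have k1 : r * (r * t) ≤ r * R := by gcongr
        have k2 : r * R ≤ R * R := by gcongr; linarith
        have k3 : (r * t) * R ≤ R * R := by gcongr
        nlinarith
      have hQ2 : Cmax N * q x ≤ 5 * Cmax N / t := by
        calc Cmax N * q x ≤ Cmax N * (5 / t) := by gcongr
          _ = _ := by ring
      linarith) hv
  exact this

end Grn


noncomputable section Strip
open MeasureTheory ProbabilityTheory

lemma ext_tau {B B' : Finset Vtx} (τ : Vtx → Vtx)
    (hτ : ∀ (f : FieldSp) (x : Vtx), avg (fun z => f (τ z)) x = avg f (τ x))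
    (hB : ∀ w, w ∈ B ↔ τ w ∈ B') (f : FieldSp) (w : Vtx) :
    ext B' f (τ w) = ext B (fun z => f (τ z)) w := by
  have := ext_eq_all (B := B) (f := fun z => f (τ z)) (u := fun z => ext B' f (τ z))
    (fun x hx => by rw [hτ (ext B' f)]; exact ext_harm f ((hB x).1 hx))
    (fun y hy => by rw [ext_off f (fun h => hy ((hB y).2 h))])
  rw [this]

lemma ext_congr_bd {B : Finset Vtx} {f g : FieldSp} {v : Vtx} (hv : f v = g v)
    (h : ∀ x ∈ B, ∀ y, y ∉ B → Nbr x y → f y = g y) : ext B f v = ext B g v := by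
  by_cases hvB : v ∈ B
  · refine ext_eq (fun x hx => ext_harm g hx) (fun x hx y hy hn => ?_) hvB
    rw [ext_off g hy]; exact h x hx y hy hn
  · rw [ext_off _ hvB, ext_off _ hvB, hv]

def BJ (N : ℕ) (r : ℕ → ℝ) (j : ℕ) (v : Vtx) : Finset Vtx :=
  if j = 0 then intr (VN N) else Bx N (r j) v

lemma BJ_sub {N : ℕ} {r : ℕ → ℝ} {j : ℕ} {v : Vtx} : BJ N r j v ⊆ intr (VN N) := by
  unfold BJ; split_ifs
  · exact subset_rfl
  · exact Bx_sub

def UU (N m : ℕ) : Finset Vtx := (intr (VN N)).filter fun x => ¬ (m : ℤ) ∣ x.1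

lemma UU_sub {N m : ℕ} : UU N m ⊆ intr (VN N) := Finset.filter_subset _ _

lemma mem_UU {N m : ℕ} {x : Vtx} : x ∈ UU N m ↔ x ∈ intr (VN N) ∧ ¬ (m : ℤ) ∣ x.1 := by simp [UU]

def TT (N m n K : ℕ) : Finset Vtx := (VN N).filter fun v => v.1 % m < n ∧ v.1 / m < K

lemma mem_TT {N m n K : ℕ} {v : Vtx} : v ∈ TT N m n K ↔ v ∈ VN N ∧ v.1 % m < n ∧ v.1 / m < K := by
  simp [TT]

def SS (N m n K : ℕ) (k : ℤ) : Finset Vtx := (TT N m n K).filter fun v => v.1 / m = k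

lemma mem_SS {N m n K : ℕ} {k : ℤ} {v : Vtx} : v ∈ SS N m n K k ↔ v ∈ TT N m n K ∧ v.1 / m = k := by
  simp [SS]

def sml (m : ℕ) (r : ℕ → ℝ) (j : ℕ) (v : Vtx) : Prop := j = 0 ∨ ((v.1 % (m:ℤ) : ℤ) : ℝ) + 1 ≤ r j

/-- residue/quotient description -/
lemma divmod {m : ℕ} (hm : 0 < m) (a : ℤ) :
    a = m * (a / m) + a % m ∧ 0 ≤ a % m ∧ a % m < m :=
  ⟨(Int.mul_ediv_add_emod a m).symm, Int.emod_nonneg _ (by omega), Int.emod_lt_of_pos _ (by omega)⟩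

lemma divmod_unique {m : ℕ} (hm : 0 < m) {a q s : ℤ} (h : a = m * q + s) (h0 : 0 ≤ s) (h1 : s < m) :
    a / m = q ∧ a % m = s := by
  have hm' : (m:ℤ) ≠ 0 := by omega
  subst h
  constructor
  · rw [Int.add_comm, Int.add_mul_ediv_left _ _ hm', Int.ediv_eq_zero_of_lt h0 h1, zero_add]
  · rw [Int.add_comm, Int.add_mul_emod_self_left, Int.emod_eq_of_lt h0 h1]

section geom
variable {N m n K : ℕ} {r : ℕ → ℝ} {j : ℕ} {v : Vtx}

lemma q_nonneg (hv : v ∈ VN N) : 0 ≤ v.1 / (m:ℤ) := Int.ediv_nonneg (mem_VN.1 hv).1 (by omega)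

/-- small boxes stay within the block -/
lemma abs_block (hm : 2 * n + 1 ≤ m) (hv : v ∈ TT N m n K) {ρ : ℝ}
    (hr : ρ < ((v.1 % (m:ℤ) : ℤ) : ℝ) + 1) {a : ℤ} (ha : |(a:ℝ) - v.1| + 1 ≤ ρ) :
    a / (m:ℤ) = v.1 / m ∧ 1 ≤ a % m ∧ a % m + 1 < m := by
  have hm0 : 0 < m := by omega
  obtain ⟨hv1, hv2, hv3⟩ := mem_TT.1 hv
  obtain ⟨e1, e2, e3⟩ := divmod hm0 v.1
  set d := v.1 % (m:ℤ)
  set q := v.1 / (m:ℤ)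
  have h1 : |(a:ℝ) - v.1| < d := by linarith
  have h2 : |a - v.1| < d := by
    have : ((|a - v.1| : ℤ) : ℝ) < d := by push_cast; exact h1
    exact_mod_cast this
  rw [abs_lt] at h2
  have := divmod_unique hm0 (a := a) (q := q) (s := a - m * q) (by ring) (by linarith) (by linarith [e3, h2.2, e1, hv2, (by exact_mod_cast hm : (2 * (n:ℤ) + 1 ≤ m))])
  refine ⟨this.1, ?_, ?_⟩
  · rw [this.2]; linarith [h2.1]
  · rw [this.2]; linarith [e3, h2.2, e1, hv2, (by exact_mod_cast hm : (2 * (n:ℤ) + 1 ≤ m))]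

lemma block_intr (hK : K * m ≤ N) (hm0 : 0 < m) {a q : ℤ} (hq0 : 0 ≤ q) (hq : q < K) (h1 : a / (m:ℤ) = q)
    (h2 : 1 ≤ a % m) : 1 ≤ a ∧ a + 1 ≤ N := by
  obtain ⟨e1, e2, e3⟩ := divmod hm0 a
  rw [h1] at e1
  have hK' : (K:ℤ) * m ≤ N := by exact_mod_cast hK
  have hmm : (0:ℤ) < m := by exact_mod_cast hm0
  constructor
  · have : 0 ≤ (m:ℤ) * q := by positivity
    linarith
  · have : (m:ℤ) * q + m ≤ K * m := by nlinarith
    linarith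

lemma mem_Bx_T (hm : 2 * n + 1 ≤ m) (hK : K * m ≤ N) (hv : v ∈ TT N m n K) {ρ : ℝ}
    (hr : ρ < ((v.1 % (m:ℤ) : ℤ) : ℝ) + 1) {w : Vtx} :
    w ∈ Bx N ρ v ↔ (1 ≤ w.2 ∧ w.2 + 1 ≤ N) ∧ |(w.1:ℝ) - v.1| + 1 ≤ ρ ∧ |(w.2:ℝ) - v.2| + 1 ≤ ρ := by
  rw [mem_Bx, mem_intr_VN]
  constructor
  · rintro ⟨a, b⟩; exact ⟨a.2.2, b⟩
  · rintro ⟨a, b⟩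
    have h := abs_block hm hv hr b.1
    have hv' := mem_TT.1 hv
    have := block_intr hK (by omega) (q_nonneg hv'.1) hv'.2.2 h.1 h.2.1
    exact ⟨⟨this.1, this.2, a⟩, b⟩

lemma BJ_sub_UU (hm : 2 * n + 1 ≤ m) (hv : v ∈ TT N m n K) (hj : ¬ sml m r j v) :
    BJ N r j v ⊆ UU N m := by
  unfold sml at hj
  push Not at hj
  intro w hw
  rw [BJ, if_neg hj.1] at hw
  rw [mem_UU]
  refine ⟨Bx_sub hw, fun hd => ?_⟩
  have := abs_block hm hv hj.2 (mem_Bx.1 hw).2.1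
  rw [Int.emod_eq_zero_of_dvd hd] at this
  omega

end geom

/-- block permutation -/
def th (m : ℕ) (k : ℤ) (x : Vtx) : Vtx := (m * Equiv.swap 0 k (x.1 / m) + x.1 % m, x.2)

section theta
variable {N m n K : ℕ} {r : ℕ → ℝ} {j : ℕ} {k : ℤ}

lemma th_fst (hm0 : 0 < m) (x : Vtx) : (th m k x).1 / m = Equiv.swap 0 k (x.1 / m) ∧
    (th m k x).1 % m = x.1 % m := by
  obtain ⟨e1, e2, e3⟩ := divmod hm0 x.1
  exact divmod_unique hm0 rfl e2 e3

lemma th_th (hm0 : 0 < m) (x : Vtx) : th m k (th m k x) = x := by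
  obtain ⟨h1, h2⟩ := th_fst (k := k) hm0 x
  obtain ⟨e1, e2, e3⟩ := divmod hm0 x.1
  have : th m k (th m k x) = (m * Equiv.swap 0 k ((th m k x).1 / m) + (th m k x).1 % m, x.2) := rfl
  rw [this, h1, h2, Equiv.swap_apply_self]
  ext
  · exact e1.symm
  · rfl

lemma th_add (hm0 : 0 < m) {x y : Vtx} (h : y.1 / (m:ℤ) = x.1 / m) :
    th m k y = y + (th m k x - x) := by
  obtain ⟨e1, e2, e3⟩ := divmod hm0 x.1
  obtain ⟨f1, f2, f3⟩ := divmod hm0 y.1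
  ext
  · simp only [th, Prod.fst_add, Prod.fst_sub, h]
    rw [h] at f1; linarith
  · simp [th]

lemma swap_cases (k q : ℤ) : (q = 0 ∧ Equiv.swap 0 k q = k) ∨ (q = k ∧ Equiv.swap 0 k q = 0) ∨
    Equiv.swap 0 k q = q := by
  by_cases h : q = 0
  · subst h; left; simp
  · by_cases h' : q = k
    · subst h'; right; left; simp
    · right; right; exact Equiv.swap_apply_of_ne_of_ne h h'

lemma th_VN (hm0 : 0 < m) (hK : K * m ≤ N) (hk0 : 0 ≤ k) (hk : k < K) {x : Vtx} (hx : x ∈ VN N) :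
    th m k x ∈ VN N := by
  have hx' := mem_VN.1 hx
  obtain ⟨e1, e2, e3⟩ := divmod hm0 x.1
  have hK' : (K:ℤ) * m ≤ N := by exact_mod_cast hK
  have hmm : (0:ℤ) < m := by exact_mod_cast hm0
  rw [mem_VN]
  have h0 : 0 ≤ (m:ℤ) * k := by positivity
  have h1 : (m:ℤ) * k + m ≤ K * m := by nlinarith
  simp only [th]
  refine ⟨?_, ?_, hx'.2.2⟩
  · rcases swap_cases k (x.1 / m) with h | h | h
    · rw [h.2]; linarith
    · rw [h.2]; linarith
    · rw [h]; linarith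
  · rcases swap_cases k (x.1 / m) with h | h | h
    · rw [h.2]; linarith
    · rw [h.2]; linarith
    · rw [h]; linarith

lemma th_UU (hm0 : 0 < m) (hK : K * m ≤ N) (hk0 : 0 ≤ k) (hk : k < K) {x : Vtx} (hx : x ∈ UU N m) :
    th m k x ∈ UU N m := by
  obtain ⟨h1, h2⟩ := mem_UU.1 hx
  have h3 : 1 ≤ x.1 % m := by
    have := (divmod hm0 x.1).2.1
    have : x.1 % m ≠ 0 := fun h => h2 (Int.dvd_of_emod_eq_zero h)
    omega
  obtain ⟨t1, t2⟩ := th_fst (k := k) hm0 x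
  have h4 := mem_intr_VN.1 h1
  rw [mem_UU, mem_intr_VN]
  refine ⟨?_, fun hd => ?_⟩
  · have : 1 ≤ (th m k x).1 ∧ (th m k x).1 + 1 ≤ N := by
      rcases swap_cases k (x.1 / m) with h | h | h
      · exact block_intr hK hm0 hk0 hk (by rw [t1, h.2]) (by rw [t2]; exact h3)
      · exact block_intr hK hm0 le_rfl (lt_of_le_of_lt hk0 hk) (by rw [t1, h.2]) (by rw [t2]; exact h3)
      · obtain ⟨e1, e2, e3⟩ := divmod hm0 x.1
        have : (th m k x).1 = x.1 := by simp only [th, h]; exact e1.symm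
        rw [this]; exact ⟨h4.1, h4.2.1⟩
    exact ⟨this.1, this.2, h4.2.2⟩
  · have := Int.emod_eq_zero_of_dvd hd
    omega

lemma th_UU_iff (hm0 : 0 < m) (hK : K * m ≤ N) (hk0 : 0 ≤ k) (hk : k < K) {x : Vtx} :
    th m k x ∈ UU N m ↔ x ∈ UU N m := by
  refine ⟨fun h => ?_, th_UU hm0 hK hk0 hk⟩
  have := th_UU hm0 hK hk0 hk h
  rwa [th_th hm0] at this

lemma th_TT (hm0 : 0 < m) (hK : K * m ≤ N) (hk0 : 0 ≤ k) (hk : k < K) {x : Vtx} (hx : x ∈ TT N m n K) :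
    th m k x ∈ TT N m n K := by
  obtain ⟨h1, h2, h3⟩ := mem_TT.1 hx
  obtain ⟨t1, t2⟩ := th_fst (k := k) hm0 x
  rw [mem_TT, t1, t2]
  refine ⟨th_VN hm0 hK hk0 hk h1, h2, ?_⟩
  rcases swap_cases k (x.1 / m) with h | h | h
  · rw [h.2]; exact hk
  · rw [h.2]; omega
  · rw [h]; exact h3

lemma Gr_th (hm0 : 0 < m) (hK : K * m ≤ N) (hk0 : 0 ≤ k) (hk : k < K) {G : Vtx → Vtx → ℝ}
    (h : IsGr (UU N m) G) (x y : Vtx) : G (th m k x) (th m k y) = G x y := by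
  by_cases hx : x ∈ UU N m
  swap
  · rw [h.zero x y (Or.inl hx), h.zero _ _ (Or.inl (fun h => hx ((th_UU_iff hm0 hK hk0 hk).1 h)))]
  symm
  refine h.unique y (fun z => G (th m k z) (th m k y)) (fun z hz => ?_) (fun z _ w hw _ => ?_) x hx
  swap
  · exact h.zero _ _ (Or.inl (fun h => hw ((th_UU_iff hm0 hK hk0 hk).1 h)))
  have hzU := th_UU hm0 hK hk0 hk hz
  rw [h.eq _ hzU]
  have e : (th m k z = th m k y) ↔ z = y := by
    constructor
    · intro e
      have := congrArg (th m k) e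
      rwa [th_th hm0, th_th hm0] at this
    · rintro rfl; rfl
  simp only [e]
  congr 1
  have hz3 : 1 ≤ z.1 % m := by
    have := (divmod hm0 z.1).2.1
    have : z.1 % m ≠ 0 := fun h => (mem_UU.1 hz).2 (Int.dvd_of_emod_eq_zero h)
    omega
  obtain ⟨e1, e2, e3⟩ := divmod hm0 z.1
  obtain ⟨t1, t2⟩ := th_fst (k := k) hm0 z
  have a3 : th m k (z.1, z.2 + 1) = ((th m k z).1, (th m k z).2 + 1) := rfl
  have a4 : th m k (z.1, z.2 - 1) = ((th m k z).1, (th m k z).2 - 1) := rfl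
  have a2 : th m k (z.1 - 1, z.2) = ((th m k z).1 - 1, (th m k z).2) := by
    have := (divmod_unique hm0 (a := z.1 - 1) (q := z.1 / m) (s := z.1 % m - 1) (by linarith)
      (by linarith) (by linarith)).1
    have := th_add (k := k) hm0 (x := z) (y := (z.1 - 1, z.2)) this
    rw [this]; ext <;> simp
  have a1 : G (th m k (z.1 + 1, z.2)) (th m k y) = G ((th m k z).1 + 1, (th m k z).2) (th m k y) := by
    by_cases hl : z.1 % m + 1 < m
    · have := (divmod_unique hm0 (a := z.1 + 1) (q := z.1 / m) (s := z.1 % m + 1) (by linarith)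
        (by linarith) (by linarith)).1
      have := th_add (k := k) hm0 (x := z) (y := (z.1 + 1, z.2)) this
      rw [this]; congr 1; ext <;> simp
      ring
    · have hl' : z.1 % m + 1 = m := by omega
      have d1 : (m:ℤ) ∣ z.1 + 1 := ⟨z.1 / m + 1, by linarith⟩
      have d2 : (m:ℤ) ∣ (th m k z).1 + 1 := by
        obtain ⟨f1, _, _⟩ := divmod hm0 (th m k z).1
        refine ⟨(th m k z).1 / m + 1, ?_⟩
        rw [t2] at f1; linarith
      rw [h.zero _ _ (Or.inl ?_), h.zero _ _ (Or.inl ?_)]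
      · intro hh; exact (mem_UU.1 hh).2 d2
      · rw [th_UU_iff hm0 hK hk0 hk]
        intro hh; exact (mem_UU.1 hh).2 d1
  simp only [avg, a1, a2, a3, a4]

/-- composition with the block permutation -/
def Th (m : ℕ) (k : ℤ) : FieldSp →ₗ[ℝ] FieldSp := LinearMap.funLeft ℝ ℝ (th m k)

lemma Th_apply (f : FieldSp) (x : Vtx) : Th m k f x = f (th m k x) := rfl

lemma law_th (hm0 : 0 < m) (hK : K * m ≤ N) (hk0 : 0 ≤ k) (hk : k < K) {G : Vtx → Vtx → ℝ}
    {P : Measure FieldSp} (h : GF N G P) :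
    P.map (fun f => rs N (prj (UU N m) f)) = P.map (fun f => rs N (Th m k (prj (UU N m) f))) := by
  refine h.law_eq h (A := prj (UU N m)) (A' := (Th m k).comp (prj (UU N m))) (locM_prj UU_sub) ?_ ?_
  · intro f g hfg w hw
    exact locM_prj UU_sub f g hfg _ (th_VN hm0 hK hk0 hk hw)
  · intro L _
    have e : L.comp ((Th m k).comp (prj (UU N m))) = (L.comp (Th m k)).comp (prj (UU N m)) := rfl
    rw [e, Cv_prj h.gr UU_sub, Cv_prj h.gr UU_sub]
    unfold Cv
    simp only [LinearMap.comp_apply]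
    congr 1
    funext x
    rw [Th_apply]
    congr 1
    funext y
    rw [Th_apply, Gr_th hm0 hK hk0 hk (isGr_GrU h.gr UU_sub)]

lemma sml_th (hm0 : 0 < m) (v : Vtx) : sml m r j (th m k v) ↔ sml m r j v := by
  unfold sml
  rw [(th_fst (k := k) hm0 v).2]

lemma avg_shift (s : Vtx) (f : FieldSp) (x : Vtx) : avg (fun z => f (z + s)) x = avg f (x + s) := by
  simp only [avg, Prod.fst_add, Prod.snd_add]
  have : s = (s.1, s.2) := rfl
  rw [this]
  simp only [Prod.mk_add_mk]
  ring_nf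

lemma ext_BJ_th (hm : 2 * n + 1 ≤ m) (hK : K * m ≤ N) (hk0 : 0 ≤ k) (hk : k < K) {v : Vtx}
    (hv : v ∈ TT N m n K) (hj : ¬ sml m r j v) (f : FieldSp) :
    ext (BJ N r j (th m k v)) f (th m k v) = ext (BJ N r j v) (Th m k f) v := by
  have hm0 : 0 < m := by omega
  have hj' := hj
  unfold sml at hj
  push Not at hj
  have hv' := th_TT hm0 hK hk0 hk hv
  set s := th m k v - v with hs
  have e : th m k v = v + s := by rw [hs]; abel
  have hmod := (th_fst (k := k) hm0 v).2
  have s2 : s.2 = 0 := by simp [hs, th]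
  have hB : ∀ w, w ∈ BJ N r j v ↔ w + s ∈ BJ N r j (th m k v) := by
    intro w
    rw [BJ, BJ, if_neg hj.1, if_neg hj.1, mem_Bx_T hm hK hv hj.2,
      mem_Bx_T hm hK hv' (by rw [hmod]; exact hj.2)]
    rw [e]
    simp only [Prod.fst_add, Prod.snd_add, s2, add_zero]
    push_cast
    have : (w.1:ℝ) + s.1 - (v.1 + s.1) = w.1 - v.1 := by ring
    rw [this]
  have h1 := ext_tau (fun z => z + s) (avg_shift s) hB f v
  simp only [← e] at h1
  rw [h1]
  apply ext_congr_bd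
  · rw [Th_apply, e]
  · intro x hx y hy hn
    rw [Th_apply]
    congr 1
    rw [BJ, if_neg hj.1] at hx
    have hb := abs_block hm hv hj.2 (mem_Bx.1 hx).2.1
    symm
    apply th_add hm0
    obtain ⟨e1, e2, e3⟩ := divmod hm0 x.1
    rw [← hb.1]
    rcases hn with rfl | rfl | rfl | rfl <;> dsimp only
    · exact (divmod_unique hm0 (q := x.1 / m) (s := x.1 % m + 1) (by linarith) (by linarith) (by linarith)).1
    · exact (divmod_unique hm0 (q := x.1 / m) (s := x.1 % m - 1) (by linarith) (by linarith) (by linarith)).1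

end theta
end Strip


noncomputable section Core
open MeasureTheory ProbabilityTheory

variable {N m n K M : ℕ} {r : ℕ → ℝ} {G : Vtx → Vtx → ℝ} {P : Measure FieldSp}

lemma Cv_split_le {U : Finset Vtx} (hG : IsGr (intr (VN N)) G) (hU : U ⊆ intr (VN N))
    {L : FieldSp →ₗ[ℝ] ℝ} (hL : Loc N L) :
    Cv G (L.comp (ext U)) (L.comp (ext U)) ≤ Cv G L L := by
  have e : L = L.comp (prj U) + L.comp (ext U) := by
    ext f : 1
    simp only [LinearMap.add_apply, LinearMap.comp_apply, ← map_add]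
    congr 1
    funext x
    simp [prj_apply]
  have l1 := (locM_prj hU).comp hL
  have l2 := (locM_ext hU).comp hL
  have h := Cv_add_self l1 l2 hG (Cv_cross hG hU L L)
  rw [← e] at h
  rw [h]
  have := Cv_nonneg l1 intr_sub hG
  linarith

lemma Cv_ext_le_Cmax {B : Finset Vtx} (hG : IsGr (intr (VN N)) G) (hB : B ⊆ intr (VN N)) (v : Vtx) :
    Cv G (evL (ext B) v) (evL (ext B) v) ≤ Cmax N := by
  rw [Cv_ext hG hB]
  exact ext_le_const (fun y => hG.le_Cmax subset_rfl v y) v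

/-- the variance bound -/
def sB (N m n : ℕ) (t : ℝ) : ℝ := C0 * Real.log (72 * t ^ 2) + 5 * Cmax N / t + Cmax N * n / m

lemma sB_aux {t : ℝ} (ht : 3 ≤ t) : 0 < C0 * Real.log (72 * t ^ 2) + 5 * Cmax N / t ∧
    0 ≤ Cmax N * n / m := by
  have h1 := C0_pos
  have h2 := Cmax_nonneg N
  have : 0 < Real.log (72 * t ^ 2) := Real.log_pos (by nlinarith)
  constructor
  · have : 0 < C0 * Real.log (72 * t ^ 2) := by positivity
    have : 0 ≤ 5 * Cmax N / t := by positivity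
    linarith
  · positivity

lemma ext_intr_zero (f : FieldSp) {v : Vtx} (hf : ∀ y, y ∉ intr (VN N) → f y = 0) :
    ext (intr (VN N)) f v = 0 := by
  rw [ext_zero_of hf]; rfl

lemma gvar (hm : 2 * n + 1 ≤ m) (hG : IsGr (intr (VN N)) G) {v : Vtx} (hv : v ∈ SS N m n K 0) (j : ℕ)
    {t : ℝ} (ht : 3 ≤ t) :
    Cv G ((evL (ext (BJ N r j v)) v).comp (ext (UU N m))) ((evL (ext (BJ N r j v)) v).comp (ext (UU N m)))
      ≤ sB N m n t := by
  have hm0 : 0 < m := by omega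
  obtain ⟨hvT, hq⟩ := mem_SS.1 hv
  obtain ⟨hvV, hd, -⟩ := mem_TT.1 hvT
  have hvV' := mem_VN.1 hvV
  obtain ⟨e1, e2, e3⟩ := divmod hm0 v.1
  rw [hq] at e1
  have hv1 : v.1 % m = v.1 := by linarith
  obtain ⟨s1, s2⟩ := sB_aux (N := N) (m := m) (n := n) ht
  unfold sB
  by_cases hj : sml m r j v
  · refine (Cv_split_le hG UU_sub (loc_evext BJ_sub hvV)).trans ?_
    rcases hj with rfl | hj
    · have : BJ N r 0 v = intr (VN N) := by simp [BJ]
      rw [this, Cv_ext hG subset_rfl, ext_intr_zero _ (fun y hy => hG.zero _ _ (Or.inr hy))]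
      linarith
    · by_cases hj0 : j = 0
      · subst hj0
        have : BJ N r 0 v = intr (VN N) := by simp [BJ]
        rw [this, Cv_ext hG subset_rfl, ext_intr_zero _ (fun y hy => hG.zero _ _ (Or.inr hy))]
        linarith
      have hB : BJ N r j v = Bx N (r j) v := by simp [BJ, hj0]
      rw [hB]
      have := small_var (v := v) (r := r j) (a := 0) subset_rfl hG (fun x hx => by
        have := mem_intr_VN.1 hx; omega) (by
          rw [hv1] at hj
          have : (0:ℝ) ≤ v.1 := by exact_mod_cast hvV'.1
          simpa [abs_of_nonneg this] using hj) ht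
      linarith
  · have hsub := BJ_sub_UU hm hvT hj
    have e : (evL (ext (BJ N r j v)) v).comp (ext (UU N m)) = evL (ext (UU N m)) v := by
      ext f : 1
      simp only [LinearMap.comp_apply, evL_apply, ext_ext hsub]
    rw [e, Cv_ext hG UU_sub]
    have hCm := Cmax_nonneg N
    have key : ext (UU N m) (G v) v ≤ Cmax N * v.1 / m := by
      by_cases hvU : v ∈ UU N m
      · have hb : v ∈ (UU N m).filter (fun x : Vtx => x.1 < (m:ℤ)) := by
          simp only [Finset.mem_filter]; exact ⟨hvU, by omega⟩
        have := ext_le (B := (UU N m).filter (fun x : Vtx => x.1 < (m:ℤ))) (f := ext (UU N m) (G v))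
          (u := fun x => Cmax N * x.1 / m) ?_ ?_ hb
        · rwa [ext_ext (Finset.filter_subset _ _)] at this
        · intro x hx
          apply le_of_eq
          simp only [avg]; push_cast; ring
        · intro x hx y hy hn
          simp only [Finset.mem_filter] at hx hy
          have hx1 := mem_intr_VN.1 (mem_UU.1 hx.1).1
          have hyV : 0 ≤ y.1 := by
            rcases hn with rfl | rfl | rfl | rfl <;> dsimp only <;> omega
          have hmr : (0:ℝ) < m := by exact_mod_cast hm0
          have hyr : (0:ℝ) ≤ y.1 := by exact_mod_cast hyV
          by_cases hyi : y ∈ intr (VN N)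
          · have hym : (m:ℤ) ≤ y.1 := by
              by_contra hlt
              push Not at hlt
              apply hy
              refine ⟨mem_UU.2 ⟨hyi, fun hd => ?_⟩, hlt⟩
              have := mem_intr_VN.1 hyi
              have := Int.le_of_dvd (by omega) hd
              omega
            refine (ext_le_const (fun y => hG.le_Cmax subset_rfl v y) y).trans ?_
            rw [le_div_iff₀ hmr]
            have : (m:ℝ) ≤ y.1 := by exact_mod_cast hym
            gcongr
          · rw [ext_off _ (fun h => hyi (UU_sub h)), hG.zero _ _ (Or.inr hyi)]
            positivity
      · rw [ext_off _ hvU]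
        have : v ∉ intr (VN N) := by
          intro hi
          apply hvU
          refine mem_UU.2 ⟨hi, fun hd => ?_⟩
          have := Int.emod_eq_zero_of_dvd hd
          have := mem_intr_VN.1 hi
          omega
        rw [hG.zero _ _ (Or.inl this)]
        have hyr : (0:ℝ) ≤ v.1 := by exact_mod_cast hvV'.1
        positivity
    have h2 : Cmax N * v.1 / m ≤ Cmax N * n / m := by
      have : (v.1:ℝ) ≤ n := by exact_mod_cast (by omega : v.1 ≤ n)
      gcongr
    linarith

lemma evar (hm : 2 * n + 1 ≤ m) (hG : IsGr (intr (VN N)) G) {v : Vtx} (hv : v ∈ TT N m n K) {j : ℕ}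
    (hj : sml m r j v) {t : ℝ} (ht : 3 ≤ t) :
    Cv G ((evL (ext (BJ N r j v)) v).comp (prj (UU N m))) ((evL (ext (BJ N r j v)) v).comp (prj (UU N m)))
      ≤ sB N m n t := by
  have hm0 : 0 < m := by omega
  obtain ⟨hvV, hd, -⟩ := mem_TT.1 hv
  obtain ⟨e1, e2, e3⟩ := divmod hm0 v.1
  obtain ⟨s1, s2⟩ := sB_aux (N := N) (m := m) (n := n) ht
  have hU := isGr_GrU hG (UU_sub (m := m))
  rw [Cv_prj hG UU_sub]
  unfold sB
  by_cases hj0 : j = 0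
  · subst hj0
    have : BJ N r 0 v = intr (VN N) := by simp [BJ]
    rw [this]
    unfold Cv
    simp only [evL_apply]
    rw [ext_intr_zero]
    · linarith
    · intro y hy
      have : GrU (UU N m) G y = 0 := by
        funext z; exact hU.zero _ _ (Or.inl (fun h => hy (UU_sub h)))
      rw [this]; simp
  · have hj : ((v.1 % (m:ℤ) : ℤ) : ℝ) + 1 ≤ r j := hj.resolve_left hj0
    have hB : BJ N r j v = Bx N (r j) v := by simp [BJ, hj0]
    rw [hB]
    have := small_var (v := v) (r := r j) (a := m * (v.1 / m)) UU_sub hU (fun x hx h => by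
        apply (mem_UU.1 hx).2; rw [h]; exact dvd_mul_right _ _) (by
          have h1 : (v.1:ℝ) - ((m * (v.1 / m) : ℤ) : ℝ) = ((v.1 % (m:ℤ) : ℤ) : ℝ) := by
            rw [← Int.cast_sub]; congr 1; linarith
          rw [h1, abs_of_nonneg (by exact_mod_cast e2)]
          exact hj) ht
    linarith

end Core


noncomputable section Prob
open MeasureTheory ProbabilityTheory

lemma det_bound {S T : Finset Vtx} (Y e g : Vtx → ℝ) (hST : S ⊆ T) (hT : T.Nonempty) {β a : ℝ}
    (hβ : 0 < β) (he : ∀ v ∈ T, |e v| ≤ a) (hg : ∀ v ∈ S, |g v| ≤ a)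
    (hp : |∑ v ∈ T, Real.exp (β * Y v) / (∑ w ∈ T, Real.exp (β * Y w)) * g v| ≤ a) :
    (∑ v ∈ S, Real.exp (β * (Y v + e v + g v))) / (∑ v ∈ T, Real.exp (β * (Y v + e v + g v))) ≤
      Real.exp (4 * β * a) * ((∑ v ∈ S, Real.exp (β * Y v)) / ∑ v ∈ T, Real.exp (β * Y v)) := by
  set Z := ∑ w ∈ T, Real.exp (β * Y w) with hZ
  have hZ0 : 0 < Z := Finset.sum_pos (fun _ _ => Real.exp_pos _) hT
  have h1 : ∑ v ∈ S, Real.exp (β * (Y v + e v + g v)) ≤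
      Real.exp (2 * β * a) * ∑ v ∈ S, Real.exp (β * Y v) := by
    rw [Finset.mul_sum]
    refine Finset.sum_le_sum fun v hv => ?_
    rw [← Real.exp_add]
    apply Real.exp_le_exp.2
    have a1 := (abs_le.1 (he v (hST hv))).2
    have a2 := (abs_le.1 (hg v hv)).2
    nlinarith
  have h2 : Real.exp (- (2 * β * a)) * Z ≤ ∑ v ∈ T, Real.exp (β * (Y v + e v + g v)) := by
    have hJ := convexOn_exp.map_sum_le (t := T) (w := fun v => Real.exp (β * Y v) / Z)
      (p := fun v => β * (e v + g v)) (fun v _ => by positivity)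
      (by rw [← Finset.sum_div]; exact div_self hZ0.ne') (fun _ _ => Set.mem_univ _)
    simp only [smul_eq_mul] at hJ
    have hs : ∑ v ∈ T, Real.exp (β * (Y v + e v + g v)) =
        Z * ∑ v ∈ T, Real.exp (β * Y v) / Z * Real.exp (β * (e v + g v)) := by
      rw [Finset.mul_sum]
      refine Finset.sum_congr rfl fun v _ => ?_
      have : β * (Y v + e v + g v) = β * Y v + β * (e v + g v) := by ring
      rw [this, Real.exp_add]
      field_simp
    rw [hs, mul_comm]
    refine mul_le_mul_of_nonneg_left (le_trans (Real.exp_le_exp.2 ?_) hJ) hZ0.le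
    have e1 : ∑ v ∈ T, Real.exp (β * Y v) / Z * (β * (e v + g v)) =
        β * ∑ v ∈ T, Real.exp (β * Y v) / Z * e v + β * ∑ v ∈ T, Real.exp (β * Y v) / Z * g v := by
      rw [Finset.mul_sum, Finset.mul_sum, ← Finset.sum_add_distrib]
      refine Finset.sum_congr rfl fun v _ => by ring
    rw [e1]
    have e2 : -a ≤ ∑ v ∈ T, Real.exp (β * Y v) / Z * e v := by
      have : ∑ v ∈ T, Real.exp (β * Y v) / Z * (-a) = -a := by
        rw [← Finset.sum_mul, ← Finset.sum_div, ← hZ, div_self hZ0.ne', one_mul]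
      rw [← this]
      refine Finset.sum_le_sum fun v hv => ?_
      exact mul_le_mul_of_nonneg_left (abs_le.1 (he v hv)).1 (by positivity)
    have e3 := (abs_le.1 hp).1
    nlinarith
  have hS0 : 0 ≤ ∑ v ∈ S, Real.exp (β * Y v) := Finset.sum_nonneg fun _ _ => (Real.exp_pos _).le
  have hX : 0 < Real.exp (- (2 * β * a)) * Z := by positivity
  calc _ ≤ (Real.exp (2 * β * a) * ∑ v ∈ S, Real.exp (β * Y v)) / (Real.exp (- (2 * β * a)) * Z) :=
        div_le_div₀ (by positivity) h1 hX h2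
    _ = _ := by
      rw [Real.exp_neg]
      have : Real.exp (4 * β * a) = Real.exp (2 * β * a) * Real.exp (2 * β * a) := by
        rw [← Real.exp_add]; ring_nf
      rw [this]
      field_simp

section defs
variable (M : ℕ) (κ : ℕ → ℝ) (N m : ℕ) (r : ℕ → ℝ)

def PSL (v : Vtx) : FieldSp →ₗ[ℝ] ℝ := ∑ j ∈ Finset.range (M + 1), κ j • evL (ext (BJ N r j v)) v

def YL (v : Vtx) : FieldSp →ₗ[ℝ] ℝ :=
  ∑ j ∈ Finset.range (M + 1), if sml m r j v then 0 else κ j • evL (ext (BJ N r j v)) v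

def EL (v : Vtx) : FieldSp →ₗ[ℝ] ℝ :=
  ∑ j ∈ Finset.range (M + 1), if sml m r j v then κ j • evL (ext (BJ N r j v)) v else 0

def ka : ℝ := ∑ j ∈ Finset.range (M + 1), |κ j|

def WW (β : ℝ) (S : Finset Vtx) (f : FieldSp) : ℝ := ∑ v ∈ S, Real.exp (β * YL M κ N m r v f)
end defs

variable {M : ℕ} {κ : ℕ → ℝ} {N m n K : ℕ} {r : ℕ → ℝ} {G : Vtx → Vtx → ℝ} {P : Measure FieldSp} {β : ℝ}

lemma PSL_apply (v : Vtx) (f : FieldSp) :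
    PSL M κ N r v f = ∑ j ∈ Finset.range (M + 1), κ j * ext (BJ N r j v) f v := by
  simp [PSL, LinearMap.sum_apply]

lemma YL_apply (v : Vtx) (f : FieldSp) : YL M κ N m r v f =
    ∑ j ∈ Finset.range (M + 1), if sml m r j v then 0 else κ j * ext (BJ N r j v) f v := by
  simp only [YL, LinearMap.sum_apply]
  refine Finset.sum_congr rfl fun j _ => ?_
  split_ifs <;> simp

lemma EL_apply (v : Vtx) (f : FieldSp) : EL M κ N m r v f =
    ∑ j ∈ Finset.range (M + 1), if sml m r j v then κ j * ext (BJ N r j v) f v else 0 := by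
  simp only [EL, LinearMap.sum_apply]
  refine Finset.sum_congr rfl fun j _ => ?_
  split_ifs <;> simp

lemma PSL_eq (v : Vtx) (f : FieldSp) : PSL M κ N r v f = YL M κ N m r v f + EL M κ N m r v f := by
  rw [PSL_apply, YL_apply, EL_apply, ← Finset.sum_add_distrib]
  refine Finset.sum_congr rfl fun j _ => ?_
  split_ifs <;> simp

lemma loc_PSL {v : Vtx} (hv : v ∈ VN N) : Loc N (PSL M κ N r v) := fun f g h => by
  rw [PSL_apply, PSL_apply]
  refine Finset.sum_congr rfl fun j _ => ?_
  rw [ext_local BJ_sub h v hv]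

lemma loc_YL {v : Vtx} (hv : v ∈ VN N) : Loc N (YL M κ N m r v) := fun f g h => by
  rw [YL_apply, YL_apply]
  refine Finset.sum_congr rfl fun j _ => ?_
  rw [ext_local BJ_sub h v hv]

lemma decomp (U : Finset Vtx) (v : Vtx) (f : FieldSp) : PSL M κ N r v f =
    YL M κ N m r v (prj U f) + EL M κ N m r v (prj U f) + PSL M κ N r v (ext U f) := by
  rw [← PSL_eq, ← map_add]
  congr 1
  funext x
  simp [prj_apply]

lemma sum_abs_le {x : ℕ → ℝ} {t : ℝ} (h : ∀ j ∈ Finset.range (M + 1), |x j| ≤ |κ j| * t) :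
    |∑ j ∈ Finset.range (M + 1), x j| ≤ ka M κ * t := by
  refine (Finset.abs_sum_le_sum_abs _ _).trans ?_
  rw [ka, Finset.sum_mul]
  exact Finset.sum_le_sum h

lemma WW_local {S : Finset Vtx} (hS : S ⊆ VN N) {f g : FieldSp} (h : ∀ w ∈ VN N, f w = g w) :
    WW M κ N m r β S f = WW M κ N m r β S g := by
  refine Finset.sum_congr rfl fun v hv => ?_
  rw [loc_YL (hS hv) f g h]

lemma WW_meas {S : Finset Vtx} (hS : S ⊆ VN N) : Measurable (WW M κ N m r β S) := by
  refine Finset.measurable_sum _ fun v hv => ?_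
  exact Real.measurable_exp.comp ((loc_YL (hS hv)).measurable.const_mul β)

lemma WW_nonneg (S : Finset Vtx) (f : FieldSp) : 0 ≤ WW M κ N m r β S f :=
  Finset.sum_nonneg fun _ _ => (Real.exp_pos _).le

lemma TT_sub : TT N m n K ⊆ VN N := Finset.filter_subset _ _
lemma SS_sub {k : ℤ} : SS N m n K k ⊆ TT N m n K := Finset.filter_subset _ _

lemma YL_th (hm : 2 * n + 1 ≤ m) (hK : K * m ≤ N) {k : ℤ} (hk0 : 0 ≤ k) (hk : k < K) {v : Vtx}
    (hv : v ∈ TT N m n K) (f : FieldSp) : YL M κ N m r (th m k v) f = YL M κ N m r v (Th m k f) := by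
  rw [YL_apply, YL_apply]
  refine Finset.sum_congr rfl fun j _ => ?_
  rw [sml_th (by omega)]
  split_ifs with h
  · rfl
  · rw [ext_BJ_th hm hK hk0 hk hv h]

lemma WW_T_th (hm : 2 * n + 1 ≤ m) (hK : K * m ≤ N) {k : ℤ} (hk0 : 0 ≤ k) (hk : k < K) (f : FieldSp) :
    WW M κ N m r β (TT N m n K) (Th m k f) = WW M κ N m r β (TT N m n K) f := by
  have hm0 : 0 < m := by omega
  unfold WW
  refine Finset.sum_nbij' (th m k) (th m k) (fun v hv => th_TT hm0 hK hk0 hk hv)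
    (fun v hv => th_TT hm0 hK hk0 hk hv) (fun v _ => th_th hm0 v) (fun v _ => th_th hm0 v) ?_
  intro v hv
  rw [YL_th hm hK hk0 hk hv]

lemma WW_S_th (hm : 2 * n + 1 ≤ m) (hK : K * m ≤ N) {k : ℤ} (hk0 : 0 ≤ k) (hk : k < K) (f : FieldSp) :
    WW M κ N m r β (SS N m n K 0) (Th m k f) = WW M κ N m r β (SS N m n K k) f := by
  have hm0 : 0 < m := by omega
  unfold WW
  refine Finset.sum_nbij' (th m k) (th m k) (fun v hv => ?_)
    (fun v hv => ?_) (fun v _ => th_th hm0 v) (fun v _ => th_th hm0 v) ?_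
  · obtain ⟨h1, h2⟩ := mem_SS.1 hv
    refine mem_SS.2 ⟨th_TT hm0 hK hk0 hk h1, ?_⟩
    rw [(th_fst hm0 v).1, h2]; simp
  · obtain ⟨h1, h2⟩ := mem_SS.1 hv
    refine mem_SS.2 ⟨th_TT hm0 hK hk0 hk h1, ?_⟩
    rw [(th_fst hm0 v).1, h2]; simp
  · intro v hv
    rw [YL_th hm hK hk0 hk (SS_sub hv)]

lemma WW_sum (f : FieldSp) : ∑ k ∈ Finset.range K, WW M κ N m r β (SS N m n K (k:ℤ)) f =
    WW M κ N m r β (TT N m n K) f := by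
  unfold WW SS
  have := Finset.sum_fiberwise_of_maps_to (s := TT N m n K) (t := (Finset.range K).image (fun k : ℕ => (k:ℤ)))
    (g := fun v : Vtx => v.1 / (m:ℤ)) (fun v hv => by
      obtain ⟨h1, h2, h3⟩ := mem_TT.1 hv
      have := q_nonneg (m := m) h1
      simp only [Finset.mem_image, Finset.mem_range]
      exact ⟨(v.1 / (m:ℤ)).toNat, by omega, by omega⟩) (fun v => Real.exp (β * YL M κ N m r v f))
  rw [← this, Finset.sum_image (fun a _ b _ h => by simpa using h)]

/-- ratio -/
def qq (M : ℕ) (κ : ℕ → ℝ) (N m n K : ℕ) (r : ℕ → ℝ) (β : ℝ) (k : ℤ) (f : FieldSp) : ℝ :=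
  WW M κ N m r β (SS N m n K k) f / WW M κ N m r β (TT N m n K) f

lemma WW_le (k : ℤ) (f : FieldSp) : WW M κ N m r β (SS N m n K k) f ≤ WW M κ N m r β (TT N m n K) f :=
  Finset.sum_le_sum_of_subset_of_nonneg SS_sub fun _ _ _ => (Real.exp_pos _).le

lemma qq_nonneg (k : ℤ) (f : FieldSp) : 0 ≤ qq M κ N m n K r β k f := div_nonneg (WW_nonneg _ _) (WW_nonneg _ _)
lemma qq_le (k : ℤ) (f : FieldSp) : qq M κ N m n K r β k f ≤ 1 :=
  div_le_one_of_le₀ (WW_le k f) (WW_nonneg _ _)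

lemma qq_meas (k : ℤ) : Measurable (qq M κ N m n K r β k) :=
  (WW_meas (SS_sub.trans TT_sub)).div (WW_meas TT_sub)

lemma qq_local (k : ℤ) {f g : FieldSp} (h : ∀ w ∈ VN N, f w = g w) :
    qq M κ N m n K r β k f = qq M κ N m n K r β k g := by
  unfold qq; rw [WW_local (SS_sub.trans TT_sub) h, WW_local TT_sub h]

lemma rsInv_meas : Measurable (rsInv N) := by
  rw [measurable_pi_iff]
  intro x
  by_cases h : x ∈ VN N
  · simp only [rsInv, h, dite_true]; exact measurable_pi_apply _
  · simp only [rsInv, h, dite_false]; exact measurable_const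

lemma exch (hm : 2 * n + 1 ≤ m) (hK : K * m ≤ N) (h : GF N G P) :
    K * ∫ f, qq M κ N m n K r β 0 (prj (UU N m) f) ∂P ≤ 1 := by
  have hm0 : 0 < m := by omega
  have := h.prob
  have hr1 : ∀ (k : ℤ) (f : FieldSp), qq M κ N m n K r β k f = qq M κ N m n K r β k (rsInv N (rs N f)) :=
    fun k f => qq_local k fun w hw => (rsInv_rs f w hw).symm
  have mp : ∀ k : ℤ, Measurable (fun f => qq M κ N m n K r β k (prj (UU N m) f)) := by
    intro k
    simp only [hr1 k (prj (UU N m) _)]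
    exact (qq_meas k).comp (rsInv_meas.comp (locM_prj UU_sub).meas)
  have hi : ∀ k : ℤ, Integrable (fun f => qq M κ N m n K r β k (prj (UU N m) f)) P := by
    intro k
    refine Integrable.of_bound (mp k).aestronglyMeasurable 1 (Eventually.of_forall fun f => ?_)
    rw [Real.norm_of_nonneg (qq_nonneg _ _)]; exact qq_le _ _
  have key : ∀ k ∈ Finset.range K, ∫ f, qq M κ N m n K r β (k:ℤ) (prj (UU N m) f) ∂P =
      ∫ f, qq M κ N m n K r β 0 (prj (UU N m) f) ∂P := by
    intro k hk
    have hk' : (k:ℤ) < K := by exact_mod_cast Finset.mem_range.1 hk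
    have hk0 : (0:ℤ) ≤ k := by omega
    have e1 : ∀ f, qq M κ N m n K r β (k:ℤ) f = qq M κ N m n K r β 0 (Th m k f) := by
      intro f
      unfold qq
      rw [WW_S_th hm hK hk0 hk', WW_T_th hm hK hk0 hk']
    simp only [e1]
    simp only [hr1 0 (Th _ _ _), hr1 0 (prj (UU N m) _)]
    have mq : Measurable (fun g => qq M κ N m n K r β 0 (rsInv N g)) := (qq_meas 0).comp rsInv_meas
    have hA : LocM N ((Th m k).comp (prj (UU N m))) := fun f g hfg w hw =>
      locM_prj UU_sub f g hfg _ (th_VN hm0 hK hk0 hk' hw)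
    have i1 := integral_map (μ := P) (hA.meas).aemeasurable mq.aestronglyMeasurable
    have i2 := integral_map (μ := P) ((locM_prj (N := N) (UU_sub (m := m))).meas).aemeasurable mq.aestronglyMeasurable
    rw [law_th hm0 hK hk0 hk' h] at i2
    exact i1.symm.trans i2
  have hsum : ∑ k ∈ Finset.range K, ∫ f, qq M κ N m n K r β (k:ℤ) (prj (UU N m) f) ∂P ≤ 1 := by
    rw [← integral_finsetSum _ (fun (k : ℕ) _ => hi (k:ℤ))]
    have : ∫ f, (1:ℝ) ∂P = 1 := by simp
    rw [← this]
    refine integral_mono (integrable_finsetSum _ fun (k : ℕ) _ => hi (k:ℤ)) (integrable_const _) fun f => ?_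
    simp only [qq]
    rw [← Finset.sum_div, WW_sum]
    exact div_self_le_one _
  rw [Finset.sum_congr rfl key] at hsum
  simpa using hsum

end Prob


noncomputable section Core2
open MeasureTheory ProbabilityTheory

variable {M : ℕ} {κ : ℕ → ℝ} {N m n K : ℕ} {r : ℕ → ℝ} {G : Vtx → Vtx → ℝ} {P : Measure FieldSp} {β : ℝ}

/-- Gibbs weight of the decoupled field -/
def pv (M : ℕ) (κ : ℕ → ℝ) (N m : ℕ) (r : ℕ → ℝ) (β : ℝ) (T : Finset Vtx) (v : Vtx) (f : FieldSp) : ℝ :=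
  Real.exp (β * YL M κ N m r v f) / WW M κ N m r β T f

lemma pv_nonneg (T : Finset Vtx) (v : Vtx) (f : FieldSp) : 0 ≤ pv M κ N m r β T v f :=
  div_nonneg (Real.exp_pos _).le (WW_nonneg _ _)

lemma pv_le {T : Finset Vtx} {v : Vtx} (hv : v ∈ T) (f : FieldSp) : pv M κ N m r β T v f ≤ 1 := by
  refine div_le_one_of_le₀ ?_ (WW_nonneg _ _)
  exact Finset.single_le_sum (f := fun v => Real.exp (β * YL M κ N m r v f)) (fun _ _ => (Real.exp_pos _).le) hv

lemma pv_sum {T : Finset Vtx} (hT : T.Nonempty) (f : FieldSp) : ∑ v ∈ T, pv M κ N m r β T v f = 1 := by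
  simp only [pv]
  rw [← Finset.sum_div]
  exact div_self (Finset.sum_pos (fun _ _ => Real.exp_pos _) hT).ne'

lemma gsq {U : Finset Vtx} (hU : U ⊆ intr (VN N)) (h : GF N G P) {v : Vtx} (hv : v ∈ VN N) :
    Integrable (fun f => PSL M κ N r v (ext U f) ^ 2) P ∧
      ∫ f, PSL M κ N r v (ext U f) ^ 2 ∂P ≤ ka M κ ^ 2 * Cmax N := by
  have h1 := h.int_sq ((locM_ext hU).comp (loc_PSL (M := M) (κ := κ) (r := r) hv))
  refine ⟨h1.1, ?_⟩
  have hj : ∀ j, Integrable (fun f => ext (BJ N r j v) (ext U f) v ^ 2) P ∧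
      ∫ f, ext (BJ N r j v) (ext U f) v ^ 2 ∂P ≤ Cmax N := by
    intro j
    have hL := loc_evext (BJ_sub (r := r) (j := j) (v := v)) hv
    have := h.int_sq ((locM_ext hU).comp hL)
    refine ⟨this.1, ?_⟩
    refine this.2.le.trans ((Cv_split_le h.gr hU hL).trans (Cv_ext_le_Cmax h.gr BJ_sub v))
  have hp : ∀ f, PSL M κ N r v (ext U f) ^ 2 ≤
      ka M κ * ∑ j ∈ Finset.range (M + 1), |κ j| * ext (BJ N r j v) (ext U f) v ^ 2 := by
    intro f
    rw [PSL_apply]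
    refine Finset.sum_sq_le_sum_mul_sum_of_sq_le_mul _ (fun _ _ => abs_nonneg _) (fun _ _ => by positivity) ?_
    intro j _
    apply le_of_eq; rw [mul_pow, ← sq_abs (κ j)]; ring
  have hint : Integrable (fun f => ka M κ * ∑ j ∈ Finset.range (M + 1), |κ j| * ext (BJ N r j v) (ext U f) v ^ 2) P :=
    (integrable_finsetSum _ fun j _ => (hj j).1.const_mul _).const_mul _
  refine (integral_mono h1.1 hint hp).trans ?_
  rw [integral_const_mul, integral_finsetSum _ fun j _ => (hj j).1.const_mul _]
  have ha : 0 ≤ ka M κ := Finset.sum_nonneg fun _ _ => abs_nonneg _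
  have : ∑ j ∈ Finset.range (M + 1), ∫ f, |κ j| * ext (BJ N r j v) (ext U f) v ^ 2 ∂P ≤ ka M κ * Cmax N := by
    rw [ka, Finset.sum_mul]
    refine Finset.sum_le_sum fun j _ => ?_
    rw [integral_const_mul]
    exact mul_le_mul_of_nonneg_left (hj j).2 (abs_nonneg _)
  calc _ ≤ ka M κ * (ka M κ * Cmax N) := mul_le_mul_of_nonneg_left this ha
    _ = _ := by ring

lemma pv_local {T : Finset Vtx} (hT : T ⊆ VN N) {v : Vtx} (hv : v ∈ VN N) {f g : FieldSp} (h : ∀ w ∈ VN N, f w = g w) :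
    pv M κ N m r β T v f = pv M κ N m r β T v g := by
  unfold pv; rw [WW_local hT h, loc_YL hv f g h]

lemma pv_meas {T : Finset Vtx} (hT : T ⊆ VN N) {v : Vtx} (hv : v ∈ VN N) :
    Measurable (pv M κ N m r β T v) :=
  (Real.measurable_exp.comp ((loc_YL hv).measurable.const_mul β)).div (WW_meas hT)

lemma cheb {U T : Finset Vtx} (hU : U ⊆ intr (VN N)) (hT : T ⊆ VN N) (hne : T.Nonempty) (h : GF N G P)
    {a : ℝ} (ha : 0 < a) :
    P.real {f | a < |∑ v ∈ T, pv M κ N m r β T v (prj U f) * PSL M κ N r v (ext U f)|} ≤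
      ka M κ ^ 2 * Cmax N / a ^ 2 := by
  have := h.prob
  have hi : ∀ v ∈ T, Integrable (fun f => pv M κ N m r β T v (prj U f)) P ∧
      Integrable (fun f => pv M κ N m r β T v (prj U f) * PSL M κ N r v (ext U f) ^ 2) P ∧
      ∫ f, pv M κ N m r β T v (prj U f) * PSL M κ N r v (ext U f) ^ 2 ∂P ≤
        (∫ f, pv M κ N m r β T v (prj U f) ∂P) * (ka M κ ^ 2 * Cmax N) := by
    intro v hv
    have e1 : (fun f => pv M κ N m r β T v (prj U f)) =
        (fun x => pv M κ N m r β T v (rsInv N x)) ∘ fun f => rs N (prj U f) := by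
      funext f
      exact pv_local hT (hT hv) fun w hw => (rsInv_rs _ w hw).symm
    have e2 : (fun f => PSL M κ N r v (ext U f) ^ 2) =
        (fun x => PSL M κ N r v (rsInv N x) ^ 2) ∘ fun f => rs N (ext U f) := by
      funext f
      simp only [Function.comp_apply]
      rw [loc_PSL (hT hv) _ _ fun w hw => (rsInv_rs (ext U f) w hw).symm]
    have m1 : Measurable (fun x => pv M κ N m r β T v (rsInv N x)) := (pv_meas hT (hT hv)).comp rsInv_meas
    have m2 : Measurable (fun x => PSL M κ N r v (rsInv N x) ^ 2) :=
      ((loc_PSL (hT hv)).measurable.comp rsInv_meas).pow_const 2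
    have hind := (h.indep hU).comp m1 m2
    rw [← e1, ← e2] at hind
    have mp : Measurable (fun f => pv M κ N m r β T v (prj U f)) := by
      rw [e1]; exact m1.comp (locM_prj hU).meas
    have i1 : Integrable (fun f => pv M κ N m r β T v (prj U f)) P := by
      refine Integrable.of_bound mp.aestronglyMeasurable 1 (Eventually.of_forall fun f => ?_)
      rw [Real.norm_of_nonneg (pv_nonneg _ _ _)]; exact pv_le hv _
    have i2 := gsq (M := M) (κ := κ) (r := r) hU h (hT hv)
    refine ⟨i1, hind.integrable_mul i1 i2.1, ?_⟩
    rw [hind.integral_fun_mul_eq_mul_integral i1.aestronglyMeasurable i2.1.aestronglyMeasurable]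
    exact mul_le_mul_of_nonneg_left i2.2 (integral_nonneg fun f => pv_nonneg _ _ _)
  set D : FieldSp → ℝ := fun f => ∑ v ∈ T, pv M κ N m r β T v (prj U f) * PSL M κ N r v (ext U f) ^ 2 with hD
  have hDi : Integrable D P := integrable_finsetSum _ fun v hv => (hi v hv).2.1
  have hDint : ∫ f, D f ∂P ≤ ka M κ ^ 2 * Cmax N := by
    rw [hD, integral_finsetSum _ fun v hv => (hi v hv).2.1]
    refine (Finset.sum_le_sum fun v hv => (hi v hv).2.2).trans ?_
    rw [← Finset.sum_mul, ← integral_finsetSum _ fun v hv => (hi v hv).1]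
    simp [pv_sum hne]
  have hD0 : ∀ f, 0 ≤ D f := fun f => Finset.sum_nonneg fun v _ => mul_nonneg (pv_nonneg _ _ _) (sq_nonneg _)
  have hmk := mul_meas_ge_le_integral_of_nonneg (Eventually.of_forall hD0) hDi (a ^ 2)
  have hsub : {f | a < |∑ v ∈ T, pv M κ N m r β T v (prj U f) * PSL M κ N r v (ext U f)|} ⊆ {f | a ^ 2 ≤ D f} := by
    intro f hf
    simp only [Set.mem_ofPred_eq] at hf ⊢
    have hJ := (even_two.convexOn_pow (𝕜 := ℝ)).map_sum_le (t := T) (w := fun v => pv M κ N m r β T v (prj U f))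
      (p := fun v => PSL M κ N r v (ext U f)) (fun v _ => pv_nonneg _ _ _) (pv_sum hne _) (fun _ _ => Set.mem_univ _)
    simp only [smul_eq_mul] at hJ
    refine le_trans ?_ hJ
    rw [← sq_abs (∑ v ∈ T, _)]
    exact pow_le_pow_left₀ ha.le hf.le 2
  rw [le_div_iff₀ (by positivity)]
  calc _ ≤ P.real {f | a ^ 2 ≤ D f} * a ^ 2 := by gcongr; exact measure_ne_top _ _
    _ ≤ _ := by linarith

lemma core (hm : 2 * n + 1 ≤ m) (hn : 0 < n) (hK0 : 0 < K) (hK : K * m ≤ N) (h : GF N G P) (hβ : 0 < β)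
    {t τ ε : ℝ} (ht : 3 ≤ t) (hτ : 0 < τ) (hκ : 0 < ka M κ) (hε : 0 < ε) :
    P.real {f | ε < (∑ v ∈ SS N m n K 0, Real.exp (β * PSL M κ N r v f)) /
        ∑ v ∈ TT N m n K, Real.exp (β * PSL M κ N r v f)} ≤
      2 * ((N + 1) ^ 2 * (M + 1) * (2 * Real.exp (- τ ^ 2 / (2 * sB N m n t)))) + Cmax N / τ ^ 2 +
        Real.exp (4 * β * (ka M κ * τ)) / (K * ε) := by
  have hm0 : 0 < m := by omega
  have := h.prob
  set U := UU N m with hU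
  set T := TT N m n K with hT
  set S := SS N m n K 0 with hS
  set a := ka M κ * τ with ha
  have ha0 : 0 < a := by positivity
  have hTne : T.Nonempty := ⟨(0, 0), mem_TT.2 ⟨mem_VN.2 (by simp), by simpa using hn, by simpa using hK0⟩⟩
  obtain ⟨s1, s2⟩ := sB_aux (N := N) (m := m) (n := n) ht
  have hs : 0 < sB N m n t := by unfold sB; linarith
  set p := 2 * Real.exp (- τ ^ 2 / (2 * sB N m n t)) with hp
  have hp0 : 0 ≤ p := by positivity
  set b1 : Vtx → ℕ → Set FieldSp := fun v j => {f | sml m r j v ∧ τ < |ext (BJ N r j v) (prj U f) v|}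
  set b2 : Vtx → ℕ → Set FieldSp := fun v j => {f | τ < |ext (BJ N r j v) (ext U f) v|}
  set b3 : Set FieldSp := {f | a < |∑ v ∈ T, pv M κ N m r β T v (prj U f) * PSL M κ N r v (ext U f)|}
  set b4 : Set FieldSp := {f | ε ≤ Real.exp (4 * β * a) * qq M κ N m n K r β 0 (prj U f)}
  have hb1 : ∀ v ∈ T, ∀ j ∈ Finset.range (M + 1), P.real (b1 v j) ≤ p := by
    intro v hv j _
    by_cases hj : sml m r j v
    · have hL := (locM_prj (N := N) (UU_sub (m := m))).comp (loc_evext (BJ_sub (r := r) (j := j) (v := v)) (TT_sub hv))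
      refine le_trans (measureReal_mono (fun f hf => hf.2)) (h.tail hL hs hτ.le (evar hm h.gr hv hj ht))
    · have : b1 v j = ∅ := by
        ext f; simp [b1, hj]
      rw [this]; simpa using hp0
  have hb2 : ∀ v ∈ S, ∀ j ∈ Finset.range (M + 1), P.real (b2 v j) ≤ p := by
    intro v hv j _
    have hL := (locM_ext (N := N) (UU_sub (m := m))).comp (loc_evext (BJ_sub (r := r) (j := j) (v := v)) (TT_sub (SS_sub hv)))
    exact h.tail hL hs hτ.le (gvar hm h.gr hv j ht)
  have hb3 : P.real b3 ≤ Cmax N / τ ^ 2 := by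
    refine (cheb UU_sub TT_sub hTne h ha0).trans (le_of_eq ?_)
    rw [ha]; field_simp
  have hb4 : P.real b4 ≤ Real.exp (4 * β * a) / (K * ε) := by
    have hK0' : (0:ℝ) < K := by exact_mod_cast hK0
    have mq : Measurable (fun f => qq M κ N m n K r β 0 (prj U f)) := by
      have : (fun f => qq M κ N m n K r β 0 (prj U f)) =
          fun f => qq M κ N m n K r β 0 (rsInv N (rs N (prj U f))) := by
        funext f; exact qq_local 0 fun w hw => (rsInv_rs _ w hw).symm
      rw [this]
      exact (qq_meas 0).comp (rsInv_meas.comp (locM_prj UU_sub).meas)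
    have hi : Integrable (fun f => qq M κ N m n K r β 0 (prj U f)) P := by
      refine Integrable.of_bound mq.aestronglyMeasurable 1 (Eventually.of_forall fun f => ?_)
      rw [Real.norm_of_nonneg (qq_nonneg _ _)]; exact qq_le _ _
    have hmk := mul_meas_ge_le_integral_of_nonneg
      (f := fun f => Real.exp (4 * β * a) * qq M κ N m n K r β 0 (prj U f))
      (Eventually.of_forall fun f => mul_nonneg (Real.exp_pos _).le (qq_nonneg _ _)) (hi.const_mul _) ε
    rw [integral_const_mul] at hmk
    have hex := exch (M := M) (κ := κ) (r := r) (β := β) hm hK h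
    rw [le_div_iff₀ (by positivity)]
    have : Real.exp (4 * β * a) * (K * ∫ f, qq M κ N m n K r β 0 (prj U f) ∂P) ≤ Real.exp (4 * β * a) * 1 :=
      mul_le_mul_of_nonneg_left hex (Real.exp_pos _).le
    calc P.real b4 * (K * ε) = K * (ε * P.real b4) := by ring
      _ ≤ K * (Real.exp (4 * β * a) * ∫ f, qq M κ N m n K r β 0 (prj U f) ∂P) := by gcongr
      _ ≤ _ := by linarith
  have hsub : {f | ε < (∑ v ∈ S, Real.exp (β * PSL M κ N r v f)) / ∑ v ∈ T, Real.exp (β * PSL M κ N r v f)} ⊆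
      ((⋃ v ∈ T, ⋃ j ∈ Finset.range (M + 1), b1 v j) ∪ (⋃ v ∈ S, ⋃ j ∈ Finset.range (M + 1), b2 v j)) ∪ b3 ∪ b4 := by
    intro f hf
    by_contra hcon
    simp only [Set.mem_union, Set.mem_iUnion, not_or, not_exists] at hcon
    obtain ⟨⟨⟨c1, c2⟩, c3⟩, c4⟩ := hcon
    have hdec : ∀ v, PSL M κ N r v f = YL M κ N m r v (prj U f) + EL M κ N m r v (prj U f) + PSL M κ N r v (ext U f) :=
      fun v => decomp U v f
    simp only [hdec, Set.mem_ofPred_eq] at hf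
    have hdet := det_bound (S := S) (T := T) (fun v => YL M κ N m r v (prj U f)) (fun v => EL M κ N m r v (prj U f))
      (fun v => PSL M κ N r v (ext U f)) SS_sub hTne hβ (a := a) ?_ ?_ ?_
    · apply c4
      exact hf.le.trans hdet
    · intro v hv
      rw [EL_apply]
      refine sum_abs_le fun j hj => ?_
      split_ifs with hsm
      · rw [abs_mul]
        refine mul_le_mul_of_nonneg_left ?_ (abs_nonneg _)
        by_contra hlt
        exact c1 v hv j hj ⟨hsm, not_le.1 hlt⟩
      · rw [abs_zero]; positivity
    · intro v hv
      rw [PSL_apply]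
      refine sum_abs_le fun j hj => ?_
      rw [abs_mul]
      refine mul_le_mul_of_nonneg_left ?_ (abs_nonneg _)
      by_contra hlt
      exact c2 v hv j hj (not_le.1 hlt)
    · by_contra hlt
      exact c3 (not_le.1 hlt)
  have hun : ∀ (A : Finset Vtx) (b : Vtx → ℕ → Set FieldSp), A ⊆ VN N →
      (∀ v ∈ A, ∀ j ∈ Finset.range (M + 1), P.real (b v j) ≤ p) →
      P.real (⋃ v ∈ A, ⋃ j ∈ Finset.range (M + 1), b v j) ≤ (N + 1) ^ 2 * (M + 1) * p := by
    intro A b hA hb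
    refine (measureReal_biUnion_finset_le A _).trans ?_
    have : ∀ v ∈ A, P.real (⋃ j ∈ Finset.range (M + 1), b v j) ≤ (M + 1) * p := by
      intro v hv
      refine (measureReal_biUnion_finset_le _ _).trans ((Finset.sum_le_card_nsmul _ _ _ (hb v hv)).trans ?_)
      simp
    refine (Finset.sum_le_card_nsmul _ _ _ this).trans ?_
    have hc : (A.card : ℝ) ≤ (N + 1) ^ 2 := by
      have h1 := Finset.card_le_card hA
      have h2 : (VN N).card = (N + 1) ^ 2 := by
        unfold VN
        have : Finset.Icc ((0:ℤ), (0:ℤ)) ((N:ℤ), (N:ℤ)) = Finset.Icc (0:ℤ) N ×ˢ Finset.Icc (0:ℤ) N := rfl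
        rw [this, Finset.card_product, Int.card_Icc]
        have : ((N:ℤ) + 1 - 0).toNat = N + 1 := by omega
        rw [this]; ring
      rw [h2] at h1
      exact_mod_cast h1
    rw [nsmul_eq_mul, mul_assoc]
    exact mul_le_mul_of_nonneg_right hc (by positivity)
  have u1 := hun T b1 TT_sub hb1
  have u2 := hun S b2 (SS_sub.trans TT_sub) hb2
  have u3 := measureReal_mono (μ := P) hsub (measure_ne_top _ _)
  have w1 := measureReal_union_le (μ := P) (((⋃ v ∈ T, ⋃ j ∈ Finset.range (M + 1), b1 v j) ∪ (⋃ v ∈ S, ⋃ j ∈ Finset.range (M + 1), b2 v j)) ∪ b3) b4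
  have w2 := measureReal_union_le (μ := P) ((⋃ v ∈ T, ⋃ j ∈ Finset.range (M + 1), b1 v j) ∪ (⋃ v ∈ S, ⋃ j ∈ Finset.range (M + 1), b2 v j)) b3
  have w3 := measureReal_union_le (μ := P) (⋃ v ∈ T, ⋃ j ∈ Finset.range (M + 1), b1 v j) (⋃ v ∈ S, ⋃ j ∈ Finset.range (M + 1), b2 v j)
  linarith

end Core2


noncomputable section Asym

set_option maxHeartbeats 1000000 in
lemma asym {ρ β k ε : ℝ} (M : ℕ) (hρ0 : 0 < ρ) (hρ1 : ρ < 1) (hβ : 0 < β) (hk : 0 < k) (hε : 0 < ε) :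
    ∀ᶠ N : ℕ in atTop, ∃ (m n K : ℕ) (t τ : ℝ), 2 * n + 1 ≤ m ∧ 0 < n ∧ 0 < K ∧ K * m ≤ N ∧ 3 ≤ t ∧ 0 < τ ∧
      (N:ℝ) ^ (1 - ρ) ≤ n ∧
      2 * (((N:ℝ) + 1) ^ 2 * (M + 1) * (2 * Real.exp (- τ ^ 2 / (2 * sB N m n t)))) + Cmax N / τ ^ 2 +
        Real.exp (4 * β * (k * τ)) / (K * ε) ≤ ε := by
  have hC := C0_pos
  set δ := ρ / (16 * β * k) with hδ
  have hδ0 : 0 < δ := by positivity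
  set η := min (ρ / 4) (δ ^ 2 / (24 * C0)) with hη
  have hη0 : 0 < η := lt_min (by positivity) (by positivity)
  have hη1 : η ≤ ρ / 4 := min_le_left _ _
  have hη2 : η * (24 * C0) ≤ δ ^ 2 := by
    have := min_le_right (ρ / 4) (δ ^ 2 / (24 * C0))
    rwa [← hη, le_div_iff₀ (by positivity)] at this
  have hcast : Tendsto (fun N : ℕ => (N:ℝ)) atTop atTop := tendsto_natCast_atTop_atTop
  have hlog : Tendsto (fun N : ℕ => Real.log N) atTop atTop := Real.tendsto_log_atTop.comp hcast
  have hpow : ∀ y : ℝ, 0 < y → Tendsto (fun N : ℕ => (N:ℝ) ^ y) atTop atTop := fun y hy =>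
    (tendsto_rpow_atTop hy).comp hcast
  filter_upwards [hcast.eventually_ge_atTop 3, hcast.eventually_ge_atTop (48 * (M + 1) / ε),
    hlog.eventually_ge_atTop 1, hlog.eventually_ge_atTop (Real.log 72 / η),
    hlog.eventually_ge_atTop (9 * C0 / (δ ^ 2 * ε)), (hpow η hη0).eventually_ge_atTop 5,
    (hpow η hη0).eventually_ge_atTop (21 / η), (hpow (ρ - η) (by linarith)).eventually_ge_atTop 4,
    (hpow (ρ / 2) (by linarith)).eventually_ge_atTop (12 / (ε * ε))] with N h1 h2 h3 h4 h5 h6 h7 h8 h9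
  have hN0 : (0:ℝ) < N := by linarith
  set x := Real.log N with hx
  set A := (N:ℝ) ^ (1 - ρ) with hA
  have hA1 : 1 ≤ A := Real.one_le_rpow (by linarith) (by linarith)
  set E := (N:ℝ) ^ η with hE
  have hAE : (N:ℝ) ^ (1 - ρ + η) = A * E := Real.rpow_add hN0 _ _
  have hAE1 : 1 ≤ A * E := one_le_mul_of_one_le_of_one_le hA1 (by linarith)
  have hF : A * E * (N:ℝ) ^ (ρ - η) = N := by
    rw [← hAE, ← Real.rpow_add hN0]; ring_nf; simp
  set F := (N:ℝ) ^ (ρ - η) with hFd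
  set n := ⌈A⌉₊ with hn
  set m := ⌈A * E⌉₊ with hm
  have n1 : A ≤ n := Nat.le_ceil _
  have n2 : (n:ℝ) < A + 1 := Nat.ceil_lt_add_one (by linarith)
  have m1 : A * E ≤ m := Nat.le_ceil _
  have m2 : (m:ℝ) < A * E + 1 := Nat.ceil_lt_add_one (by linarith)
  have hm0 : (0:ℝ) < m := by linarith
  have k1 : (N:ℝ) / m < ((N / m : ℕ) : ℝ) + 1 := by
    rw [div_lt_iff₀ hm0]
    have : N < (N / m + 1) * m := by
      have := Nat.lt_div_mul_add (a := N) (b := m) (by exact_mod_cast hm0)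
      linarith
    exact_mod_cast this
  have k2 : F / 2 ≤ (N:ℝ) / m := by
    rw [le_div_iff₀ hm0]
    have : F * m ≤ F * (2 * (A * E)) := by
      apply mul_le_mul_of_nonneg_left _ (by positivity); linarith
    linarith
  have k3 : F / 4 ≤ ((N / m : ℕ) : ℝ) := by linarith
  have hK0 : (0:ℝ) < ((N / m : ℕ) : ℝ) := by linarith
  have hCm : Cmax N ≤ 3 * C0 * x := by
    unfold Cmax
    have : Real.log (2 * (N:ℝ) ^ 2 + 1) ≤ 3 * x := by
      have : 3 * x = Real.log ((N:ℝ) ^ 3) := by rw [Real.log_pow]; push_cast; rfl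
      rw [this]
      apply Real.log_le_log (by positivity)
      nlinarith [sq_nonneg (N:ℝ)]
    have := mul_le_mul_of_nonneg_left this hC.le
    linarith
  have hCm0 := Cmax_nonneg N
  have hE0 : 0 < E := by linarith
  have hx0 : 0 < x := by linarith
  have hs : sB N m n E ≤ 4 * C0 * η * x := by
    unfold sB
    have a1 : Real.log (72 * E ^ 2) ≤ η * x + 2 * (η * x) := by
      rw [Real.log_mul (by norm_num) (by positivity), Real.log_pow, hE, Real.log_rpow hN0]
      have : Real.log 72 ≤ η * x := by
        rw [div_le_iff₀ hη0] at h4; linarith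
      push_cast; linarith
    have a2 : 5 * Cmax N / E + Cmax N * n / m ≤ C0 * (η * x) := by
      have : Cmax N * n / m ≤ 2 * Cmax N / E := by
        rw [div_le_div_iff₀ hm0 hE0]
        have : (n:ℝ) * E ≤ 2 * m := by
          have : (n:ℝ) * E ≤ (2 * A) * E := by apply mul_le_mul_of_nonneg_right _ hE0.le; linarith
          linarith
        have := mul_le_mul_of_nonneg_left this hCm0
        linarith
      have h21 : 21 / E ≤ η := by
        rw [div_le_iff₀ hE0]; rw [div_le_iff₀ hη0] at h7; linarith
      calc _ ≤ 5 * Cmax N / E + 2 * Cmax N / E := by linarith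
        _ = Cmax N * (7 / E) := by ring
        _ ≤ 3 * C0 * x * (7 / E) := by gcongr
        _ = C0 * x * (21 / E) := by ring
        _ ≤ C0 * x * η := by gcongr
        _ = _ := by ring
    have := mul_le_mul_of_nonneg_left a1 hC.le
    linarith
  have hs0 : 0 < sB N m n E := by
    obtain ⟨s1, s2⟩ := sB_aux (N := N) (m := m) (n := n) (t := E) (by linarith)
    unfold sB; linarith
  refine ⟨m, n, N / m, E, δ * x, ?_, ?_, by exact_mod_cast hK0, Nat.div_mul_le_self _ _, by linarith, by positivity, n1, ?_⟩
  · have : 2 * (n:ℝ) + 1 ≤ m := by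
      have := mul_le_mul_of_nonneg_left h6 (by linarith : (0:ℝ) ≤ A)
      linarith
    exact_mod_cast this
  · have : (0:ℝ) < n := by linarith
    exact_mod_cast this
  · have t1 : 2 * (((N:ℝ) + 1) ^ 2 * (M + 1) * (2 * Real.exp (- (δ * x) ^ 2 / (2 * sB N m n E)))) ≤ ε / 3 := by
      have b1 : Real.exp (- (δ * x) ^ 2 / (2 * sB N m n E)) ≤ ((N:ℝ) ^ 3)⁻¹ := by
        have : ((N:ℝ) ^ 3)⁻¹ = Real.exp (- (3 * x)) := by
          rw [Real.exp_neg]; congr 1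
          have : 3 * x = Real.log ((N:ℝ) ^ 3) := by rw [Real.log_pow]; push_cast; rfl
          rw [this, Real.exp_log (by positivity)]
        rw [this]
        apply Real.exp_le_exp.2
        rw [neg_div, neg_le_neg_iff, le_div_iff₀ (by positivity)]
        have : 3 * x * (2 * sB N m n E) ≤ 3 * x * (2 * (4 * C0 * η * x)) := by gcongr
        have h' : x ^ 2 * (η * (24 * C0)) ≤ x ^ 2 * δ ^ 2 := by gcongr
        have e1 : 3 * x * (2 * (4 * C0 * η * x)) = x ^ 2 * (η * (24 * C0)) := by ring
        have e2 : (δ * x) ^ 2 = x ^ 2 * δ ^ 2 := by ring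
        linarith
      have b2 : ((N:ℝ) + 1) ^ 2 ≤ 4 * N ^ 2 := by nlinarith
      calc _ ≤ 2 * ((4 * (N:ℝ) ^ 2) * (M + 1) * (2 * ((N:ℝ) ^ 3)⁻¹)) := by gcongr
        _ = 16 * (M + 1) / N := by field_simp; ring
        _ ≤ ε / 3 := by
          rw [div_le_iff₀ hN0]
          rw [div_le_iff₀ hε] at h2
          linarith
    have t2 : Cmax N / (δ * x) ^ 2 ≤ ε / 3 := by
      rw [div_le_iff₀ (by positivity)]
      rw [div_le_iff₀ (by positivity)] at h5
      have := mul_le_mul_of_nonneg_left h5 hx0.le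
      have e1 : x * (x * (δ ^ 2 * ε)) = ε * (δ * x) ^ 2 := by ring
      linarith
    have t3 : Real.exp (4 * β * (k * (δ * x))) / (((N / m : ℕ) : ℝ) * ε) ≤ ε / 3 := by
      have c1 : 4 * β * (k * (δ * x)) = (ρ / 4) * x := by
        rw [hδ]; field_simp; ring
      have c2 : Real.exp ((ρ / 4) * x) = (N:ℝ) ^ (ρ / 4) := by
        rw [Real.rpow_def_of_pos hN0, mul_comm]
      have c3 : (N:ℝ) ^ (ρ / 4) * (N:ℝ) ^ (ρ / 2) ≤ F := by
        rw [← Real.rpow_add hN0]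
        exact Real.rpow_le_rpow_of_exponent_le (by linarith) (by linarith)
      rw [c1, c2, div_le_iff₀ (by positivity)]
      have c4 : (N:ℝ) ^ (ρ / 4) * (12 / (ε * ε)) ≤ F := le_trans (by gcongr) c3
      have c5 : (N:ℝ) ^ (ρ / 4) * 12 ≤ F * (ε * ε) := by
        rw [← mul_div_assoc, div_le_iff₀ (by positivity)] at c4; exact c4
      have c6 : F / 4 * (ε * ε) ≤ ((N / m : ℕ) : ℝ) * (ε * ε) := by gcongr
      linarith
    linarith

end Asym


noncomputable section Sides
open MeasureTheory ProbabilityTheory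

variable {M : ℕ} {κ : ℕ → ℝ} {N : ℕ} {r : ℕ → ℝ} {G : Vtx → Vtx → ℝ} {P : Measure FieldSp} {β ρ : ℝ}

/-- relative mass of a set -/
def RR (M : ℕ) (κ : ℕ → ℝ) (N : ℕ) (r : ℕ → ℝ) (β : ℝ) (S : Finset Vtx) (f : FieldSp) : ℝ :=
  (∑ v ∈ S, Real.exp (β * PSL M κ N r v f)) / ∑ v ∈ VN N, Real.exp (β * PSL M κ N r v f)

lemma strip_left {ε : ℝ} (hρ0 : 0 < ρ) (hρ1 : ρ < 1) (hβ : 0 < β) (hκ : 0 < ka M κ) (hε : 0 < ε) :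
    ∀ᶠ N : ℕ in atTop, ∀ (r : ℕ → ℝ) (G : Vtx → Vtx → ℝ) (P : Measure FieldSp), GF N G P →
      P.real {f | ε < RR M κ N r β ((VN N).filter fun v => (v.1:ℝ) < (N:ℝ) ^ (1 - ρ)) f} ≤ ε := by
  filter_upwards [asym M hρ0 hρ1 hβ hκ hε] with N hN r G P h
  obtain ⟨m, n, K, t, τ, h1, h2, h3, h4, h5, h6, h7, h8⟩ := hN
  have := h.prob
  refine le_trans (measureReal_mono ?_ (measure_ne_top _ _))
    ((core (M := M) (κ := κ) (r := r) h1 h2 h3 h4 h hβ h5 h6 hκ hε).trans h8)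
  intro f hf
  refine lt_of_lt_of_le (Set.mem_ofPred_eq.mp hf) ?_
  have hTne : (TT N m n K).Nonempty :=
    ⟨(0, 0), mem_TT.2 ⟨mem_VN.2 (by simp), by simpa using h2, by simpa using h3⟩⟩
  unfold RR
  refine div_le_div₀ (Finset.sum_nonneg fun _ _ => (Real.exp_pos _).le) ?_
    (Finset.sum_pos (fun _ _ => Real.exp_pos _) hTne) ?_
  · refine Finset.sum_le_sum_of_subset_of_nonneg (fun v hv => ?_) fun _ _ _ => (Real.exp_pos _).le
    obtain ⟨hv1, hv2⟩ := Finset.mem_filter.1 hv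
    have hvn : v.1 < n := by exact_mod_cast hv2.trans_le h7
    have h0 := (mem_VN.1 hv1).1
    obtain ⟨d1, d2⟩ := divmod_unique (m := m) (by omega) (a := v.1) (q := 0) (s := v.1) (by simp) h0 (by omega)
    refine mem_SS.2 ⟨mem_TT.2 ⟨hv1, by omega, by omega⟩, d1⟩
  · exact Finset.sum_le_sum_of_subset_of_nonneg TT_sub fun _ _ _ => (Real.exp_pos _).le

/-- lattice symmetries of the box -/
structure Sy (N : ℕ) (τ : Vtx ≃ Vtx) : Prop where
  av : ∀ (f : FieldSp) (x : Vtx), avg (fun z => f (τ z)) x = avg f (τ x)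
  vn : ∀ x, τ x ∈ VN N ↔ x ∈ VN N
  it : ∀ x, τ x ∈ intr (VN N) ↔ x ∈ intr (VN N)
  bx : ∀ (r : ℝ) v w, w ∈ Bx N r v ↔ τ w ∈ Bx N r (τ v)

lemma Sy.trans {τ σ : Vtx ≃ Vtx} (h : Sy N τ) (h' : Sy N σ) : Sy N (τ.trans σ) where
  av f x := by
    have := h.av (fun z => f (σ z)) x
    simp only [Equiv.trans_apply]
    rw [this, h'.av]
  vn x := by rw [Equiv.trans_apply, h'.vn, h.vn]
  it x := by rw [Equiv.trans_apply, h'.it, h.it]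
  bx r v w := by rw [h.bx, h'.bx]; rfl

lemma sy_refl : Sy N (Equiv.refl _) := ⟨fun _ _ => rfl, fun _ => Iff.rfl, fun _ => Iff.rfl, fun _ _ _ => Iff.rfl⟩

/-- diagonal reflection -/
def sw : Vtx ≃ Vtx := Equiv.prodComm ℤ ℤ

lemma sy_sw : Sy N sw where
  av f x := by simp only [avg, sw, Equiv.prodComm_apply, Prod.swap, Prod.fst, Prod.snd]; ring
  vn x := by simp only [mem_VN, sw, Equiv.prodComm_apply, Prod.fst_swap, Prod.snd_swap]; tauto
  it x := by simp only [mem_intr_VN, sw, Equiv.prodComm_apply, Prod.fst_swap, Prod.snd_swap]; tauto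
  bx r v w := by
    simp only [mem_Bx, mem_intr_VN, sw, Equiv.prodComm_apply, Prod.fst_swap, Prod.snd_swap]; tauto

/-- horizontal reflection -/
def rf (N : ℕ) : Vtx ≃ Vtx where
  toFun x := (N - x.1, x.2)
  invFun x := (N - x.1, x.2)
  left_inv x := by simp
  right_inv x := by simp

lemma rf_apply (x : Vtx) : rf N x = (N - x.1, x.2) := rfl
lemma rf_symm : (rf N).symm = rf N := rfl
lemma sw_apply (x : Vtx) : sw x = (x.2, x.1) := rfl
lemma sw_symm : sw.symm = sw := rfl

lemma sy_rf : Sy N (rf N) where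
  av f x := by
    simp only [avg, rf_apply]
    have e1 : (N:ℤ) - (x.1 + 1) = N - x.1 - 1 := by ring
    have e2 : (N:ℤ) - (x.1 - 1) = N - x.1 + 1 := by ring
    rw [e1, e2]; ring
  vn x := by simp only [mem_VN, rf_apply]; omega
  it x := by simp only [mem_intr_VN, rf_apply]; omega
  bx r v w := by
    simp only [mem_Bx, mem_intr_VN, rf_apply]
    push_cast
    have : (N:ℝ) - w.1 - (N - v.1) = - (w.1 - v.1) := by ring
    rw [this, abs_neg]
    have : (1 ≤ (N:ℤ) - w.1 ∧ (N:ℤ) - w.1 + 1 ≤ N ∧ 1 ≤ w.2 ∧ w.2 + 1 ≤ N) ↔ (1 ≤ w.1 ∧ w.1 + 1 ≤ N ∧ 1 ≤ w.2 ∧ w.2 + 1 ≤ N) := by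
      omega
    rw [this]

lemma Sy.PSL {τ : Vtx ≃ Vtx} (h : Sy N τ) (v : Vtx) (f : FieldSp) :
    PSL M κ N r (τ v) f = PSL M κ N r v (fun z => f (τ z)) := by
  rw [PSL_apply, PSL_apply]
  refine Finset.sum_congr rfl fun j _ => ?_
  rw [ext_tau τ h.av (B := BJ N r j v) (B' := BJ N r j (τ v))]
  intro w
  unfold BJ
  split_ifs
  · exact (h.it w).symm
  · exact h.bx _ v w

lemma Sy.meas (τ : Vtx ≃ Vtx) : Measurable (fun (f : FieldSp) (z : Vtx) => f (τ z)) := by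
  rw [measurable_pi_iff]; intro z; exact measurable_pi_apply _

lemma Sy.gf {τ : Vtx ≃ Vtx} (h : Sy N τ) (hP : GF N G P) :
    GF N (fun x y => G (τ x) (τ y)) (P.map fun f z => f (τ z)) where
  prob := by
    have := hP.prob
    exact Measure.isProbabilityMeasure_map (Sy.meas τ).aemeasurable
  gr := by
    refine ⟨fun x y hxy => hP.gr.zero _ _ ?_, fun x hx y => ?_⟩
    · rwa [h.it, h.it]
    · rw [hP.gr.eq _ ((h.it x).2 hx), h.av (fun z => G z (τ y)) x]
      simp only [τ.apply_eq_iff_eq]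
  law L hL := by
    have hL' : Loc N (L.comp (LinearMap.funLeft ℝ ℝ τ)) := fun f g hfg => by
      exact hL _ _ fun w hw => hfg _ ((h.vn w).2 hw)
    rw [Measure.map_map hL.measurable (Sy.meas τ)]
    exact hP.law _ hL'

lemma RR_sy {τ : Vtx ≃ Vtx} (h : Sy N τ) (p : Vtx → Prop) (f : FieldSp) :
    RR M κ N r β ((VN N).filter fun v => p (τ.symm v)) f =
      RR M κ N r β ((VN N).filter p) (fun z => f (τ z)) := by
  unfold RR
  congr 1
  · symm
    refine Finset.sum_equiv τ (fun v => ?_) (fun v _ => ?_)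
    · simp [h.vn]
    · rw [h.PSL]
  · symm
    refine Finset.sum_equiv τ (fun v => ?_) (fun v _ => ?_)
    · simp [h.vn]
    · rw [h.PSL]

lemma RR_meas {S : Finset Vtx} (hS : S ⊆ VN N) : Measurable (RR M κ N r β S) := by
  refine Measurable.div ?_ ?_
  · refine Finset.measurable_sum _ fun v hv => ?_
    exact Real.measurable_exp.comp ((loc_PSL (hS hv)).measurable.const_mul β)
  · refine Finset.measurable_sum _ fun v hv => ?_
    exact Real.measurable_exp.comp ((loc_PSL hv).measurable.const_mul β)

lemma RR_nonneg (S : Finset Vtx) (f : FieldSp) : 0 ≤ RR M κ N r β S f :=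
  div_nonneg (Finset.sum_nonneg fun _ _ => (Real.exp_pos _).le) (Finset.sum_nonneg fun _ _ => (Real.exp_pos _).le)

lemma RR_le {S : Finset Vtx} (hS : S ⊆ VN N) (f : FieldSp) : RR M κ N r β S f ≤ 1 :=
  div_le_one_of_le₀ (Finset.sum_le_sum_of_subset_of_nonneg hS fun _ _ _ => (Real.exp_pos _).le)
    (Finset.sum_nonneg fun _ _ => (Real.exp_pos _).le)

lemma strip_sy {ε A : ℝ} {τ : Vtx ≃ Vtx} (h : Sy N τ)
    (H : ∀ (G : Vtx → Vtx → ℝ) (P : Measure FieldSp), GF N G P →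
      P.real {f | ε < RR M κ N r β ((VN N).filter fun v => (v.1:ℝ) < A) f} ≤ ε) (hP : GF N G P) :
    P.real {f | ε < RR M κ N r β ((VN N).filter fun v => ((τ.symm v).1:ℝ) < A) f} ≤ ε := by
  have := H _ _ (h.gf hP)
  rw [map_measureReal_apply (Sy.meas τ) (measurableSet_lt measurable_const (RR_meas (Finset.filter_subset _ _)))] at this
  convert this using 3
  ext f
  simp only [Set.mem_ofPred_eq, Set.mem_preimage]
  rw [RR_sy h (fun v => (v.1:ℝ) < A)]

lemma AN_cover {v : Vtx} (hv : v ∈ VN N \ AN N ρ) :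
    (v.1:ℝ) < (N:ℝ) ^ (1 - ρ) ∨ ((N - v.1 : ℤ):ℝ) < (N:ℝ) ^ (1 - ρ) ∨
    (v.2:ℝ) < (N:ℝ) ^ (1 - ρ) ∨ ((N - v.2 : ℤ):ℝ) < (N:ℝ) ^ (1 - ρ) := by
  rw [Finset.mem_sdiff] at hv
  obtain ⟨h1, h2⟩ := hv
  simp only [AN, Finset.mem_filter, not_and, not_forall, not_le] at h2
  obtain ⟨z, hz, hlt⟩ := h2 h1
  have a1 : |(v.1:ℝ) - z.1| < (N:ℝ) ^ (1 - ρ) := lt_of_le_of_lt (Real.abs_le_sqrt (by nlinarith [sq_nonneg ((v.2:ℝ) - z.2)])) hlt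
  have a2 : |(v.2:ℝ) - z.2| < (N:ℝ) ^ (1 - ρ) := lt_of_le_of_lt (Real.abs_le_sqrt (by nlinarith [sq_nonneg ((v.1:ℝ) - z.1)])) hlt
  rw [abs_lt] at a1 a2
  rw [mem_VN] at hz
  push_cast
  by_cases c1 : 0 ≤ z.1
  · by_cases c2 : z.1 ≤ N
    · by_cases c3 : 0 ≤ z.2
      · have c4 : (N:ℤ) < z.2 := by
          by_contra hc; exact hz ⟨c1, c2, c3, not_lt.1 hc⟩
        have : (N:ℝ) < z.2 := by exact_mod_cast c4
        right; right; right; linarith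
      · have : (z.2:ℝ) < 0 := by exact_mod_cast not_le.1 c3
        right; right; left; linarith
    · have : (N:ℝ) < z.1 := by exact_mod_cast not_le.1 c2
      right; left; linarith
  · have : (z.1:ℝ) < 0 := by exact_mod_cast not_le.1 c1
    left; linarith

lemma all_sides {ε : ℝ} (hρ0 : 0 < ρ) (hρ1 : ρ < 1) (hβ : 0 < β) (hκ : 0 < ka M κ) (hε : 0 < ε) :
    ∀ᶠ N : ℕ in atTop, ∀ (r : ℕ → ℝ) (G : Vtx → Vtx → ℝ) (P : Measure FieldSp), GF N G P →
      P.real {f | 4 * ε < RR M κ N r β (VN N \ AN N ρ) f} ≤ 4 * ε := by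
  filter_upwards [strip_left hρ0 hρ1 hβ hκ hε] with N hN r G P h
  have := h.prob
  have s1 := strip_sy sy_refl (hN r) h
  have s2 := strip_sy sy_rf (hN r) h
  have s3 := strip_sy sy_sw (hN r) h
  have s4 := strip_sy (sy_rf.trans sy_sw) (hN r) h
  set A := (N:ℝ) ^ (1 - ρ) with hA
  set S1 := (VN N).filter fun v => (((Equiv.refl Vtx).symm v).1:ℝ) < A with hS1
  set S2 := (VN N).filter fun v => (((rf N).symm v).1:ℝ) < A with hS2
  set S3 := (VN N).filter fun v => ((sw.symm v).1:ℝ) < A with hS3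
  set S4 := (VN N).filter fun v => ((((rf N).trans sw).symm v).1:ℝ) < A with hS4
  have hle : ∀ f, RR M κ N r β (VN N \ AN N ρ) f ≤ RR M κ N r β S1 f + RR M κ N r β S2 f + RR M κ N r β S3 f + RR M κ N r β S4 f := by
    intro f
    unfold RR
    rw [← add_div, ← add_div, ← add_div]
    refine div_le_div_of_nonneg_right ?_ (Finset.sum_nonneg fun _ _ => (Real.exp_pos _).le)
    have hsub : VN N \ AN N ρ ⊆ ((S1 ∪ S2) ∪ S3) ∪ S4 := by
      intro v hv
      have hv' := (Finset.mem_sdiff.1 hv).1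
      simp only [Finset.mem_union, hS1, hS2, hS3, hS4, Finset.mem_filter, hv', true_and, or_assoc]
      exact AN_cover hv
    have hn : ∀ v, 0 ≤ Real.exp (β * PSL M κ N r v f) := fun _ => (Real.exp_pos _).le
    have hun : ∀ X Y : Finset Vtx, ∑ v ∈ X ∪ Y, Real.exp (β * PSL M κ N r v f) ≤
        ∑ v ∈ X, Real.exp (β * PSL M κ N r v f) + ∑ v ∈ Y, Real.exp (β * PSL M κ N r v f) := by
      intro X Y
      rw [← Finset.sum_union_inter]
      have := Finset.sum_nonneg (s := X ∩ Y) fun v _ => hn v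
      linarith
    have := Finset.sum_le_sum_of_subset_of_nonneg hsub fun v _ _ => hn v
    have := hun ((S1 ∪ S2) ∪ S3) S4
    have := hun (S1 ∪ S2) S3
    have := hun S1 S2
    linarith
  have hsub : {f | 4 * ε < RR M κ N r β (VN N \ AN N ρ) f} ⊆
      (({f | ε < RR M κ N r β S1 f} ∪ {f | ε < RR M κ N r β S2 f}) ∪ {f | ε < RR M κ N r β S3 f}) ∪ {f | ε < RR M κ N r β S4 f} := by
    intro f hf
    simp only [Set.mem_union, Set.mem_ofPred_eq] at hf ⊢
    by_contra hc
    push Not at hc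
    have := hle f
    linarith [hc.1.1.1, hc.1.1.2, hc.1.2, hc.2]
  have u := measureReal_mono (μ := P) hsub (measure_ne_top _ _)
  have w1 := measureReal_union_le (μ := P) (({f | ε < RR M κ N r β S1 f} ∪ {f | ε < RR M κ N r β S2 f}) ∪ {f | ε < RR M κ N r β S3 f}) {f | ε < RR M κ N r β S4 f}
  have w2 := measureReal_union_le (μ := P) ({f | ε < RR M κ N r β S1 f} ∪ {f | ε < RR M κ N r β S2 f}) {f | ε < RR M κ N r β S3 f}
  have w3 := measureReal_union_le (μ := P) {f | ε < RR M κ N r β S1 f} {f | ε < RR M κ N r β S2 f}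
  linarith

end Sides


noncomputable section Fin
open MeasureTheory ProbabilityTheory

lemma intr_nbhd {N : ℕ} {lam : ℝ} (h0 : lam ≠ 0) (v : Vtx) :
    intr (nbhd N lam v) = Bx N ((N:ℝ) ^ ((1:ℝ) - lam) / 2) v := by
  ext w
  rw [mem_Bx, mem_intr_iff, mem_intr_iff]
  unfold nbhd
  rw [if_neg h0]
  by_cases h1 : lam = 1
  · rw [if_pos h1, h1]
    constructor
    · rintro ⟨ha, hb⟩
      have h2 := hb (w.1 + 1, w.2) (Or.inl rfl)
      rw [Finset.mem_singleton] at ha h2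
      rw [ha] at h2
      have := congrArg Prod.fst h2
      simp at this
    · rintro ⟨_, hb, _⟩
      exfalso
      simp only [sub_self, Real.rpow_zero] at hb
      have := abs_nonneg ((w.1:ℝ) - v.1)
      linarith
  · rw [if_neg h1]
    simp only [Finset.mem_filter]
    constructor
    · rintro ⟨ha, hb⟩
      refine ⟨⟨ha.1, fun y hy => (hb y hy).1⟩, ?_, ?_⟩
      · have e1 := (hb (w.1 + 1, w.2) (Or.inl rfl)).2.1
        have e2 := (hb (w.1 - 1, w.2) (Or.inr (Or.inl rfl))).2.1
        push_cast at e1 e2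
        rw [abs_le] at e1 e2
        rw [← le_sub_iff_add_le, abs_le]
        constructor <;> linarith [e1.1, e1.2, e2.1, e2.2]
      · have e1 := (hb (w.1, w.2 + 1) (Or.inr (Or.inr (Or.inl rfl)))).2.2
        have e2 := (hb (w.1, w.2 - 1) (Or.inr (Or.inr (Or.inr rfl)))).2.2
        push_cast at e1 e2
        rw [abs_le] at e1 e2
        rw [← le_sub_iff_add_le, abs_le]
        constructor <;> linarith [e1.1, e1.2, e2.1, e2.2]
    · rintro ⟨⟨ha, hb⟩, hc, hd⟩
      refine ⟨⟨ha, by linarith, by linarith⟩, fun y hy => ⟨hb y hy, ?_, ?_⟩⟩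
      · exact (nbr_abs hy v).1.trans hc
      · exact (nbr_abs hy v).2.trans hd

lemma intr_nbhd_BJ {N : ℕ} {lamv : ℕ → ℝ} (h0 : lamv 0 = 0) {j : ℕ} (hj : j ≠ 0 → lamv j ≠ 0) (v : Vtx) :
    intr (nbhd N (lamv j) v) = BJ N (fun j => (N:ℝ) ^ ((1:ℝ) - lamv j) / 2) j v := by
  unfold BJ
  split_ifs with h
  · rw [h, h0]; simp [nbhd]
  · exact intr_nbhd (hj h) v

lemma phi_ae {N : ℕ} {G : Vtx → Vtx → ℝ} {P : Measure FieldSp} (h : GF N G P) {lamv : ℕ → ℝ}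
    (h0 : lamv 0 = 0) {j : ℕ} (hj : j ≠ 0 → lamv j ≠ 0) {v : Vtx} (hv : v ∈ VN N) :
    phiScale N P v (lamv j) =ᵐ[P]
      fun ω => ext (BJ N (fun j => (N:ℝ) ^ ((1:ℝ) - lamv j) / 2) j v) ω v := by
  have := h.condExp (BJ_sub (N := N) (r := fun j => (N:ℝ) ^ ((1:ℝ) - lamv j) / 2) (j := j) (v := v)) hv
  rw [← intr_nbhd_BJ h0 hj v] at this ⊢
  exact this

def kap (M : ℕ) (sigv : ℕ → ℝ) (j : ℕ) : ℝ :=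
  (if 1 ≤ j then sigv j else 0) - (if j < M then sigv (j + 1) else 0)

lemma abel (M : ℕ) (sigv a : ℕ → ℝ) :
    ∑ i ∈ Finset.Icc 1 M, sigv i * (a i - a (i - 1)) = ∑ j ∈ Finset.range (M + 1), kap M sigv j * a j := by
  unfold kap
  simp only [sub_mul, Finset.sum_sub_distrib, mul_sub]
  rw [Finset.sum_range_succ', Finset.sum_range_succ (fun x => (if x < M then sigv (x + 1) else 0) * a x)]
  simp only [lt_irrefl, if_false, zero_mul, add_zero, Nat.not_succ_le_zero, Nat.le_add_left, if_true]
  have hs : ∀ F : ℕ → ℝ, ∑ i ∈ Finset.Icc 1 M, F i = ∑ i ∈ Finset.range M, F (i + 1) := by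
    intro F
    rw [Finset.range_eq_Ico, Finset.sum_Ico_add' F 0 M 1]
    rfl
  rw [hs, hs]
  simp only [Nat.add_sub_cancel]
  norm_num
  refine Finset.sum_congr rfl fun i hi => ?_
  rw [if_pos (Finset.mem_range.1 hi)]

lemma lam_pos {M : ℕ} {sigv lamv : ℕ → ℝ} (hp : ScaleParams M sigv lamv) :
    ∀ j, j ≤ M → j ≠ 0 → 0 < lamv j := by
  obtain ⟨_, _, h0, _, hl⟩ := hp
  intro j
  induction j with
  | zero => intro _ h; exact absurd rfl h
  | succ k ih =>
    intro hk _
    have := hl k (by omega)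
    rcases Nat.eq_zero_or_pos k with rfl | h
    · rwa [h0] at this
    · exact (ih (by omega) (by omega)).trans this

lemma lam1_le {M : ℕ} {sigv lamv : ℕ → ℝ} (hp : ScaleParams M sigv lamv) : lamv 1 ≤ 1 := by
  obtain ⟨hM, _, h0, h1, hl⟩ := hp
  have : ∀ j, 1 ≤ j → j ≤ M → lamv 1 ≤ lamv j := by
    intro j hj
    induction j, hj using Nat.le_induction with
    | base => intro _; exact le_rfl
    | succ k hk ih => intro h; exact (ih (by omega)).trans (hl k (by omega)).le
  rw [← h1]; exact this M hM le_rfl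

lemma ka_pos {M : ℕ} {sigv lamv : ℕ → ℝ} (hp : ScaleParams M sigv lamv) : 0 < ka M (kap M sigv) := by
  obtain ⟨hM, hs, _⟩ := hp
  unfold ka
  refine lt_of_lt_of_le ?_ (Finset.single_le_sum (f := fun j => |kap M sigv j|) (fun _ _ => abs_nonneg _) (Finset.self_mem_range_succ M))
  have := hs M (Finset.mem_Icc.2 ⟨hM, le_rfl⟩)
  simp only [kap, if_pos hM, lt_irrefl, if_false, sub_zero]
  exact abs_pos_of_pos this

lemma X_ae {N M : ℕ} {sigv lamv : ℕ → ℝ} (hp : ScaleParams M sigv lamv) {G : Vtx → Vtx → ℝ}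
    {P : Measure FieldSp} (h : GF N G P) (β ρ : ℝ) :
    (fun ω => ∑ v ∈ VN N \ AN N ρ, gibbsW N M sigv lamv P β v ω) =ᵐ[P]
      RR M (kap M sigv) N (fun j => (N:ℝ) ^ ((1:ℝ) - lamv j) / 2) β (VN N \ AN N ρ) := by
  have h1 : ∀ᵐ ω ∂P, ∀ v ∈ VN N, ∀ j ∈ Finset.range (M + 1), phiScale N P v (lamv j) ω =
      ext (BJ N (fun j => (N:ℝ) ^ ((1:ℝ) - lamv j) / 2) j v) ω v := by
    rw [Finset.eventually_all]
    intro v hv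
    rw [Finset.eventually_all]
    intro j hj
    exact phi_ae h hp.2.2.1 (fun hj0 => (lam_pos hp j (by have := Finset.mem_range.1 hj; omega) hj0).ne') hv
  filter_upwards [h1] with ω hω
  have h2 : ∀ v ∈ VN N, psiFld N M sigv lamv P v ω =
      PSL M (kap M sigv) N (fun j => (N:ℝ) ^ ((1:ℝ) - lamv j) / 2) v ω := by
    intro v hv
    unfold psiFld
    rw [abel M sigv (fun i => phiScale N P v (lamv i) ω), PSL_apply]
    exact Finset.sum_congr rfl fun j hj => by rw [hω v hv j hj]
  unfold RR gibbsW ZN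
  rw [← Finset.sum_div]
  congr 1
  · exact Finset.sum_congr rfl fun v hv => by rw [h2 v (Finset.mem_sdiff.1 hv).1]
  · exact Finset.sum_congr rfl fun v hv => by rw [h2 v hv]

lemma final
    (M : ℕ) (sigv lamv : ℕ → ℝ) (hparams : ScaleParams M sigv lamv)
    (P : ℕ → MeasureTheory.Measure FieldSp) (hGFF : ∀ N, IsGFF N (P N))
    (β ρ : ℝ) (hβ : 0 < β) (hρ0 : 0 < ρ) (hρ1 : ρ < lamv 1) :
    TendstoInProb P
      (fun N ω => ∑ v ∈ VN N \ AN N ρ, gibbsW N M sigv lamv (P N) β v ω) 0 ∧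
    ∀ p : ℝ, 1 ≤ p →
      TendstoLp P
        (fun N ω => ∑ v ∈ VN N \ AN N ρ, gibbsW N M sigv lamv (P N) β v ω) p 0 := by
  have hρ : ρ < 1 := hρ1.trans_le (lam1_le hparams)
  choose G hG using fun N => gf_of (hGFF N)
  have hX := fun N => X_ae hparams (hG N) β ρ
  set Y : ℕ → FieldSp → ℝ := fun N => RR M (kap M sigv) N (fun j => (N:ℝ) ^ ((1:ℝ) - lamv j) / 2) β (VN N \ AN N ρ) with hY
  have key : ∀ ε : ℝ, 0 < ε → ∀ᶠ N : ℕ in atTop, (P N).real {f | ε < Y N f} ≤ ε := by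
    intro ε hε
    filter_upwards [all_sides (M := M) (κ := kap M sigv) hρ0 hρ hβ (ka_pos hparams) (show 0 < ε / 4 by positivity)] with N hN
    have := hN (fun j => (N:ℝ) ^ ((1:ℝ) - lamv j) / 2) (G N) (P N) (hG N)
    rwa [show 4 * (ε / 4) = ε by ring] at this
  have hY0 : ∀ N f, 0 ≤ Y N f := fun N f => RR_nonneg _ f
  have hY1 : ∀ N f, Y N f ≤ 1 := fun N f => RR_le Finset.sdiff_subset f
  have hYm : ∀ N, Measurable (Y N) := fun N => RR_meas Finset.sdiff_subset
  constructor
  · intro ε hε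
    rw [ENNReal.tendsto_nhds_zero]
    intro δ hδ
    by_cases hδt : δ = ⊤
    · simp [hδt]
    have hδ' : 0 < δ.toReal := ENNReal.toReal_pos hδ.ne' hδt
    filter_upwards [key _ (lt_min hε hδ')] with N hN
    have := (hG N).prob
    have e : P N {ω | ε < |(∑ v ∈ VN N \ AN N ρ, gibbsW N M sigv lamv (P N) β v ω) - 0|} ≤
        P N {f | min ε δ.toReal < Y N f} := by
      refine measure_mono_ae ?_
      filter_upwards [hX N] with ω hω hh
      have hh' : ε < |(∑ v ∈ VN N \ AN N ρ, gibbsW N M sigv lamv (P N) β v ω) - 0| := hh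
      rw [hω, sub_zero, abs_of_nonneg (hY0 N ω)] at hh'
      exact lt_of_le_of_lt (min_le_left _ _) hh'
    refine e.trans ?_
    rw [← ENNReal.toReal_le_toReal (measure_ne_top _ _) hδt]
    exact hN.trans (min_le_right _ _)
  · intro p hp
    have hint : ∀ N, ∫ ω, |(∑ v ∈ VN N \ AN N ρ, gibbsW N M sigv lamv (P N) β v ω) - 0| ^ p ∂(P N)
        = ∫ ω, (Y N ω) ^ p ∂(P N) := by
      intro N
      refine integral_congr_ae ?_
      filter_upwards [hX N] with ω hω
      rw [hω, sub_zero, abs_of_nonneg (hY0 N ω)]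
    unfold TendstoLp
    simp only [hint]
    rw [Metric.tendsto_nhds]
    intro ε hε
    filter_upwards [key (ε / 3) (by positivity)] with N hN
    have := (hG N).prob
    have hn : 0 ≤ ∫ ω, (Y N ω) ^ p ∂(P N) := integral_nonneg fun ω => Real.rpow_nonneg (hY0 N ω) p
    rw [Real.dist_eq, sub_zero, abs_of_nonneg hn]
    have hm : MeasurableSet {f | ε / 3 < Y N f} := measurableSet_lt measurable_const (hYm N)
    have hpt : ∀ ω, (Y N ω) ^ p ≤ ε / 3 + ({f | ε / 3 < Y N f}).indicator 1 ω := by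
      intro ω
      have a1 : (Y N ω) ^ p ≤ Y N ω := by
        have := Real.rpow_le_rpow_of_exponent_ge' (hY0 N ω) (hY1 N ω) zero_le_one hp
        rwa [Real.rpow_one] at this
      by_cases hc : ε / 3 < Y N ω
      · rw [Set.indicator_of_mem (show ω ∈ {f | ε / 3 < Y N f} from hc)]
        simp only [Pi.one_apply]
        linarith [hY1 N ω]
      · rw [Set.indicator_of_notMem (show ω ∉ {f | ε / 3 < Y N f} from hc)]
        linarith
    have hi1 : Integrable (fun ω => ({f | ε / 3 < Y N f}).indicator (1 : FieldSp → ℝ) ω) (P N) :=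
      (integrable_const (1:ℝ)).indicator hm
    have hb := integral_mono_of_nonneg (μ := P N) (Eventually.of_forall fun ω => Real.rpow_nonneg (hY0 N ω) p)
      ((integrable_const (ε / 3)).add hi1) (Eventually.of_forall hpt)
    have e : ∫ ω, (ε / 3 + ({f | ε / 3 < Y N f}).indicator (1 : FieldSp → ℝ) ω) ∂(P N) = ε / 3 + (P N).real {f | ε / 3 < Y N f} := by
      rw [integral_add (integrable_const _) hi1, integral_indicator_one hm]
      simp
    have hb' : ∫ ω, (Y N ω) ^ p ∂(P N) ≤ ε / 3 + (P N).real {f | ε / 3 < Y N f} := by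
      rw [← e]; exact hb
    linarith

end Fin


/-- **Lemma (The Gibbs measure carries no mass near the boundary).**
For every `β > 0` and `ρ ∈ (0,λ_1)`, `𝒢_{β,N}(A_{N,ρ}^c) → 0` as `N → ∞`, in probability
and in `L^p` for every `1 ≤ p < ∞`. -/
theorem gibbs_mass_near_boundary_vanishes
    (M : ℕ) (sigv lamv : ℕ → ℝ) (hparams : ScaleParams M sigv lamv)
    (P : ℕ → MeasureTheory.Measure FieldSp) (hGFF : ∀ N, IsGFF N (P N))
    (β ρ : ℝ) (hβ : 0 < β) (hρ0 : 0 < ρ) (hρ1 : ρ < lamv 1) :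
    TendstoInProb P
      (fun N ω => ∑ v ∈ VN N \ AN N ρ, gibbsW N M sigv lamv (P N) β v ω) 0 ∧
    ∀ p : ℝ, 1 ≤ p →
      TendstoLp P
        (fun N ω => ∑ v ∈ VN N \ AN N ρ, gibbsW N M sigv lamv (P N) β v ω) p 0 := by
  exact final M sigv lamv hparams P hGFF β ρ hβ hρ0 hρ1
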